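/- arXiv:1812.01671 — 3 statements merged into one kernel-verified Lean document; each statement's English description precedes it below -/
import Mathlib

section
/- Let p ≥ 3 be a prime, G = SL₂(F_p), and A ⊆ G a set with |A| ≥ 2·|G|^(8/9). Then A³ = G. Furthermore, each of |A⁻¹A|, |AA⁻¹| and |AA| is at least (1/2)·min{ |G|, |A|²/p² }. -/
open Pointwise

instance (p : ℕ) : DecidableEq (Matrix.SpecialLinearGroup (Fin 2) (ZMod p)) := by
  unfold Matrix.SpecialLinearGroup
  infer_instance

namespace QR

section generic
variable {G : Type*} [Group G] [Fintype G]

/-- Left convolution by a real kernel. -/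
noncomputable def cv (k : G → ℝ) : EuclideanSpace ℂ G →ₗ[ℂ] EuclideanSpace ℂ G where
  toFun f := WithLp.toLp 2 fun x => ∑ y, (k (x * y⁻¹) : ℂ) * f y
  map_add' f g := by
    ext x
    simp [mul_add, Finset.sum_add_distrib]
  map_smul' c f := by
    ext x
    simp [Finset.mul_sum, mul_left_comm]

/-- Right translation. -/
noncomputable def rt (g : G) : EuclideanSpace ℂ G →ₗ[ℂ] EuclideanSpace ℂ G where
  toFun f := WithLp.toLp 2 fun x => f (x * g)
  map_add' f g := by
    ext x
    simp
  map_smul' c f := by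
    ext x
    simp

theorem cv_apply (k : G → ℝ) (f : EuclideanSpace ℂ G) (x : G) :
    cv k f x = ∑ y, (k (x * y⁻¹) : ℂ) * f y := rfl

@[simp] theorem rt_apply (g : G) (f : EuclideanSpace ℂ G) (x : G) :
    rt g f x = f (x * g) := rfl

theorem cv_rt (k : G → ℝ) (g : G) (f : EuclideanSpace ℂ G) :
    cv k (rt g f) = rt g (cv k f) := by
  ext x
  simp only [cv_apply, rt_apply]
  refine Fintype.sum_equiv (Equiv.mulRight g) _ _ fun y => ?_
  simp [mul_assoc]

theorem norm_rt (g : G) (f : EuclideanSpace ℂ G) : ‖rt g f‖ ^ 2 = ‖f‖ ^ 2 := by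
  simp only [EuclideanSpace.norm_sq_eq, rt_apply]
  exact Fintype.sum_equiv (Equiv.mulRight g) _ _ fun y => rfl

theorem inner_rt (g : G) (f h : EuclideanSpace ℂ G) :
    inner ℂ (rt g f) (rt g h) = inner ℂ f h := by
  simp only [PiLp.inner_apply, rt_apply]
  exact Fintype.sum_equiv (Equiv.mulRight g) _ _ fun y => rfl

theorem inner_cv (k : G → ℝ) (f h : EuclideanSpace ℂ G) :
    inner ℂ (cv (fun g => k g⁻¹) f) h = inner ℂ f (cv k h) := by
  simp only [PiLp.inner_apply, cv_apply, RCLike.inner_apply, map_sum, map_mul, Complex.conj_ofReal,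
    Finset.sum_mul, Finset.mul_sum]
  rw [Finset.sum_comm]
  refine Finset.sum_congr rfl fun x _ => Finset.sum_congr rfl fun y _ => ?_
  simp
  ring

/-- Bessel: Hilbert-Schmidt bound for an orthogonal family. -/
theorem bessel (k : G → ℝ) {ι : Type*} [Fintype ι] (v : ι → EuclideanSpace ℂ G)
    (hv : Orthonormal ℂ v) :
    ∑ i, ‖cv k (v i)‖ ^ 2 ≤ Fintype.card G * ∑ g, k g ^ 2 := by
  simp only [EuclideanSpace.norm_sq_eq]
  rw [Finset.sum_comm]
  have : ∀ x : G, ∑ i, ‖cv k (v i) x‖ ^ 2 ≤ ∑ g, k g ^ 2 := by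
    intro x
    have h := hv.sum_inner_products_le (s := Finset.univ)
      (WithLp.toLp 2 fun y => (k (x * y⁻¹) : ℂ))
    have h2 : ‖(WithLp.toLp 2 fun y => (k (x * y⁻¹) : ℂ) : EuclideanSpace ℂ G)‖ ^ 2
        = ∑ g, k g ^ 2 := by
      rw [EuclideanSpace.norm_sq_eq]
      refine Fintype.sum_equiv ((Equiv.inv G).trans (Equiv.mulLeft x)) _ _ fun y => ?_
      simp
    rw [h2] at h
    refine le_trans (le_of_eq ?_) h
    refine Finset.sum_congr rfl fun i _ => ?_
    rw [← inner_conj_symm, RCLike.norm_conj]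
    congr 2
    simp [PiLp.inner_apply, cv_apply, mul_comm]
  calc _ ≤ ∑ x : G, ∑ g, k g ^ 2 := Finset.sum_le_sum fun x _ => this x
    _ = _ := by simp

theorem symm_cv (k : G → ℝ) : (cv (fun g => k g⁻¹) ∘ₗ cv k).IsSymmetric := by
  intro f h
  simp only [LinearMap.comp_apply]
  rw [inner_cv]
  have := inner_cv (fun g => k g⁻¹) f (cv k h)
  simp only [inv_inv] at this
  rw [← this]

theorem norm_cv_eig (k : G → ℝ) (f : EuclideanSpace ℂ G) (μ : ℝ)
    (h : cv (fun g => k g⁻¹) (cv k f) = (μ : ℂ) • f) : ‖cv k f‖ ^ 2 = μ * ‖f‖ ^ 2 := by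
  have h1 := inner_cv k (cv k f) f
  rw [h, inner_smul_left, inner_self_eq_norm_sq_to_K, inner_self_eq_norm_sq_to_K] at h1
  simp only [Complex.conj_ofReal] at h1
  have h2 : (((μ * ‖f‖ ^ 2 : ℝ)) : ℂ) = ((‖cv k f‖ ^ 2 : ℝ) : ℂ) := by
    push_cast
    exact h1
  exact (Complex.ofReal_injective h2).symm

theorem norm_cv_le (k : G → ℝ) (C : ℝ)
    (hC : ∀ (μ : ℝ) (f : EuclideanSpace ℂ G), f ≠ 0 →
      cv (fun g => k g⁻¹) (cv k f) = (μ : ℂ) • f → μ ≤ C) (f : EuclideanSpace ℂ G) :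
    ‖cv k f‖ ^ 2 ≤ C * ‖f‖ ^ 2 := by
  have hS := symm_cv k
  set b := hS.eigenvectorBasis rfl with hb
  have hle : ∀ i, hS.eigenvalues rfl i ≤ C := by
    intro i
    refine hC _ (b i) (b.orthonormal.ne_zero i) ?_
    exact hS.apply_eigenvectorBasis rfl i
  have h1 := inner_cv k (cv k f) f
  rw [inner_self_eq_norm_sq_to_K, ← b.sum_inner_mul_inner] at h1
  have h3 : ∀ i, inner ℂ (cv (fun g => k g⁻¹) (cv k f)) (b i) * inner ℂ (b i) f
      = ((hS.eigenvalues rfl i * ‖inner ℂ (b i) f‖ ^ 2 : ℝ) : ℂ) := by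
    intro i
    have := hS f (b i)
    rw [hS.apply_eigenvectorBasis rfl i, inner_smul_right] at this
    simp only [LinearMap.comp_apply] at this
    rw [this, ← inner_conj_symm, mul_assoc, mul_comm ((starRingEnd ℂ) _), RCLike.mul_conj]
    push_cast
    rfl
  simp only [h3] at h1
  have h4 : ∑ i, hS.eigenvalues rfl i * ‖inner ℂ (b i) f‖ ^ 2 = ‖cv k f‖ ^ 2 := by
    have : ((∑ i, hS.eigenvalues rfl i * ‖inner ℂ (b i) f‖ ^ 2 : ℝ) : ℂ)
        = ((‖cv k f‖ ^ 2 : ℝ) : ℂ) := by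
      push_cast at h1 ⊢
      exact h1
    exact Complex.ofReal_injective this
  rw [← h4, ← b.sum_sq_norm_inner_right f, Finset.mul_sum]
  exact Finset.sum_le_sum fun i _ => mul_le_mul_of_nonneg_right (hle i) (by positivity)

end generic

section counting
variable {G : Type*} [Group G] [Fintype G] [DecidableEq G]

theorem compl_bound (D : ℝ) (hD : 0 ≤ D)
    (H : ∀ k : G → ℝ, ∑ g, k g = 0 → ∀ f : EuclideanSpace ℂ G,
      D * ‖cv k f‖ ^ 2 ≤ (Fintype.card G * ∑ g, k g ^ 2) * ‖f‖ ^ 2) (A B : Finset G) :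
    ((A * B)ᶜ.card : ℝ) * A.card * B.card * D ≤ (Fintype.card G : ℝ) ^ 3 := by
  have hn : (0 : ℝ) < Fintype.card G := by exact_mod_cast Fintype.card_pos
  set n : ℝ := ((Fintype.card G : ℕ) : ℝ) with hn'
  set α : ℝ := A.card / n with hα
  set k : G → ℝ := fun g => (if g ∈ A then 1 else 0) - α with hk
  have hk0 : ∑ g, k g = 0 := by
    simp [hk, Finset.sum_sub_distrib, ← hn', hα]
    field_simp
    simp
  have hk2 : ∑ g, k g ^ 2 ≤ A.card := by
    have : ∀ g, k g ^ 2 = (1 - 2 * α) * (if g ∈ A then 1 else 0) + α ^ 2 := by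
      intro g
      by_cases hg : g ∈ A <;> simp [hk, hg]
      ring
    simp only [this, Finset.sum_add_distrib, ← Finset.mul_sum]
    simp [← hn']
    have : n * α = A.card := by rw [hα]; field_simp
    have h2 : 0 ≤ α := by positivity
    have h3 : n * α ^ 2 = α * A.card := by rw [← this]; ring
    rw [h3]
    have : 0 ≤ α * A.card := by positivity
    nlinarith
  set f : EuclideanSpace ℂ G := WithLp.toLp 2 fun x => if x ∈ B then 1 else 0 with hf
  have hf2 : ‖f‖ ^ 2 = B.card := by
    rw [EuclideanSpace.norm_sq_eq]
    have : ∀ x, ‖f x‖ ^ 2 = if x ∈ B then 1 else 0 := by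
      intro x
      by_cases hx : x ∈ B <;> simp [hf, hx]
    simp [this]
  have hcv : ∀ x ∈ (A * B)ᶜ, cv k f x = ((-(α * B.card) : ℝ) : ℂ) := by
    intro x hx
    rw [Finset.mem_compl] at hx
    rw [cv_apply]
    have : ∀ y, (k (x * y⁻¹) : ℂ) * f y = if y ∈ B then (-α : ℂ) else 0 := by
      intro y
      by_cases hy : y ∈ B
      · have : x * y⁻¹ ∉ A := fun h => hx (by
          have := Finset.mul_mem_mul h hy
          simpa using this)
        simp [hf, hy, hk, this]
      · simp [hf, hy]
    simp only [this]
    simp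
    ring
  have h1 : ((A * B)ᶜ.card : ℝ) * (α * B.card) ^ 2 ≤ ‖cv k f‖ ^ 2 := by
    rw [EuclideanSpace.norm_sq_eq]
    calc _ = ∑ x ∈ (A * B)ᶜ, ‖cv k f x‖ ^ 2 := by
          rw [Finset.sum_congr rfl fun x hx => by rw [hcv x hx]]
          simp only [Complex.norm_real, Real.norm_eq_abs, sq_abs]
          simp
      _ ≤ _ := Finset.sum_le_sum_of_subset_of_nonneg (Finset.subset_univ _)
          fun _ _ _ => by positivity
  have h2 := H k hk0 f
  rw [hf2] at h2
  have h3 : D * (((A * B)ᶜ.card : ℝ) * (α * B.card) ^ 2) ≤ n * A.card * B.card := by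
    refine (mul_le_mul_of_nonneg_left h1 hD).trans (h2.trans ?_)
    gcongr
  rcases Nat.eq_zero_or_pos A.card with h0 | hA
  · simp [h0]; positivity
  rcases Nat.eq_zero_or_pos B.card with h0 | hB
  · simp [h0]; positivity
  have hA' : (0 : ℝ) < A.card := by exact_mod_cast hA
  have hB' : (0 : ℝ) < B.card := by exact_mod_cast hB
  rw [hα] at h3
  have h4 : D * (((A * B)ᶜ.card : ℝ) * (A.card / n * B.card) ^ 2)
    = (((A * B)ᶜ.card : ℝ) * A.card * B.card * D) * (A.card * B.card / n ^ 2) := by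
    field_simp
  have h5 : n * A.card * B.card = n ^ 3 * (A.card * B.card / n ^ 2) := by
    field_simp
  rw [h4, h5] at h3
  exact le_of_mul_le_mul_right h3 (by positivity)

end counting

section SL2
open Matrix
variable {p : ℕ}

/-- Upper unipotent. -/
def u (t : ZMod p) : SpecialLinearGroup (Fin 2) (ZMod p) := ⟨!![1, t; 0, 1], by simp⟩
/-- Lower unipotent. -/
def l (t : ZMod p) : SpecialLinearGroup (Fin 2) (ZMod p) := ⟨!![1, 0; t, 1], by simp⟩
/-- Weyl element. -/
def w : SpecialLinearGroup (Fin 2) (ZMod p) := ⟨!![0, 1; -1, 0], by simp⟩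
/-- Diagonal. -/
def dg (a : ZMod p) (h : a * a⁻¹ = 1) : SpecialLinearGroup (Fin 2) (ZMod p) :=
  ⟨!![a, 0; 0, a⁻¹], by simp [h]⟩

theorem u_coe (t : ZMod p) : (u t : Matrix (Fin 2) (Fin 2) (ZMod p)) = !![1, t; 0, 1] := rfl
theorem l_coe (t : ZMod p) : (l t : Matrix (Fin 2) (Fin 2) (ZMod p)) = !![1, 0; t, 1] := rfl
theorem w_coe : ((w : SpecialLinearGroup (Fin 2) (ZMod p)) : Matrix (Fin 2) (Fin 2) (ZMod p))
    = !![0, 1; -1, 0] := rfl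
theorem dg_coe (a : ZMod p) (h : a * a⁻¹ = 1) :
    (dg a h : Matrix (Fin 2) (Fin 2) (ZMod p)) = !![a, 0; 0, a⁻¹] := rfl

theorem mul_coe (a b : SpecialLinearGroup (Fin 2) (ZMod p)) :
    ((a * b : SpecialLinearGroup (Fin 2) (ZMod p)) : Matrix (Fin 2) (Fin 2) (ZMod p))
      = (a : Matrix (Fin 2) (Fin 2) (ZMod p)) * (b : Matrix (Fin 2) (Fin 2) (ZMod p)) := rfl
theorem one_coe : ((1 : SpecialLinearGroup (Fin 2) (ZMod p)) : Matrix (Fin 2) (Fin 2) (ZMod p))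
    = 1 := rfl
theorem ext_coe {a b : SpecialLinearGroup (Fin 2) (ZMod p)}
    (h : (a : Matrix (Fin 2) (Fin 2) (ZMod p)) = (b : Matrix (Fin 2) (Fin 2) (ZMod p))) : a = b :=
  Subtype.ext h

theorem u_add (s t : ZMod p) : u (s + t) = u s * u t := by
  apply ext_coe
  rw [mul_coe, u_coe, u_coe, u_coe, Matrix.mul_fin_two]
  simp [add_comm]

theorem u_zero : u (0 : ZMod p) = 1 := by
  apply ext_coe
  rw [one_coe, u_coe, Matrix.one_fin_two]

theorem u_w (t : ZMod p) : u (-t) * w = w * l t := by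
  apply ext_coe
  rw [mul_coe, mul_coe, u_coe, l_coe, w_coe,
    Matrix.mul_fin_two, Matrix.mul_fin_two]
  simp

theorem u_dg (s a : ZMod p) (h : a * a⁻¹ = 1) : u (s * a ^ 2) * dg a h = dg a h * u s := by
  apply ext_coe
  rw [mul_coe, mul_coe, u_coe, u_coe, dg_coe,
    Matrix.mul_fin_two, Matrix.mul_fin_two]
  have : s * a ^ 2 * a⁻¹ = a * s := by
    calc s * a ^ 2 * a⁻¹ = s * a * (a * a⁻¹) := by ring
      _ = a * s := by rw [h]; ring
  simp [this]

theorem gen [Fact p.Prime] (N : Subgroup (SpecialLinearGroup (Fin 2) (ZMod p)))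
    (hu : ∀ t, u t ∈ N) (hl : ∀ t, l t ∈ N) : N = ⊤ := by
  have key : ∀ g : SpecialLinearGroup (Fin 2) (ZMod p), g 1 0 ≠ 0 → g ∈ N := by
    intro g hg
    have hd : g 0 0 * g 1 1 - g 0 1 * g 1 0 = 1 := by
      rw [← Matrix.det_fin_two]; exact g.2
    have : g = u ((g 0 0 - 1) / g 1 0) * l (g 1 0) * u ((g 1 1 - 1) / g 1 0) := by
      apply ext_coe
      rw [mul_coe, mul_coe, u_coe, u_coe, l_coe,
        Matrix.mul_fin_two, Matrix.mul_fin_two]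
      ext i j
      fin_cases i <;> fin_cases j <;> simp
      · field_simp; ring
      · field_simp
        linear_combination -hd
      · field_simp; ring
    rw [this]
    exact N.mul_mem (N.mul_mem (hu _) (hl _)) (hu _)
  rw [eq_top_iff]
  intro g _
  by_cases hg : g 1 0 = 0
  · have hd : g 0 0 * g 1 1 - g 0 1 * g 1 0 = 1 := by
      rw [← Matrix.det_fin_two]; exact g.2
    have h1 : (g * l 1 : SpecialLinearGroup (Fin 2) (ZMod p)) 1 0 ≠ 0 := by
      have : (g * l 1 : SpecialLinearGroup (Fin 2) (ZMod p)) 1 0 = g 1 1 := by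
        rw [mul_coe, l_coe]
        simp [Matrix.mul_apply, Fin.sum_univ_two, hg]
      rw [this]
      intro h
      simp [h, hg] at hd
    exact (N.mul_mem_cancel_right (hl 1)).1 (key _ h1)
  · exact key g hg

theorem card_le [Fact p.Prime] :
    Fintype.card (SpecialLinearGroup (Fin 2) (ZMod p)) ≤ p ^ 3 := by
  have : Function.Injective (fun g : SpecialLinearGroup (Fin 2) (ZMod p) =>
      (g 0 0, g 0 1, if g 0 0 = 0 then g 1 1 else g 1 0)) := by
    intro g h hgh
    have hg : g 0 0 * g 1 1 - g 0 1 * g 1 0 = 1 := by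
      rw [← Matrix.det_fin_two]; exact g.2
    have hh : h 0 0 * h 1 1 - h 0 1 * h 1 0 = 1 := by
      rw [← Matrix.det_fin_two]; exact h.2
    simp only [Prod.mk.injEq] at hgh
    obtain ⟨h00, h01, h3⟩ := hgh
    rw [← h00] at h3 hh
    rw [← h01] at hh
    by_cases h0 : g 0 0 = 0
    · simp only [h0, if_true] at h3
      have hb : g 0 1 ≠ 0 := by
        intro hb
        simp [h0, hb] at hg
      have h10 : g 1 0 = h 1 0 := by
        apply mul_left_cancel₀ hb
        rw [h0] at hg hh
        linear_combination hh - hg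
      ext i j
      fin_cases i <;> fin_cases j <;> assumption
    · simp only [h0, if_false] at h3
      have h11 : g 1 1 = h 1 1 := by
        apply mul_left_cancel₀ h0
        rw [h3] at hg
        linear_combination hg - hh
      ext i j
      fin_cases i <;> fin_cases j <;> assumption
  have := Fintype.card_le_of_injective _ this
  simp only [Fintype.card_prod, ZMod.card] at this
  calc _ ≤ _ := this
    _ = _ := by ring

/-- orthogonality of different unipotent weight vectors -/
theorem orth [Fact p.Prime] (f h : EuclideanSpace ℂ (SpecialLinearGroup (Fin 2) (ZMod p)))
    (ψ χ : AddChar (ZMod p) ℂ) (hne : ψ ≠ χ) (hf : ∀ s, rt (u s) f = ψ s • f)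
    (hh : ∀ s, rt (u s) h = χ s • h) : inner ℂ f h = 0 := by
  obtain ⟨s, hs⟩ := DFunLike.ne_iff.1 hne
  have h1 := inner_rt (u s) f h
  rw [hf, hh, inner_smul_left, inner_smul_right] at h1
  have hn : ‖ψ s‖ = 1 := AddChar.norm_apply ψ s
  have h2 : (starRingEnd ℂ) (ψ s) * ψ s = 1 := by
    rw [mul_comm, RCLike.mul_conj, hn]; simp
  by_contra h0
  apply hs
  have h3 : (starRingEnd ℂ) (ψ s) * χ s = 1 := by
    apply mul_right_cancel₀ h0
    rw [mul_assoc, h1, one_mul]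
  have h4 : (starRingEnd ℂ) (ψ s) ≠ 0 := left_ne_zero_of_mul_eq_one h2
  exact mul_left_cancel₀ h4 (h2.trans h3.symm)

theorem weight_bound [Fact p.Prime] (hp3 : 3 ≤ p)
    (k : SpecialLinearGroup (Fin 2) (ZMod p) → ℝ)
    (h : EuclideanSpace ℂ (SpecialLinearGroup (Fin 2) (ZMod p))) (h0 : h ≠ 0)
    (ψ : AddChar (ZMod p) ℂ) (hψ : ψ ≠ 0) (hh : ∀ s, rt (u s) h = ψ s • h) :
    ((p : ℝ) - 1) / 2 * ‖cv k h‖ ^ 2 ≤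
      (Fintype.card (SpecialLinearGroup (Fin 2) (ZMod p)) * ∑ g, k g ^ 2) * ‖h‖ ^ 2 := by
  have hodd : Odd p := (Fact.out : p.Prime).odd_of_ne_two (by omega)
  obtain ⟨m, hm⟩ := hodd
  have hne : ∀ i : Fin m, (((i : ℕ) + 1 : ℕ) : ZMod p) ≠ 0 := by
    intro i hi
    rw [ZMod.natCast_eq_zero_iff] at hi
    have := Nat.le_of_dvd (by omega) hi
    omega
  have hinv : ∀ i : Fin m, (((i : ℕ) + 1 : ℕ) : ZMod p) * (((i : ℕ) + 1 : ℕ) : ZMod p)⁻¹ = 1 :=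
    fun i => mul_inv_cancel₀ (hne i)
  have hnorm : 0 < ‖h‖ := norm_pos_iff.2 h0
  let v : Fin m → EuclideanSpace ℂ (SpecialLinearGroup (Fin 2) (ZMod p)) :=
    fun i => ((‖h‖⁻¹ : ℝ) : ℂ) • rt (dg _ (hinv i))⁻¹ h
  have hw : ∀ i s, rt (u s) (rt (dg _ (hinv i))⁻¹ h)
      = (ψ.mulShift ((((i : ℕ) + 1 : ℕ) : ZMod p) ^ 2)) s • rt (dg _ (hinv i))⁻¹ h := by
    intro i s
    ext x
    have e : u s * (dg _ (hinv i))⁻¹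
        = (dg _ (hinv i))⁻¹ * u (s * (((i : ℕ) + 1 : ℕ) : ZMod p) ^ 2) := by
      rw [eq_inv_mul_iff_mul_eq, ← mul_assoc, ← u_dg, mul_inv_cancel_right]
    have := congrArg (fun F => F (x * (dg _ (hinv i))⁻¹))
      (hh (s * (((i : ℕ) + 1 : ℕ) : ZMod p) ^ 2))
    simp only [rt_apply, PiLp.smul_apply, mul_assoc] at this ⊢
    rw [e, this, AddChar.mulShift_apply, mul_comm s]
  have hchar : ∀ i j : Fin m, i ≠ j → ψ.mulShift ((((i : ℕ) + 1 : ℕ) : ZMod p) ^ 2)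
      ≠ ψ.mulShift ((((j : ℕ) + 1 : ℕ) : ZMod p) ^ 2) := by
    intro i j hij he
    have hprim : ψ.IsPrimitive := AddChar.IsPrimitive.of_ne_one hψ
    have hsq := AddChar.to_mulShift_inj_of_isPrimitive hprim he
    rcases sq_eq_sq_iff_eq_or_eq_neg.1 hsq with h | h
    · rw [ZMod.natCast_eq_natCast_iff'] at h
      rw [Nat.mod_eq_of_lt (by omega), Nat.mod_eq_of_lt (by omega)] at h
      exact hij (Fin.ext (by omega))
    · have : (((i : ℕ) + 1 + (j + 1) : ℕ) : ZMod p) = 0 := by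
        rw [Nat.cast_add, h]; ring
      rw [ZMod.natCast_eq_zero_iff] at this
      have := Nat.le_of_dvd (by omega) this
      omega
  have hv : Orthonormal ℂ v := by
    constructor
    · intro i
      have h1 : ‖rt (dg _ (hinv i))⁻¹ h‖ = ‖h‖ :=
        (sq_eq_sq₀ (norm_nonneg _) (norm_nonneg _)).1 (norm_rt _ h)
      simp only [v]
      rw [norm_smul, h1, Complex.norm_real, norm_inv, norm_norm]
      exact inv_mul_cancel₀ hnorm.ne'
    · intro i j hij
      simp only [v]
      rw [inner_smul_left, inner_smul_right, orth _ _ _ _ (hchar i j hij) (hw i) (hw j)]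
      simp
  have hB := bessel k v hv
  have hvi : ∀ i, ‖cv k (v i)‖ ^ 2 = (‖h‖⁻¹) ^ 2 * ‖cv k h‖ ^ 2 := by
    intro i
    simp only [v]
    rw [map_smul, cv_rt, norm_smul, mul_pow, norm_rt, Complex.norm_real, norm_inv, norm_norm]
  simp only [hvi, Finset.sum_const, Finset.card_univ, Fintype.card_fin, nsmul_eq_mul] at hB
  have hm' : ((p : ℝ) - 1) / 2 = m := by
    rw [hm]; push_cast; ring
  rw [hm']
  calc (m : ℝ) * ‖cv k h‖ ^ 2 = (m * ((‖h‖⁻¹) ^ 2 * ‖cv k h‖ ^ 2)) * ‖h‖ ^ 2 := by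
        field_simp
    _ ≤ _ := mul_le_mul_of_nonneg_right hB (by positivity)

theorem exists_weight [Fact p.Prime]
    (F : EuclideanSpace ℂ (SpecialLinearGroup (Fin 2) (ZMod p)))
    (hF : ∃ t, rt (u t) F ≠ F) :
    ∃ ψ : AddChar (ZMod p) ℂ, ψ ≠ 0 ∧ ∑ t, ψ (-t) • rt (u t) F ≠ 0 := by
  by_contra hcon
  push Not at hcon
  obtain ⟨t₀, ht₀⟩ := hF
  apply ht₀
  have hsum : ∑ ψ : AddChar (ZMod p) ℂ, ∑ t, ψ (-t) • rt (u t) F = (p : ℂ) • F := by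
    rw [Finset.sum_comm]
    simp only [← Finset.sum_smul]
    simp only [AddChar.sum_apply_eq_ite, neg_eq_zero, ite_smul, zero_smul, ZMod.card]
    rw [Finset.sum_ite_eq']
    simp only [Finset.mem_univ, if_true, u_zero]
    congr 1
    ext x
    simp
  rw [Finset.sum_eq_single 0 (fun ψ _ h => hcon ψ h) (by simp)] at hsum
  have hp0 : (p : ℂ) ≠ 0 := by exact_mod_cast (Fact.out : p.Prime).ne_zero
  have : (p : ℂ) • rt (u t₀) F = (p : ℂ) • F := by
    rw [← map_smul, ← hsum, map_sum]
    simp only [AddChar.zero_apply, one_smul]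
    refine Fintype.sum_equiv (Equiv.addLeft t₀) _ _ fun t => ?_
    ext x
    simp [u_add, mul_assoc]
  exact smul_right_injective _ hp0 this

theorem weight_eq [Fact p.Prime]
    (F : EuclideanSpace ℂ (SpecialLinearGroup (Fin 2) (ZMod p))) (ψ : AddChar (ZMod p) ℂ)
    (s : ZMod p) :
    rt (u s) (∑ t, ψ (-t) • rt (u t) F) = ψ s • ∑ t, ψ (-t) • rt (u t) F := by
  rw [map_sum, Finset.smul_sum]
  refine Fintype.sum_equiv (Equiv.addLeft s) _ _ fun t => ?_
  ext x
  simp only [map_smul, PiLp.smul_apply, rt_apply, Equiv.coe_addLeft, u_add, mul_assoc, smul_eq_mul]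
  rw [← mul_assoc (ψ s), ← AddChar.map_add_eq_mul]
  simp

theorem exists_noninv [Fact p.Prime]
    (f : EuclideanSpace ℂ (SpecialLinearGroup (Fin 2) (ZMod p)))
    (hf : ¬ ∃ c, ∀ x, f x = c) : ∃ g, ∃ t, rt (u t) (rt g f) ≠ rt g f := by
  by_contra hcon
  push Not at hcon
  apply hf
  let N : Subgroup (SpecialLinearGroup (Fin 2) (ZMod p)) :=
    { carrier := {g | ∀ x, f (x * g) = f x}
      one_mem' := by simp
      mul_mem' := by
        intro a b ha hb x
        rw [← mul_assoc, hb, ha]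
      inv_mem' := by
        intro a ha x
        have := ha (x * a⁻¹)
        simpa using this.symm }
  have hN : N = ⊤ := by
    apply gen
    · intro t x
      have := congrArg (fun F => F x) (hcon 1 t)
      simpa using this
    · intro t x
      have := congrArg (fun F => F (x * w⁻¹)) (hcon w (-t))
      simp only [rt_apply, mul_assoc, u_w] at this
      simpa using this
  refine ⟨f 1, fun x => ?_⟩
  have : x ∈ N := by rw [hN]; trivial
  simpa using this 1

theorem spectral [Fact p.Prime] (hp3 : 3 ≤ p)
    (k : SpecialLinearGroup (Fin 2) (ZMod p) → ℝ) (hk : ∑ g, k g = 0)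
    (f : EuclideanSpace ℂ (SpecialLinearGroup (Fin 2) (ZMod p))) :
    ((p : ℝ) - 1) / 2 * ‖cv k f‖ ^ 2 ≤
      (Fintype.card (SpecialLinearGroup (Fin 2) (ZMod p)) * ∑ g, k g ^ 2) * ‖f‖ ^ 2 := by
  have hp3' : (3 : ℝ) ≤ p := by exact_mod_cast hp3
  have hD : 0 < ((p : ℝ) - 1) / 2 := by linarith
  set K : ℝ := Fintype.card (SpecialLinearGroup (Fin 2) (ZMod p)) * ∑ g, k g ^ 2 with hK
  have hK0 : 0 ≤ K := by positivity
  have := norm_cv_le k (K / (((p : ℝ) - 1) / 2)) ?_ f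
  · calc _ ≤ ((p : ℝ) - 1) / 2 * (K / (((p : ℝ) - 1) / 2) * ‖f‖ ^ 2) :=
          mul_le_mul_of_nonneg_left this hD.le
      _ = _ := by rw [← mul_assoc, mul_div_cancel₀ _ hD.ne']
  intro μ f hf0 hf
  rw [le_div_iff₀ hD]
  by_cases hc : ∃ c, ∀ x, f x = c
  · obtain ⟨c, hc⟩ := hc
    have h1 : cv k f = 0 := by
      ext x
      rw [cv_apply]
      simp only [hc, ← Finset.sum_mul]
      have : ∑ y, (k (x * y⁻¹) : ℂ) = 0 := by
        rw [← Complex.ofReal_sum]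
        have : ∑ y, k (x * y⁻¹) = ∑ g, k g :=
          Fintype.sum_equiv ((Equiv.inv _).trans (Equiv.mulLeft x)) _ _ fun y => by simp
        rw [this, hk]; simp
      rw [this]; simp
    rw [h1, map_zero] at hf
    have : (μ : ℂ) = 0 := (smul_eq_zero.1 hf.symm).resolve_right hf0
    have : μ = 0 := by exact_mod_cast this
    rw [this]; simpa using hK0
  · obtain ⟨g, hg⟩ := exists_noninv f hc
    obtain ⟨ψ, hψ, hne⟩ := exists_weight _ hg
    have hb := weight_bound hp3 k _ hne ψ hψ (weight_eq _ ψ)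
    have he := norm_cv_eig k (∑ t, ψ (-t) • rt (u t) (rt g f)) μ (by
      simp only [map_sum, map_smul, cv_rt, hf, Finset.smul_sum]
      refine Finset.sum_congr rfl fun t _ => ?_
      rw [smul_comm])
    rw [he] at hb
    have hpos : 0 < ‖∑ t, ψ (-t) • rt (u t) (rt g f)‖ ^ 2 := by
      have := norm_pos_iff.2 hne
      positivity
    rw [← mul_assoc] at hb
    have := le_of_mul_le_mul_right hb hpos
    linarith

theorem main_bound [Fact p.Prime] (hp3 : 3 ≤ p)
    (A B : Finset (SpecialLinearGroup (Fin 2) (ZMod p))) :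
    ((A * B)ᶜ.card : ℝ) * A.card * B.card * (((p : ℝ) - 1) / 2) ≤
      (Fintype.card (SpecialLinearGroup (Fin 2) (ZMod p)) : ℝ) ^ 3 := by
  have hp3' : (3 : ℝ) ≤ p := by exact_mod_cast hp3
  exact compl_bound _ (by linarith) (fun k hk f => spectral hp3 k hk f) A B

end SL2
end QR

/-- **Lemma 2.2**: for a prime `p ≥ 3` and `A ⊆ G = SL₂(F_p)` with `|A| ≥ 2|G|^{8/9}`,
one has `A³ = G`, and moreover each of `|A⁻¹A|`, `|AA⁻¹|`, `|AA|` is at least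
`(1/2)·min{|G|, |A|²/p²}`. -/
theorem SL2_large_set_covers
    (p : ℕ) (hp : p.Prime) (hp3 : 3 ≤ p)
    (A : Finset (Matrix.SpecialLinearGroup (Fin 2) (ZMod p)))
    (hA : 2 * (Nat.card (Matrix.SpecialLinearGroup (Fin 2) (ZMod p)) : ℝ) ^ ((8 : ℝ) / 9)
        ≤ (A.card : ℝ)) :
    ((A * A * A : Finset (Matrix.SpecialLinearGroup (Fin 2) (ZMod p))) :
        Set (Matrix.SpecialLinearGroup (Fin 2) (ZMod p))) = Set.univ ∧
    2⁻¹ * min (Nat.card (Matrix.SpecialLinearGroup (Fin 2) (ZMod p)) : ℝ)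
        ((A.card : ℝ) ^ 2 / (p : ℝ) ^ 2) ≤ ((A⁻¹ * A).card : ℝ) ∧
    2⁻¹ * min (Nat.card (Matrix.SpecialLinearGroup (Fin 2) (ZMod p)) : ℝ)
        ((A.card : ℝ) ^ 2 / (p : ℝ) ^ 2) ≤ ((A * A⁻¹).card : ℝ) ∧
    2⁻¹ * min (Nat.card (Matrix.SpecialLinearGroup (Fin 2) (ZMod p)) : ℝ)
        ((A.card : ℝ) ^ 2 / (p : ℝ) ^ 2) ≤ ((A * A).card : ℝ) := by
  have : Fact p.Prime := ⟨hp⟩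
  have hp3' : (3 : ℝ) ≤ p := by exact_mod_cast hp3
  rw [Nat.card_eq_fintype_card] at hA ⊢
  have hn0 : (0 : ℝ) < Fintype.card (Matrix.SpecialLinearGroup (Fin 2) (ZMod p)) := by
    exact_mod_cast Fintype.card_pos
  have hnp : (Fintype.card (Matrix.SpecialLinearGroup (Fin 2) (ZMod p)) : ℝ) ≤ (p : ℝ) ^ 3 := by
    exact_mod_cast QR.card_le (p := p)
  have hAn : (A.card : ℝ) ≤ Fintype.card (Matrix.SpecialLinearGroup (Fin 2) (ZMod p)) := by
    exact_mod_cast Finset.card_le_univ A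
  have hcompl : ∀ S : Finset (Matrix.SpecialLinearGroup (Fin 2) (ZMod p)),
      (Sᶜ.card : ℝ) = Fintype.card (Matrix.SpecialLinearGroup (Fin 2) (ZMod p)) - S.card := by
    intro S
    rw [Finset.card_compl, Nat.cast_sub (Finset.card_le_univ S)]
  have hmain := QR.main_bound (p := p) hp3
  set n : ℝ := ((Fintype.card (Matrix.SpecialLinearGroup (Fin 2) (ZMod p)) : ℕ) : ℝ) with hn
  set x : ℝ := n ^ ((1 : ℝ) / 9) with hx
  have hx0 : 0 < x := by positivity
  have hx9 : x ^ 9 = n := by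
    rw [hx, ← Real.rpow_natCast, ← Real.rpow_mul hn0.le]; norm_num
  have hx8 : n ^ ((8 : ℝ) / 9) = x ^ 8 := by
    rw [hx, ← Real.rpow_natCast, ← Real.rpow_mul hn0.le]; norm_num
  rw [hx8] at hA
  have hx2 : 2 ≤ x := by
    have h : 2 * x ^ 8 ≤ x * x ^ 8 := by
      calc _ ≤ _ := hA.trans hAn
        _ = _ := by rw [← hx9]; ring
    exact le_of_mul_le_mul_right h (by positivity)
  have hx3 : x ^ 3 ≤ p := by
    refine le_of_pow_le_pow_left₀ (n := 3) (by norm_num) (by positivity) ?_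
    calc (x ^ 3) ^ 3 = n := by rw [← hx9]; ring
      _ ≤ _ := hnp
  have hpx : x ^ 2 ≤ (p : ℝ) - 1 := by nlinarith
  have half : ∀ B C : Finset (Matrix.SpecialLinearGroup (Fin 2) (ZMod p)),
      B.card = A.card → C.card = A.card →
      2⁻¹ * min n ((A.card : ℝ) ^ 2 / (p : ℝ) ^ 2) ≤ ((B * C).card : ℝ) := by
    intro B C hB hC
    have h := hmain B C
    rw [hB, hC, hcompl] at h
    have h1 : 2 * n ^ 2 ≤ (A.card : ℝ) * A.card * (((p : ℝ) - 1) / 2) := by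
      calc 2 * n ^ 2 = (2 * x ^ 8) * (2 * x ^ 8) * (x ^ 2 / 2) := by rw [← hx9]; ring
        _ ≤ _ := by gcongr
    have h2 : n - (B * C).card ≤ n / 2 := by
      by_contra hlt
      push Not at hlt
      have : n / 2 * (2 * n ^ 2) < (n - (B * C).card) * ((A.card : ℝ) * A.card * (((p : ℝ) - 1) / 2)) :=
        mul_lt_mul hlt h1 (by positivity) (by linarith)
      nlinarith
    have := min_le_left n ((A.card : ℝ) ^ 2 / (p : ℝ) ^ 2)
    linarith
  refine ⟨?_, half _ _ (Finset.card_inv A) rfl, half _ _ rfl (Finset.card_inv A), half _ _ rfl rfl⟩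
  rw [Set.eq_univ_iff_forall]
  intro g
  by_contra hg
  rw [Finset.mem_coe] at hg
  have hle : A.card ≤ (A * A)ᶜ.card := by
    refine Finset.card_le_card_of_injOn (fun c => g * c⁻¹) ?_ ?_
    · intro c hc
      simp only [Finset.coe_compl, Set.mem_compl_iff, Finset.mem_coe]
      intro h
      apply hg
      have := Finset.mul_mem_mul h hc
      simpa using this
    · intro a _ b _ hab
      simpa using hab
  have hle' : (A.card : ℝ) ≤ (A * A)ᶜ.card := by exact_mod_cast hle
  have h := hmain A A
  have h1 : (2 * x ^ 8) * (2 * x ^ 8) * (2 * x ^ 8) * (((p : ℝ) - 1) / 2) ≤ n ^ 3 := by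
    refine le_trans ?_ h
    have : 0 ≤ ((p : ℝ) - 1) / 2 := by linarith
    gcongr
    exact hA.trans hle'
  have h2 : 4 * ((p : ℝ) - 1) ≤ x ^ 3 := by
    have e1 : (2 * x ^ 8) * (2 * x ^ 8) * (2 * x ^ 8) * (((p : ℝ) - 1) / 2)
        = 4 * ((p : ℝ) - 1) * x ^ 24 := by ring
    have e2 : n ^ 3 = x ^ 3 * x ^ 24 := by rw [← hx9]; ring
    rw [e1, e2] at h1
    exact le_of_mul_le_mul_right h1 (by positivity)
  linarith
end

section
/- There exists an absolute constant C such that the following holds. Let p be a prime and A a finite symmetric generating set of SL₂(F_p) with K := |A³|/|A|. Then for every τ ∈ F_p with τ ≠ 0 and every integer k ≥ 2: |A^k ∩ C_τ| ≤ C·( K^((4k−4)/3)·|A|^(2/3) + K^k·|A|^(1/3) ); moreover, if the equation τ = γ + γ⁻¹ has no solution γ ∈ F_p*, then |A^k ∩ C_τ| ≤ C·K^((4k−4)/3)·|A|^(2/3). -/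
open Pointwise

section
open Matrix

def dt {F : Type*} [Field F] (v u : Fin 2 → F) : F := v 0 * u 1 - v 1 * u 0

lemma exists_smul_of_dt {F : Type*} [Field F] (v u : Fin 2 → F) (hv : v ≠ 0) (h : dt v u = 0) :
    ∃ l : F, u = l • v := by
  unfold dt at h
  by_cases h0 : v 0 = 0
  · have h1 : v 1 ≠ 0 := by
      intro h1; apply hv; ext i; fin_cases i <;> simp [h0, h1]
    refine ⟨u 1 / v 1, ?_⟩
    ext i; fin_cases i
    · simp [h0] at h ⊢; tauto
    · simp; field_simp
  · refine ⟨u 0 / v 0, ?_⟩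
    ext i; fin_cases i
    · simp; field_simp
    · simp; field_simp; linear_combination h

/-- three collinear points on the quadric `det = 1` in a trace hyperplane -/
lemma line_lemma {F : Type*} [Field F] (Y D : Matrix (Fin 2) (Fin 2) F) (t : F)
    (h1 : Y.det = 1) (h2 : (Y + D).det = 1) (h3 : (Y + t • D).det = 1) (ht0 : t ≠ 0) (ht1 : t ≠ 1)
    (hD : D.trace = 0) (hD0 : D ≠ 0) :
    ∃ v : Fin 2 → F, v ≠ 0 ∧ (∃ m : F, Y *ᵥ v = m • v) ∧ (∃ m : F, D *ᵥ v = m • v) ∧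
      ∀ M : Matrix (Fin 2) (Fin 2) F, (M * D).trace = 0 → ∃ l : F, M *ᵥ v = l • v := by
  simp only [Matrix.det_fin_two, Matrix.add_apply, Matrix.smul_apply, smul_eq_mul] at h1 h2 h3
  rw [Matrix.trace_fin_two] at hD
  have hd : D 1 1 = - D 0 0 := by linear_combination hD
  have hdet : D 0 0 * D 0 0 + D 0 1 * D 1 0 = 0 := by
    have : t * (t - 1) * (D 0 0 * D 0 0 + D 0 1 * D 1 0) = 0 := by
      rw [hd] at h2 h3
      linear_combination t * h2 - h3 - (t-1) * h1
    have h' : t * (t - 1) ≠ 0 := mul_ne_zero ht0 (sub_ne_zero.mpr ht1)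
    exact (mul_eq_zero.mp this).resolve_left h'
  have hpol : Y 1 1 * D 0 0 - Y 0 1 * D 1 0 - Y 1 0 * D 0 1 - Y 0 0 * D 0 0 = 0 := by
    rw [hd] at h2
    linear_combination h2 - h1 + hdet
  -- the main vector
  have key : ∃ v : Fin 2 → F, v ≠ 0 ∧
      ∀ M : Matrix (Fin 2) (Fin 2) F, (M * D).trace = 0 → ∃ l : F, M *ᵥ v = l • v := by
    by_cases hc : D 1 0 = 0
    · have ha : D 0 0 = 0 := by simpa [hc] using hdet
      have hb : D 0 1 ≠ 0 := by
        intro hb; apply hD0; ext i j; fin_cases i <;> fin_cases j <;> simp [ha, hb, hc, hd]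
      have hv : (![1, 0] : Fin 2 → F) ≠ 0 := by
        intro h; simpa using congrFun h 0
      refine ⟨![1, 0], hv, fun M hM => exists_smul_of_dt _ _ hv ?_⟩
      simp [Matrix.trace_fin_two, Matrix.mul_apply, Fin.sum_univ_two, ha, hc, hd] at hM
      have hq := hM.resolve_right hb
      simp [dt, Matrix.mulVec, dotProduct, Fin.sum_univ_two, hq]
    · have hv : (![D 0 0, D 1 0] : Fin 2 → F) ≠ 0 := by
        intro h; exact hc (by simpa using congrFun h 1)
      refine ⟨![D 0 0, D 1 0], hv, fun M hM => exists_smul_of_dt _ _ hv ?_⟩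
      simp [Matrix.trace_fin_two, Matrix.mul_apply, Fin.sum_univ_two, hd] at hM
      simp [dt, Matrix.mulVec, dotProduct, Fin.sum_univ_two]
      linear_combination (- D 1 0) * hM + M 1 0 * hdet
  obtain ⟨v, hv, hM⟩ := key
  refine ⟨v, hv, ?_, ?_, hM⟩
  · obtain ⟨l, hl⟩ := hM Y.adjugate (by
      simp only [Matrix.trace_fin_two, Matrix.mul_apply, Fin.sum_univ_two]
      simp [Matrix.adjugate_fin_two, hd]
      linear_combination hpol)
    have e : v = l • (Y *ᵥ v) := by
      rw [← Matrix.mulVec_smul, ← hl, Matrix.mulVec_mulVec, Matrix.mul_adjugate, Matrix.det_fin_two, h1]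
      simp
    have hl0 : l ≠ 0 := by
      rintro rfl; apply hv; rw [e]; simp
    refine ⟨l⁻¹, ?_⟩
    conv_rhs => rw [e]
    rw [smul_smul, inv_mul_cancel₀ hl0, one_smul]
  · apply hM
    simp [Matrix.trace_fin_two, Matrix.mul_apply, Fin.sum_univ_two, hd]
    linear_combination 2 * hdet

lemma rank_lemma {F : Type*} [Field F] (g h D E : Matrix (Fin 2) (Fin 2) F)
    (d1 : D.trace = 0) (d2 : (g * D).trace = 0) (d3 : (h * D).trace = 0)
    (e1 : E.trace = 0) (e2 : (g * E).trace = 0) (e3 : (h * E).trace = 0) :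
    (∃ a b c : F, (a ≠ 0 ∨ b ≠ 0 ∨ c ≠ 0) ∧ a • (1 : Matrix (Fin 2) (Fin 2) F) + b • g + c • h = 0) ∨
    (∃ a b : F, (a ≠ 0 ∨ b ≠ 0) ∧ a • D + b • E = 0) := by
  let P : Matrix (Fin 3) (Fin 2 × Fin 2) F := fun i q =>
    (![1, g, h] : Fin 3 → Matrix (Fin 2) (Fin 2) F) i q.1 q.2
  let Q : Matrix (Fin 2) (Fin 2 × Fin 2) F := fun i q =>
    (![D, E] : Fin 2 → Matrix (Fin 2) (Fin 2) F) i q.2 q.1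
  have hPQ : P * Qᵀ = 0 := by
    rw [← Matrix.one_mul D] at d1
    rw [← Matrix.one_mul E] at e1
    simp only [Matrix.trace_fin_two, Matrix.mul_apply, Fin.sum_univ_two] at *
    ext i j
    simp only [Matrix.mul_apply, Fintype.sum_prod_type, Fin.sum_univ_two, Matrix.transpose_apply,
      Matrix.zero_apply]
    fin_cases i <;> fin_cases j
    exacts [d1, e1, d2, e2, d3, e3]
  by_cases lp : LinearIndependent F P.row
  · right
    by_cases lq : LinearIndependent F Q.row
    · exfalso
      have r1 := lp.rank_matrix
      have r2 := lq.rank_matrix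
      have := Matrix.rank_add_rank_le_card_of_mul_eq_zero hPQ
      rw [Matrix.rank_transpose, r1, r2] at this
      simp at this
    · rw [Fintype.not_linearIndependent_iff] at lq
      obtain ⟨c, hc, i, hi⟩ := lq
      refine ⟨c 0, c 1, ?_, ?_⟩
      · fin_cases i <;> simp_all
      · ext i j
        have := congrFun hc (j, i)
        rw [Fin.sum_univ_two] at this
        exact this
  · left
    rw [Fintype.not_linearIndependent_iff] at lp
    obtain ⟨c, hc, i, hi⟩ := lp
    refine ⟨c 0, c 1, c 2, ?_, ?_⟩
    · fin_cases i <;> simp_all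
    · ext i j
      have := congrFun hc (i, j)
      rw [Fin.sum_univ_three] at this
      exact this

lemma collinear_lemma {F : Type*} [Field F] (D E : Matrix (Fin 2) (Fin 2) F) (a b : F)
    (hab : a ≠ 0 ∨ b ≠ 0) (h : a • D + b • E = 0) (hD : D ≠ 0) (hE : E ≠ 0) (hDE : E ≠ D) :
    ∃ t : F, t ≠ 0 ∧ t ≠ 1 ∧ E = t • D := by
  have hb : b ≠ 0 := by
    rintro rfl
    simp at h hab
    tauto
  have : E = (- a / b) • D := by
    have h' : b • E = (-a) • D := by rw [neg_smul]; exact eq_neg_of_add_eq_zero_right h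
    rw [div_eq_inv_mul, ← smul_smul, ← h', smul_smul, inv_mul_cancel₀ hb, one_smul]
  refine ⟨-a / b, ?_, ?_, this⟩
  · intro h0; rw [h0] at this; simp at this; exact hE this
  · intro h0; rw [h0] at this; simp at this; exact hDE this

lemma fiber_lemma {F : Type*} [Field F] (g h y y2 y3 : Matrix (Fin 2) (Fin 2) F) (τ : F) (hτ : τ ≠ 0)
    (dg : g.det = 1) (dh : h.det = 1)
    (dy : y.det = 1) (dy2 : y2.det = 1) (dy3 : y3.det = 1)
    (ty : y.trace = τ) (ty2 : y2.trace = τ) (ty3 : y3.trace = τ)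
    (tx : (g * y).trace = τ) (tx2 : (g * y2).trace = τ) (tx3 : (g * y3).trace = τ)
    (tz : (h * y).trace = τ) (tz2 : (h * y2).trace = τ) (tz3 : (h * y3).trace = τ)
    (n2 : y2 ≠ y) (n3 : y3 ≠ y) (n23 : y3 ≠ y2) 
    (m1 : g * y ≠ y) (m2 : h * y ≠ y) (m3 : h * y ≠ g * y) :
    ∃ v : Fin 2 → F, v ≠ 0 ∧ (∃ m : F, y *ᵥ v = m • v) ∧ (∃ m : F, (g * y) *ᵥ v = m • v) ∧
      (∃ m : F, (h * y) *ᵥ v = m • v) := by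
  rcases rank_lemma g h (y2 - y) (y3 - y) (by simp [ty, ty2]) (by simp [mul_sub, tx, tx2])
    (by simp [mul_sub, tz, tz2]) (by simp [ty, ty3]) (by simp [mul_sub, tx, tx3])
    (by simp [mul_sub, tz, tz3]) with ⟨a, b, c, habc, hlin⟩ | ⟨a, b, hab, hlin⟩
  · have hl2 : a • y + b • (g * y) + c • (h * y) = 0 := by
      have := congrArg (· * y) hlin
      simpa [add_mul] using this
    have htr : a + b + c = 0 := by
      have := congrArg Matrix.trace hl2
      simp [ty, tx, tz] at this
      have h2 : (a + b + c) * τ = 0 := by linear_combination this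
      exact (mul_eq_zero.mp h2).resolve_right hτ
    have ha : a = -b - c := by linear_combination htr
    have hbc : b ≠ 0 ∨ c ≠ 0 := by
      by_contra hh; push Not at hh
      rw [hh.1, hh.2] at ha; simp at ha
      simp_all
    have hl3 : b • (g * y - y) + c • (h * y - y) = 0 := by
      rw [← hl2, ha]; module
    obtain ⟨t, t0, t1, ht⟩ := collinear_lemma _ _ _ _ hbc hl3 (sub_ne_zero.mpr m1)
      (sub_ne_zero.mpr m2) (fun h => m3 (sub_left_injective h))
    obtain ⟨v, hv, ⟨m, hm⟩, ⟨l, hl⟩, -⟩ := line_lemma y (g * y - y) t dy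
      (by rw [add_sub_cancel, Matrix.det_mul, dg, dy, one_mul])
      (by rw [← ht, add_sub_cancel, Matrix.det_mul, dh, dy, one_mul]) t0 t1
      (by simp [ty, tx]) (sub_ne_zero.mpr m1)
    refine ⟨v, hv, ⟨m, hm⟩, ⟨m + l, ?_⟩, ⟨m + t * l, ?_⟩⟩
    · rw [Matrix.sub_mulVec, hm] at hl
      rw [add_smul, ← hl]; module
    · have : h * y = y + t • (g * y - y) := by rw [← ht]; module
      rw [this, Matrix.add_mulVec, Matrix.smul_mulVec, hl, hm]; module
  · obtain ⟨t, t0, t1, ht⟩ := collinear_lemma _ _ _ _ hab hlin (sub_ne_zero.mpr n2)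
      (sub_ne_zero.mpr n3) (fun h => n23 (sub_left_injective h))
    obtain ⟨v, hv, ⟨m, hm⟩, -, hM⟩ := line_lemma y (y2 - y) t dy
      (by rw [add_sub_cancel, dy2])
      (by rw [← ht, add_sub_cancel, dy3]) t0 t1
      (by simp [ty, ty2]) (sub_ne_zero.mpr n2)
    obtain ⟨l, hl⟩ := hM g (by simp [mul_sub, tx, tx2])
    obtain ⟨r, hr⟩ := hM h (by simp [mul_sub, tz, tz2])
    refine ⟨v, hv, ⟨m, hm⟩, ⟨m * l, ?_⟩, ⟨m * r, ?_⟩⟩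
    · rw [← Matrix.mulVec_mulVec, hm, Matrix.mulVec_smul, hl, smul_smul]
    · rw [← Matrix.mulVec_mulVec, hm, Matrix.mulVec_smul, hr, smul_smul]

lemma agree_basis {F : Type*} [Field F] (s t : Matrix (Fin 2) (Fin 2) F) (v u : Fin 2 → F)
    (hvu : dt v u ≠ 0) (h1 : s *ᵥ v = t *ᵥ v) (h2 : s *ᵥ u = t *ᵥ u) : s = t := by
  have key : ∀ i, s i 0 = t i 0 ∧ s i 1 = t i 1 := by
    intro i
    have e1 := congrFun h1 i
    have e2 := congrFun h2 i
    simp [Matrix.mulVec, dotProduct, Fin.sum_univ_two] at e1 e2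
    constructor
    · apply mul_right_cancel₀ hvu; unfold dt
      linear_combination u 1 * e1 - v 1 * e2
    · apply mul_right_cancel₀ hvu; unfold dt
      linear_combination - u 0 * e1 + v 0 * e2
  ext i j; fin_cases j
  · exact (key i).1
  · exact (key i).2

lemma agree_trace {F : Type*} [Field F] (s t : Matrix (Fin 2) (Fin 2) F) (v u : Fin 2 → F)
    (hvu : dt v u ≠ 0) (h1 : s *ᵥ v = t *ᵥ v) (htr : s.trace = t.trace)
    (h2 : dt u (s *ᵥ u) = dt u (t *ᵥ u)) : s = t := by
  refine agree_basis s t v u hvu h1 ?_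
  have a0 := congrFun h1 0
  have a1 := congrFun h1 1
  simp only [dt, Matrix.trace_fin_two, Matrix.mulVec, dotProduct, Fin.sum_univ_two] at *
  have h3 : v 0 * ((s 1 0 - t 1 0) * u 0 + (s 1 1 - t 1 1) * u 1) - v 1 * ((s 0 0 - t 0 0) * u 0 + (s 0 1 - t 0 1) * u 1) = 0 := by
    linear_combination (v 0 * u 1 - v 1 * u 0) * htr - u 1 * a0 + u 0 * a1
  ext i; fin_cases i
  · apply mul_right_cancel₀ hvu
    simp only [Matrix.mulVec, dotProduct, Fin.sum_univ_two, Fin.zero_eta, Fin.mk_one]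
    linear_combination - v 0 * h2 + u 0 * h3
  · apply mul_right_cancel₀ hvu
    simp only [Matrix.mulVec, dotProduct, Fin.sum_univ_two, Fin.zero_eta, Fin.mk_one]
    linear_combination - v 1 * h2 + u 1 * h3

lemma dt_mulVec {F : Type*} [Field F] (s : Matrix (Fin 2) (Fin 2) F) (v u : Fin 2 → F) :
    dt (s *ᵥ v) (s *ᵥ u) = s.det * dt v u := by
  simp [dt, Matrix.det_fin_two, Matrix.mulVec, dotProduct, Fin.sum_univ_two]; ring

lemma dt_smul_left {F : Type*} [Field F] (c : F) (v u : Fin 2 → F) :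
    dt (c • v) u = c * dt v u := by
  simp [dt]; ring
lemma dt_smul_right {F : Type*} [Field F] (c : F) (v u : Fin 2 → F) :
    dt v (c • u) = c * dt v u := by
  simp [dt]; ring
lemma dt_self {F : Type*} [Field F] (v : Fin 2 → F) : dt v v = 0 := by
  simp [dt]; ring

lemma exists_moving {F G : Type*} [Field F] [Group G] [DecidableEq G]
    (μ : G →* Matrix (Fin 2) (Fin 2) F)
    (hu1 : ∃ g, μ g = !![1, 1; 0, 1]) (hu2 : ∃ g, μ g = !![1, 0; 1, 1])
    (A : Finset G)
    (hgen : Subgroup.closure (A : Set (G)) = ⊤)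
    (v : Fin 2 → F) (hv : v ≠ 0) :
    ∃ b ∈ A, dt v (μ (b) *ᵥ v) ≠ 0 := by
  by_contra hcon
  push Not at hcon
  have hall : ∀ g : G,
      ∃ l : F, (μ g) *ᵥ v = l • v := by
    intro g
    have hg : g ∈ Subgroup.closure (A : Set (G)) := by
      rw [hgen]; trivial
    induction hg using Subgroup.closure_induction with
    | mem x hx => exact exists_smul_of_dt _ _ hv (hcon x hx)
    | one => exact ⟨1, by simp⟩
    | mul x y _ _ hx hy =>
      obtain ⟨l, hl⟩ := hx
      obtain ⟨m, hm⟩ := hy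
      refine ⟨m * l, ?_⟩
      rw [map_mul, ← mulVec_mulVec, hm, mulVec_smul, hl, smul_smul]
    | inv x _ hx =>
      obtain ⟨l, hl⟩ := hx
      have e : v = l • (μ (x⁻¹)) *ᵥ v := by
        rw [← mulVec_smul, ← hl, mulVec_mulVec, ← map_mul]
        simp
      have hl0 : l ≠ 0 := by
        rintro rfl; apply hv; rw [e]; simp
      refine ⟨l⁻¹, ?_⟩
      conv_rhs => rw [e]
      rw [smul_smul, inv_mul_cancel₀ hl0, one_smul]
  obtain ⟨g1, hg1⟩ := hu1
  obtain ⟨g2, hg2⟩ := hu2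
  have h1 := hall g1
  have h2 := hall g2
  rw [hg1] at h1
  rw [hg2] at h2
  obtain ⟨l, hl⟩ := h1
  obtain ⟨m, hm⟩ := h2
  have a := congrArg (dt v) hl
  have b := congrArg (dt v) hm
  rw [dt_smul_right, dt_self] at a b
  simp only [dt, mulVec, dotProduct, Fin.sum_univ_two] at a b
  simp at a b
  apply hv
  have a' : v 1 * v 1 = 0 := by linear_combination -a
  have b' : v 0 * v 0 = 0 := by linear_combination b
  ext i; fin_cases i
  · simpa using b'
  · simpa using a'

lemma mulVec_ne_zero {F : Type*} [Field F] (s : Matrix (Fin 2) (Fin 2) F) (hs : s.det = 1)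
    (v : Fin 2 → F) (hv : v ≠ 0) : s *ᵥ v ≠ 0 := by
  intro h
  apply hv
  have : s.adjugate *ᵥ (s *ᵥ v) = v := by
    rw [mulVec_mulVec, adjugate_mul, hs]; simp
  rw [← this, h]; simp

lemma T_bound {F G : Type*} [Field F] [Group G] [DecidableEq G]
    (μ : G →* Matrix (Fin 2) (Fin 2) F) (hinj : Function.Injective μ) (hdet : ∀ x, (μ x).det = 1)
    (hu1 : ∃ g, μ g = !![1, 1; 0, 1]) (hu2 : ∃ g, μ g = !![1, 0; 1, 1])
    (A : Finset G)
    (hsym : A⁻¹ = A)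
    (hgen : Subgroup.closure (A : Set (G)) = ⊤)
    (τ γ : F) (k : ℕ) (v : Fin 2 → F) (hv : v ≠ 0)
    (T : Finset G)
    (hA : ∀ x ∈ T, x ∈ A ^ k)
    (htr : ∀ x ∈ T, (μ x).trace = τ)
    (hev : ∀ x ∈ T, (μ x) *ᵥ v = γ • v) :
    (T.card - 1) ^ 3 ≤ (A ^ (3 * k + 2)).card := by
  classical
  obtain ⟨b, hbA, hb⟩ := exists_moving μ hu1 hu2 A hgen v hv
  obtain ⟨u, hu⟩ : ∃ u, (μ b) *ᵥ v = u := ⟨_, rfl⟩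
  rw [hu] at hb
  have hbinv : b⁻¹ ∈ A := by rw [← hsym]; exact Finset.inv_mem_inv hbA
  let T' := T.filter (fun s : G => dt u (μ (s) *ᵥ u) ≠ 0)
  have hT' : T.card - 1 ≤ T'.card := by
    have h1 := Finset.card_filter_add_card_filter_not (s := T)
      (fun s : G => dt u (μ (s) *ᵥ u) ≠ 0)
    have h2 : (T.filter (fun s : G => ¬ (dt u (μ (s) *ᵥ u) ≠ 0))).card ≤ 1 := by
      rw [Finset.card_le_one]
      intro s hs t ht
      simp only [Finset.mem_filter, not_not] at hs ht
      apply hinj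
      exact agree_trace _ _ v u hb (by rw [hev s hs.1, hev t ht.1]) (by rw [htr s hs.1, htr t ht.1])
        (by rw [hs.2, ht.2])
    change T'.card + _ = _ at h1
    omega
  have hcard : (T ×ˢ T' ×ˢ T).card ≤ (A ^ (3 * k + 2)).card := by
    apply Finset.card_le_card_of_injOn (fun q => q.1 * b⁻¹ * q.2.1 * b * q.2.2)
    · rintro ⟨s1, s2, s3⟩ h
      simp only [Finset.coe_product, Set.mem_prod, Finset.mem_coe] at h
      have : A ^ (3 * k + 2) = A ^ k * A * A ^ k * A * A ^ k := by
        simp only [← pow_succ, ← pow_add]; congr 1; ring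
      simp only [Finset.mem_coe]
      rw [this]
      exact Finset.mul_mem_mul (Finset.mul_mem_mul (Finset.mul_mem_mul (Finset.mul_mem_mul
        (hA _ h.1) hbinv) (hA _ (Finset.mem_filter.mp h.2.1).1)) hbA) (hA _ h.2.2)
    · rintro ⟨s1, s2, s3⟩ h ⟨t1, t2, t3⟩ h' heq
      simp only [Finset.coe_product, Set.mem_prod, Finset.mem_coe] at h h'
      obtain ⟨hs1, hs2, hs3⟩ := h
      obtain ⟨ht1, ht2, ht3⟩ := h'
      obtain ⟨hs2, hs2n⟩ := Finset.mem_filter.mp hs2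
      obtain ⟨ht2, ht2n⟩ := Finset.mem_filter.mp ht2
      have hγ : γ ≠ 0 := by
        rintro rfl
        apply mulVec_ne_zero _ (hdet s1) v hv
        rw [hev s1 hs1, zero_smul]
      have hcomp : ∀ a1 a2 a3 : G, a3 ∈ T →
          (μ (a1 * b⁻¹ * a2 * b * a3)) *ᵥ v
          = γ • (μ (a1) *ᵥ
              (μ ((b⁻¹)) *ᵥ
                (μ (a2) *ᵥ u))) := by
        intro a1 a2 a3 h3
        simp only [map_mul, ← mulVec_mulVec]
        rw [hev a3 h3]
        simp only [mulVec_smul, hu]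
      have hq : ∀ a2 : G, dt v
          (μ ((b⁻¹)) *ᵥ
                (μ (a2) *ᵥ u)) =
          dt u (μ (a2) *ᵥ u) := by
        intro a2
        have h1 := dt_mulVec (μ b) v
          (μ ((b⁻¹)) *ᵥ
                (μ (a2) *ᵥ u))
        rw [mulVec_mulVec _ (μ b), ← map_mul,
          mul_inv_cancel, map_one, one_mulVec, hu, (hdet b), one_mul] at h1
        exact h1.symm
      have hdt : ∀ a1 ∈ T, ∀ w : Fin 2 → F,
          γ * dt v (μ (a1) *ᵥ w) = dt v w := by
        intro a1 h1 w
        have := dt_mulVec (μ a1) v w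
        rw [(hdet a1), one_mul, hev a1 h1, dt_smul_left] at this
        exact this
      have heq' : s1 * b⁻¹ * s2 * b * s3 = t1 * b⁻¹ * t2 * b * t3 := heq
      have e1 : (μ s1) *ᵥ
              (μ ((b⁻¹)) *ᵥ
                (μ (s2) *ᵥ u)) =
            (μ t1) *ᵥ
              (μ ((b⁻¹)) *ᵥ
                (μ (t2) *ᵥ u)) := by
        have h1 := hcomp s1 s2 s3 hs3
        rw [heq', hcomp t1 t2 t3 ht3] at h1
        exact (smul_right_injective _ hγ h1).symm
      have e2 : s2 = t2 := by
        apply hinj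
        refine agree_trace _ _ v u hb (by rw [hev s2 hs2, hev t2 ht2])
          (by rw [htr s2 hs2, htr t2 ht2]) ?_
        rw [← hq s2, ← hq t2, ← hdt s1 hs1, e1, hdt t1 ht1]
      subst e2
      have e3 : s1 = t1 := by
        apply hinj
        exact agree_basis _ _ v _ (by rw [hq s2]; exact hs2n) (by rw [hev s1 hs1, hev t1 ht1]) e1
      subst e3
      have e4 : s3 = t3 := mul_left_cancel heq'
      rw [e4]
  rw [Finset.card_product, Finset.card_product] at hcard
  calc (T.card - 1) ^ 3 = (T.card - 1) * ((T.card - 1) * (T.card - 1)) := by ring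
    _ ≤ T.card * (T'.card * T.card) := by gcongr <;> omega
    _ ≤ _ := hcard

def Shares {F G : Type*} [Field F] [Group G] (μ : G →* Matrix (Fin 2) (Fin 2) F) (x y : G) : Prop :=
  ∃ v : Fin 2 → F, v ≠ 0 ∧
    (∃ m : F, (μ x) *ᵥ v = m • v) ∧
    (∃ m : F, (μ y) *ᵥ v = m • v)

lemma eig_root {F : Type*} [Field F] (s : Matrix (Fin 2) (Fin 2) F) (τ γ : F) (hs : s.det = 1)
    (ht : s.trace = τ) (v : Fin 2 → F) (hv : v ≠ 0) (h : s *ᵥ v = γ • v) :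
    γ * γ - τ * γ + 1 = 0 := by
  have a0 := congrFun h 0
  have a1 := congrFun h 1
  rw [det_fin_two] at hs
  rw [trace_fin_two] at ht
  simp only [Matrix.mulVec, dotProduct, Fin.sum_univ_two, Pi.smul_apply, smul_eq_mul] at a0 a1
  have b0 : (γ * γ - τ * γ + 1) * v 0 = 0 := by
    rw [← hs, ← ht]; linear_combination (s 1 1 - γ) * a0 - s 0 1 * a1
  have b1 : (γ * γ - τ * γ + 1) * v 1 = 0 := by
    rw [← hs, ← ht]; linear_combination (s 0 0 - γ) * a1 - s 1 0 * a0
  by_contra hne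
  apply hv
  ext i; fin_cases i
  · exact (mul_eq_zero.mp b0).resolve_left hne
  · exact (mul_eq_zero.mp b1).resolve_left hne

open Classical in
lemma E_bound {F G : Type*} [Field F] [Group G] [DecidableEq G]
    (μ : G →* Matrix (Fin 2) (Fin 2) F) (hdet : ∀ x, (μ x).det = 1)
    (S : Finset G)
    (τ : F) (N : ℕ)
    (htr : ∀ x ∈ S, (μ x).trace = τ)
    (hN : ∀ (v : Fin 2 → F) (γ : F), v ≠ 0 →
      (S.filter (fun y : G => (μ y) *ᵥ v = γ • v)).card ≤ N)
    (x : G) (hx : x ∈ S)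
    (hns : ∀ c : F, (μ x) ≠ c • 1)
    (R : Finset (F)) (hR : ∀ γ : F, γ * γ - τ * γ + 1 = 0 → γ ∈ R) :
    (S.filter (fun y : G => Shares μ x y)).card ≤ R.card * R.card * N := by
  have hch : ∀ γ : F, ∃ v : Fin 2 → F, v ≠ 0 ∧
      ∀ w : Fin 2 → F, (μ x) *ᵥ w = γ • w →
        ∃ l : F, w = l • v := by
    intro γ
    by_cases h : ∃ v : Fin 2 → F, v ≠ 0 ∧ (μ x) *ᵥ v = γ • v
    · obtain ⟨v, hv, hxv⟩ := h
      refine ⟨v, hv, fun w hw => exists_smul_of_dt _ _ hv ?_⟩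
      by_contra hne
      apply hns γ
      exact agree_basis _ _ v w hne (by rw [hxv, smul_mulVec, one_mulVec])
        (by rw [hw, smul_mulVec, one_mulVec])
    · push Not at h
      refine ⟨![1, 0], fun h => by simpa using congrFun h 0, fun w hw => ⟨0, ?_⟩⟩
      by_contra hw0
      exact h w (by simpa using hw0) hw
  choose V hV hVw using hch
  have hsub : S.filter (fun y : G => Shares μ x y) ⊆ (R ×ˢ R).biUnion (fun q =>
      S.filter (fun y : G => (μ y) *ᵥ (V q.1) = q.2 • (V q.1))) := by
    intro y hy
    obtain ⟨hyS, w, hw, ⟨m, hm⟩, ⟨l, hl⟩⟩ := Finset.mem_filter.mp hy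
    rw [Finset.mem_biUnion]
    refine ⟨(m, l), Finset.mem_product.mpr ⟨hR _ (eig_root _ _ _ (hdet x) (htr x hx) w hw hm),
      hR _ (eig_root _ _ _ (hdet y) (htr y hyS) w hw hl)⟩, Finset.mem_filter.mpr ⟨hyS, ?_⟩⟩
    obtain ⟨c, hc⟩ := hVw m w hm
    have hc0 : c ≠ 0 := by rintro rfl; apply hw; rw [hc]; simp
    rw [hc, mulVec_smul, smul_comm] at hl
    exact smul_right_injective _ hc0 hl
  calc _ ≤ _ := Finset.card_le_card hsub
    _ ≤ (R ×ˢ R).card * N := Finset.card_biUnion_le_card_mul _ _ _ (fun q _ => hN _ _ (hV _))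
    _ = _ := by rw [Finset.card_product]

open Classical in
lemma triple_count {F G : Type*} [Field F] [Group G] [DecidableEq G]
    (μ : G →* Matrix (Fin 2) (Fin 2) F) (hinj : Function.Injective μ) (hdet : ∀ x, (μ x).det = 1)
    (A S : Finset G)
    (hsym : A⁻¹ = A) (τ : F) (hτ : τ ≠ 0) (k E : ℕ)
    (hA : ∀ x ∈ S, x ∈ A ^ k)
    (htr : ∀ x ∈ S, (μ x).trace = τ)
    (hE : ∀ x ∈ S, (S.filter (fun y : G => Shares μ x y)).card ≤ E) :
    S.card ^ 3 ≤ 3 * S.card ^ 2 + 2 * (A ^ (2 * k)).card ^ 2 + S.card * E ^ 2 := by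
  -- triples are `(y, x, z)`
  let B1 := (S ×ˢ S).image (fun q => (q.1, q.1, q.2))
  let B2 := (S ×ˢ S).image (fun q => (q.1, q.2, q.1))
  let B3 := (S ×ˢ S).image (fun q => (q.1, q.2, q.2))
  let B4 := S.biUnion (fun y : G => ((S.filter (fun x : G => Shares μ y x)) ×ˢ
    (S.filter (fun x : G => Shares μ y x))).image (fun q => (y, q)))
  let Gd := (S ×ˢ S ×ˢ S) \ (B1 ∪ B2 ∪ B3 ∪ B4)
  have c1 : B1.card ≤ S.card ^ 2 := Finset.card_image_le.trans (by rw [Finset.card_product, sq])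
  have c2 : B2.card ≤ S.card ^ 2 := Finset.card_image_le.trans (by rw [Finset.card_product, sq])
  have c3 : B3.card ≤ S.card ^ 2 := Finset.card_image_le.trans (by rw [Finset.card_product, sq])
  have c4 : B4.card ≤ S.card * E ^ 2 := by
    apply Finset.card_biUnion_le_card_mul
    intro y hy
    refine Finset.card_image_le.trans ?_
    rw [Finset.card_product, sq]
    exact Nat.mul_le_mul (hE y hy) (hE y hy)
  have hpow : (A ^ k)⁻¹ = A ^ k := by rw [← inv_pow, hsym]
  have hmem : ∀ x ∈ S, ∀ y ∈ S, x * y⁻¹ ∈ A ^ (2 * k) := by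
    intro x hx y hy
    rw [two_mul, pow_add]
    refine Finset.mul_mem_mul (hA x hx) ?_
    rw [← hpow]; exact Finset.inv_mem_inv (hA y hy)
  have hGd : ∀ t ∈ Gd, (t.1 ∈ S ∧ t.2.1 ∈ S ∧ t.2.2 ∈ S) ∧ t.2.1 ≠ t.1 ∧ t.2.2 ≠ t.1 ∧
      t.2.2 ≠ t.2.1 ∧ ¬ (Shares μ t.1 t.2.1 ∧ Shares μ t.1 t.2.2) := by
    rintro ⟨y, x, z⟩ ht
    simp only [Gd, Finset.mem_sdiff, Finset.mem_union, Finset.mem_product, not_or] at ht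
    obtain ⟨⟨hy, hx, hz⟩, ⟨⟨h1, h2⟩, h3⟩, h4⟩ := ht
    refine ⟨⟨hy, hx, hz⟩, ?_, ?_, ?_, ?_⟩ <;> dsimp only
    · rintro rfl
      exact h1 (Finset.mem_image.mpr ⟨(x, z), Finset.mem_product.mpr ⟨hx, hz⟩, rfl⟩)
    · rintro rfl
      exact h2 (Finset.mem_image.mpr ⟨(z, x), Finset.mem_product.mpr ⟨hz, hx⟩, rfl⟩)
    · rintro rfl
      exact h3 (Finset.mem_image.mpr ⟨(y, z), Finset.mem_product.mpr ⟨hy, hx⟩, rfl⟩)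
    · rintro ⟨s1, s2⟩
      exact h4 (Finset.mem_biUnion.mpr ⟨y, hy, Finset.mem_image.mpr ⟨(x, z),
        Finset.mem_product.mpr ⟨Finset.mem_filter.mpr ⟨hx, s1⟩, Finset.mem_filter.mpr ⟨hz, s2⟩⟩,
        rfl⟩⟩)
  have c5 : Gd.card ≤ 2 * ((A ^ (2 * k)) ×ˢ (A ^ (2 * k))).card := by
    apply Finset.card_le_mul_card_image_of_maps_to (f := fun t : G × G × G => (t.2.1 * t.1⁻¹, t.2.2 * t.1⁻¹))
    · intro t ht
      obtain ⟨⟨hy, hx, hz⟩, -⟩ := hGd t ht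
      exact Finset.mem_product.mpr ⟨hmem _ hx _ hy, hmem _ hz _ hy⟩
    · rintro ⟨g, h⟩ -
      by_contra hlt
      push Not at hlt
      obtain ⟨⟨y, x, z⟩, t1, ⟨y2, x2, z2⟩, t2, ⟨y3, x3, z3⟩, t3, n12, n13, n23⟩ :=
        Finset.two_lt_card.mp hlt
      simp only [Finset.mem_filter, Prod.mk.injEq] at t1 t2 t3
      obtain ⟨g1, e1, f1⟩ := t1
      obtain ⟨g2, e2, f2⟩ := t2
      obtain ⟨g3, e3, f3⟩ := t3
      obtain ⟨⟨hy, hx, hz⟩, ne1, ne2, ne3, hno⟩ := hGd _ g1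
      obtain ⟨⟨hy2, hx2, hz2⟩, -⟩ := hGd _ g2
      obtain ⟨⟨hy3, hx3, hz3⟩, -⟩ := hGd _ g3
      simp only at hy hx hz ne1 ne2 ne3 hno hy2 hx2 hz2 hy3 hx3 hz3
      rw [mul_inv_eq_iff_eq_mul] at e1 e2 e3 f1 f2 f3
      subst e1 e2 e3 f1 f2 f3
      have inj : ∀ {a b : G}, a ≠ b → μ a ≠ μ b := fun hab hh => hab (hinj hh)
      have tr1 : ∀ {a b : G}, a * b ∈ S → (μ a * μ b).trace = τ := by
        intro a b hab
        rw [← map_mul]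
        exact htr _ hab
      obtain ⟨v, hv, hy', hx', hz'⟩ := fiber_lemma (μ g) (μ h) (μ y) (μ y2) (μ y3) τ hτ
        (hdet g) (hdet h) (hdet y) (hdet y2) (hdet y3) (htr _ hy) (htr _ hy2) (htr _ hy3)
        (tr1 hx) (tr1 hx2) (tr1 hx3) (tr1 hz) (tr1 hz2) (tr1 hz3)
        (inj (by rintro rfl; exact n12 rfl)) (inj (by rintro rfl; exact n13 rfl))
        (inj (by rintro rfl; exact n23 rfl)) (by rw [← map_mul]; exact inj ne1)
        (by rw [← map_mul]; exact inj ne2) (by rw [← map_mul, ← map_mul]; exact inj ne3)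
      rw [← map_mul] at hx' hz'
      exact hno ⟨⟨v, hv, hy', hx'⟩, ⟨v, hv, hy', hz'⟩⟩
  have htot : (S ×ˢ S ×ˢ S).card ≤ Gd.card + (B1 ∪ B2 ∪ B3 ∪ B4).card :=
    Finset.card_le_card_sdiff_add_card
  have u1 := Finset.card_union_le (B1 ∪ B2 ∪ B3) B4
  have u2 := Finset.card_union_le (B1 ∪ B2) B3
  have u3 := Finset.card_union_le B1 B2
  rw [Finset.card_product, Finset.card_product] at htot
  rw [Finset.card_product] at c5
  have e : S.card ^ 3 = S.card * (S.card * S.card) := by ring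
  rw [e]
  rw [← sq] at c5
  omega

open Classical in
lemma core_bound {F G : Type*} [Field F] [Group G] [DecidableEq G]
    (μ : G →* Matrix (Fin 2) (Fin 2) F) (hinj : Function.Injective μ)
    (hdet : ∀ x, (μ x).det = 1)
    (hu1 : ∃ g, μ g = !![1, 1; 0, 1]) (hu2 : ∃ g, μ g = !![1, 0; 1, 1])
    (A : Finset G) (hsym : A⁻¹ = A) (hgen : Subgroup.closure (A : Set G) = ⊤)
    (τ : F) (hτ : τ ≠ 0) (k N : ℕ) (hN : (A ^ (3 * k + 2)).card < N ^ 3)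
    (R : Finset F) (hR : ∀ γ : F, γ * γ - τ * γ + 1 = 0 → γ ∈ R)
    (S : Finset G) (hA : ∀ x ∈ S, x ∈ A ^ k) (htr : ∀ x ∈ S, (μ x).trace = τ)
    (hns : ∀ x ∈ S, ∀ c : F, μ x ≠ c • 1) :
    S.card ^ 3 ≤ 3 * S.card ^ 2 + 2 * (A ^ (2 * k)).card ^ 2 +
      S.card * (R.card * R.card * N) ^ 2 := by
  apply triple_count μ hinj hdet A S hsym τ hτ k _ hA htr
  intro x hx
  refine E_bound μ hdet S τ N htr ?_ x hx (hns x hx) R hR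
  intro v γ hv
  have hT := T_bound μ hinj hdet hu1 hu2 A hsym hgen τ γ k v hv
    (S.filter (fun y : G => μ y *ᵥ v = γ • v))
    (fun x hx => hA x (Finset.mem_filter.mp hx).1)
    (fun x hx => htr x (Finset.mem_filter.mp hx).1)
    (fun x hx => (Finset.mem_filter.mp hx).2)
  have := lt_of_pow_lt_pow_left₀ 3 (Nat.zero_le _) (hT.trans_lt hN)
  omega

lemma num_split (s R m : ℝ) (hR : 1 ≤ R) (hm : 1 ≤ m)
    (h : s ^ 3 ≤ 3 * s ^ 2 + 2 * R ^ 3 + s * (8 * m) ^ 2) : s ≤ 12 * (R + m) := by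
  by_contra hc
  push Not at hc
  have hs : 24 < s := by linarith
  have h1 : 24 * s ^ 2 ≤ s ^ 3 := by nlinarith [sq_nonneg s]
  have h2 : (12 * R) ^ 3 ≤ s ^ 3 := by gcongr; linarith
  have h3 : s * (12 * m) ^ 2 ≤ s * s ^ 2 := by gcongr; linarith
  have h4 : 0 < s ^ 3 := by positivity
  nlinarith

lemma num_nonsplit (s R : ℝ) (hR : 1 ≤ R)
    (h : s ^ 3 ≤ 3 * s ^ 2 + 2 * R ^ 3) : s ≤ 12 * R := by
  by_contra hc
  push Not at hc
  have hs : 12 < s := by linarith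
  have h1 : 12 * s ^ 2 ≤ s ^ 3 := by nlinarith [sq_nonneg s]
  have h2 : (12 * R) ^ 3 ≤ s ^ 3 := by gcongr
  have h4 : 0 < s ^ 3 := by positivity
  nlinarith

lemma rpow_R (K a : ℝ) (hK : 1 ≤ K) (ha : 1 ≤ a) (k : ℕ) (hk : 2 ≤ k) :
    1 ≤ K ^ ((4 * (k : ℝ) - 4) / 3) * a ^ ((2 : ℝ) / 3) ∧
    (K ^ ((4 * (k : ℝ) - 4) / 3) * a ^ ((2 : ℝ) / 3)) ^ 3 = (K ^ (2 * k - 2) * a) ^ 2 := by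
  have hk' : (2 : ℝ) ≤ k := by exact_mod_cast hk
  constructor
  · have h1 := Real.one_le_rpow hK (z := (4 * (k : ℝ) - 4) / 3) (by linarith)
    have h2 := Real.one_le_rpow ha (z := (2 : ℝ) / 3) (by norm_num)
    nlinarith
  · rw [mul_pow, mul_pow, ← Real.rpow_natCast (K ^ _) 3, ← Real.rpow_natCast (a ^ _) 3,
      ← Real.rpow_mul (by linarith), ← Real.rpow_mul (by linarith), ← pow_mul,
      ← Real.rpow_natCast K, ← Real.rpow_natCast a 2]
    congr 2
    · push_cast [Nat.cast_sub (show 2 ≤ 2 * k by omega)]; ring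
    · norm_num

lemma rpow_m (K a : ℝ) (hK : 1 ≤ K) (ha : 1 ≤ a) (k : ℕ) :
    1 ≤ K ^ (k : ℝ) * a ^ ((1 : ℝ) / 3) ∧
    (K ^ (k : ℝ) * a ^ ((1 : ℝ) / 3)) ^ 3 = K ^ (3 * k) * a := by
  constructor
  · have h1 := Real.one_le_rpow hK (z := (k : ℝ)) (by positivity)
    have h2 := Real.one_le_rpow ha (z := (1 : ℝ) / 3) (by norm_num)
    nlinarith
  · rw [mul_pow, ← Real.rpow_natCast (a ^ _) 3, ← Real.rpow_mul (by linarith),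
      Real.rpow_natCast, ← pow_mul, mul_comm k 3]
    norm_num

lemma roots_finset {F : Type*} [Field F] (τ : F) :
    ∃ R : Finset F, R.card ≤ 2 ∧ ∀ γ : F, γ * γ - τ * γ + 1 = 0 → γ ∈ R := by
  classical
  by_cases h : ∃ γ : F, γ * γ - τ * γ + 1 = 0
  · obtain ⟨g, hg⟩ := h
    refine ⟨{g, τ - g}, Finset.card_le_two, fun γ hγ => ?_⟩
    have : (γ - g) * (γ - (τ - g)) = 0 := by linear_combination hγ - hg
    rcases mul_eq_zero.mp this with h | h
    · simp [sub_eq_zero.mp h]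
    · simp [sub_eq_zero.mp h]
  · exact ⟨∅, by simp, fun γ hγ => absurd ⟨γ, hγ⟩ h⟩

open Classical in
lemma abstract_bound {F G : Type*} [Field F] [Group G] [DecidableEq G]
    (μ : G →* Matrix (Fin 2) (Fin 2) F) (hinj : Function.Injective μ)
    (hdet : ∀ x, (μ x).det = 1)
    (hu1 : ∃ g, μ g = !![1, 1; 0, 1]) (hu2 : ∃ g, μ g = !![1, 0; 1, 1])
    (A : Finset G) (hsym : A⁻¹ = A) (hgen : Subgroup.closure (A : Set G) = ⊤)
    (τ : F) (hτ : τ ≠ 0) (k : ℕ) (hk : 2 ≤ k) :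
    ((((A ^ k).filter (fun x : G => (μ x).trace = τ)).card : ℝ)
      ≤ 14 * ((((A ^ 3).card : ℝ) / (A.card : ℝ)) ^ ((4 * (k : ℝ) - 4) / 3) *
                    (A.card : ℝ) ^ ((2 : ℝ) / 3) +
                  (((A ^ 3).card : ℝ) / (A.card : ℝ)) ^ ((k : ℝ)) *
                    (A.card : ℝ) ^ ((1 : ℝ) / 3))) ∧
    ((∀ γ : F, γ * γ - τ * γ + 1 ≠ 0) →
      (((A ^ k).filter (fun x : G => (μ x).trace = τ)).card : ℝ)
      ≤ 14 * ((((A ^ 3).card : ℝ) / (A.card : ℝ)) ^ ((4 * (k : ℝ) - 4) / 3) *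
                    (A.card : ℝ) ^ ((2 : ℝ) / 3))) := by
  have hne : A.Nonempty := by
    rw [Finset.nonempty_iff_ne_empty]
    rintro rfl
    have hb : (⊥ : Subgroup G) = ⊤ := by simpa using hgen
    obtain ⟨g, hg⟩ := hu1
    have h1 : g = 1 := by
      have : g ∈ (⊥ : Subgroup G) := by rw [hb]; trivial
      simpa using this
    rw [h1, map_one] at hg
    have := congrFun (congrFun hg 0) 1
    simp at this
  have ha : (1 : ℝ) ≤ A.card := by exact_mod_cast hne.card_pos
  have hK : 1 ≤ ((A ^ 3).card : ℝ) / A.card := by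
    rw [one_le_div (by linarith)]
    have : A.card ≤ (A ^ 3).card := by
      rw [pow_succ]
      exact Finset.card_le_card_mul_left (hne.pow)
    exact_mod_cast this
  have hKA : ((A ^ 3).card : ℝ) ≤ ((A ^ 3).card : ℝ) / A.card * A.card := by
    rw [div_mul_cancel₀]; linarith
  have p1 := Finset.small_pow_of_small_tripling (m := 2 * k) (by omega) hKA hsym
  have p2 := Finset.small_pow_of_small_tripling (m := 3 * k + 2) (by omega) hKA hsym
  obtain ⟨R1, R3⟩ := rpow_R _ _ hK ha k hk
  obtain ⟨m1, m3⟩ := rpow_m _ _ hK ha k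
  generalize ((A ^ 3).card : ℝ) / A.card = K at *
  generalize K ^ ((4 * (k : ℝ) - 4) / 3) * (A.card : ℝ) ^ ((2 : ℝ) / 3) = ρ at *
  generalize K ^ ((k : ℝ)) * (A.card : ℝ) ^ ((1 : ℝ) / 3) = m at *
  let S := ((A ^ k).filter (fun x : G => (μ x).trace = τ)).filter
    (fun x : G => ∀ c : F, μ x ≠ c • 1)
  have hS : ((A ^ k).filter (fun x : G => (μ x).trace = τ)).card ≤ S.card + 1 := by
    have h1 := Finset.card_filter_add_card_filter_not
      (s := (A ^ k).filter (fun x : G => (μ x).trace = τ)) (fun x : G => ∀ c : F, μ x ≠ c • 1)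
    have h2 : (((A ^ k).filter (fun x : G => (μ x).trace = τ)).filter
        (fun x : G => ¬ ∀ c : F, μ x ≠ c • 1)).card ≤ 1 := by
      rw [Finset.card_le_one]
      intro x hx y hy
      simp only [Finset.mem_filter, not_forall, not_not] at hx hy
      obtain ⟨⟨-, tx⟩, c, hc⟩ := hx
      obtain ⟨⟨-, ty⟩, d, hd⟩ := hy
      apply hinj
      rw [hc, trace_smul, trace_one] at tx
      rw [hd, trace_smul, trace_one] at ty
      simp only [Fintype.card_fin, smul_eq_mul, Nat.cast_ofNat] at tx ty
      have h20 : (2 : F) ≠ 0 := by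
        intro h; rw [h, mul_zero] at tx; exact hτ tx.symm
      rw [hc, hd, mul_right_cancel₀ h20 (tx.trans ty.symm)]
    change S.card + _ = _ at h1
    omega
  have hSr : ((((A ^ k).filter (fun x : G => (μ x).trace = τ)).card : ℕ) : ℝ) ≤ S.card + 1 := by
    exact_mod_cast hS
  have hSA : ∀ x ∈ S, x ∈ A ^ k := fun x hx =>
    (Finset.mem_filter.mp (Finset.mem_filter.mp hx).1).1
  have hStr : ∀ x ∈ S, (μ x).trace = τ := fun x hx =>
    (Finset.mem_filter.mp (Finset.mem_filter.mp hx).1).2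
  have hSns : ∀ x ∈ S, ∀ c : F, μ x ≠ c • 1 := fun x hx => (Finset.mem_filter.mp hx).2
  have hNm : m < ((⌊m⌋₊ + 1 : ℕ) : ℝ) := by push_cast; exact Nat.lt_floor_add_one m
  have hNm2 : ((⌊m⌋₊ + 1 : ℕ) : ℝ) ≤ 2 * m := by
    push_cast
    have := Nat.floor_le (by linarith : 0 ≤ m)
    linarith
  generalize ⌊m⌋₊ + 1 = N at *
  have hN : (A ^ (3 * k + 2)).card < N ^ 3 := by
    have : ((A ^ (3 * k + 2)).card : ℝ) < (N : ℝ) ^ 3 := by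
      calc ((A ^ (3 * k + 2)).card : ℝ) ≤ K ^ (3 * k) * A.card := by simpa using p2
        _ = m ^ 3 := m3.symm
        _ < _ := by gcongr
    exact_mod_cast this
  have hρ : 2 * ((A ^ (2 * k)).card : ℝ) ^ 2 ≤ 2 * ρ ^ 3 := by
    rw [R3]; gcongr
  constructor
  · obtain ⟨R, hRc, hR⟩ := roots_finset τ
    have hc := core_bound μ hinj hdet hu1 hu2 A hsym hgen τ hτ k N hN R hR S hSA hStr hSns
    have hc' : (S.card : ℝ) ^ 3 ≤ 3 * (S.card : ℝ) ^ 2 + 2 * ((A ^ (2 * k)).card : ℝ) ^ 2 +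
      S.card * (R.card * R.card * N : ℝ) ^ 2 := by exact_mod_cast hc
    have hRr : (R.card : ℝ) ≤ 2 := by exact_mod_cast hRc
    have hE : (R.card * R.card * N : ℝ) ≤ 8 * m := by
      calc (R.card * R.card * N : ℝ) ≤ 2 * 2 * (2 * m) := by gcongr
        _ = _ := by ring
    have hE2 : S.card * (R.card * R.card * N : ℝ) ^ 2 ≤ S.card * (8 * m) ^ 2 := by gcongr
    have := num_split S.card ρ m R1 m1 (by linarith)
    linarith
  · intro hno
    have hc := core_bound μ hinj hdet hu1 hu2 A hsym hgen τ hτ k N hN ∅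
      (fun γ hγ => absurd hγ (hno γ)) S hSA hStr hSns
    have hc' : (S.card : ℝ) ^ 3 ≤ 3 * (S.card : ℝ) ^ 2 + 2 * ((A ^ (2 * k)).card : ℝ) ^ 2 := by
      simp only [Finset.card_empty, zero_mul, mul_zero, ne_eq, OfNat.ofNat_ne_zero,
        not_false_eq_true, zero_pow, add_zero] at hc
      exact_mod_cast hc
    have := num_nonsplit S.card ρ R1 (by linarith)
    linarith

end

theorem SL2_trace_intersection :
    ∃ C : ℝ, 0 < C ∧
      ∀ (p : ℕ), p.Prime →
        ∀ A : Finset (Matrix.SpecialLinearGroup (Fin 2) (ZMod p)),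
          A⁻¹ = A →
          Subgroup.closure (A : Set (Matrix.SpecialLinearGroup (Fin 2) (ZMod p))) = ⊤ →
          ∀ τ : ZMod p, τ ≠ 0 → ∀ k : ℕ, 2 ≤ k →
            ((Set.ncard {x : Matrix.SpecialLinearGroup (Fin 2) (ZMod p) |
                x ∈ A ^ k ∧ Matrix.trace (x : Matrix (Fin 2) (Fin 2) (ZMod p)) = τ} : ℝ)
              ≤ C * ((((A ^ 3).card : ℝ) / (A.card : ℝ)) ^ ((4 * (k : ℝ) - 4) / 3) *
                    (A.card : ℝ) ^ ((2 : ℝ) / 3) +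
                  (((A ^ 3).card : ℝ) / (A.card : ℝ)) ^ ((k : ℝ)) *
                    (A.card : ℝ) ^ ((1 : ℝ) / 3))) ∧
            ((∀ γ : (ZMod p)ˣ, (γ : ZMod p) + ((γ⁻¹ : (ZMod p)ˣ) : ZMod p) ≠ τ) →
              (Set.ncard {x : Matrix.SpecialLinearGroup (Fin 2) (ZMod p) |
                  x ∈ A ^ k ∧ Matrix.trace (x : Matrix (Fin 2) (Fin 2) (ZMod p)) = τ} : ℝ)
                ≤ C * (((A ^ 3).card : ℝ) / (A.card : ℝ)) ^ ((4 * (k : ℝ) - 4) / 3) *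
                    (A.card : ℝ) ^ ((2 : ℝ) / 3)) := by
  refine ⟨14, by norm_num, ?_⟩
  intro p hp A hsym hgen τ hτ k hk
  have : Fact p.Prime := ⟨hp⟩
  let μ : Matrix.SpecialLinearGroup (Fin 2) (ZMod p) →* Matrix (Fin 2) (Fin 2) (ZMod p) :=
    { toFun := fun x => x.1
      map_one' := rfl
      map_mul' := fun _ _ => rfl }
  have hb := abstract_bound (F := ZMod p) μ (fun x y h => Subtype.ext h) (fun x => x.2)
    ⟨⟨!![1, 1; 0, 1], by simp [Matrix.det_fin_two]⟩, rfl⟩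
    ⟨⟨!![1, 0; 1, 1], by simp [Matrix.det_fin_two]⟩, rfl⟩ A hsym hgen τ hτ k hk
  have hcard : ∀ (_ : DecidablePred fun x : Matrix.SpecialLinearGroup (Fin 2) (ZMod p) =>
      (μ x).trace = τ), Set.ncard {x : Matrix.SpecialLinearGroup (Fin 2) (ZMod p) |
      x ∈ A ^ k ∧ Matrix.trace (x : Matrix (Fin 2) (Fin 2) (ZMod p)) = τ} =
      ((A ^ k).filter (fun x : Matrix.SpecialLinearGroup (Fin 2) (ZMod p) =>
          (μ x).trace = τ)).card := by
    intro _
    rw [← Set.ncard_coe_finset]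
    congr 1
    ext x
    rw [Finset.mem_coe, Finset.mem_filter]
    rfl
  rw [← hcard] at hb
  refine ⟨hb.1, fun hno => ?_⟩
  rw [mul_assoc]
  refine hb.2 fun γ hγ => ?_
  have h0 : γ ≠ 0 := by
    rintro rfl
    simp at hγ
  apply hno (Units.mk0 γ h0)
  simp only [Units.val_inv_eq_inv_val, Units.val_mk0]
  field_simp
  linear_combination hγ
end

section
/- There exists an absolute constant C₁ such that the following holds. Let p be a prime, C ⊆ F_p\{0} and D ⊆ F_p finite nonempty sets with |C| ≤ |D|², and let L := {(c,d) : c ∈ C, d ∈ D} ⊆ Aff(F_p) be the corresponding set of affine transformations x ↦ cx + d. Then E(L) ≤ C₁·( |C|³·|D|⁴/p + |C|^(5/2)·|D|³ ). -/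
/-- Composition in `Aff(F_p)` of transformations `(a,b)`, acting as `x ↦ ax + b`:
`(a,b)∘(c,d) = (ac, ad + b)`. -/
def acomp (p : ℕ) (l m : ZMod p × ZMod p) : ZMod p × ZMod p :=
  (l.1 * m.1, l.1 * m.2 + l.2)

/-- Inverse in `Aff(F_p)` of a transformation `(a,b)` with `a ≠ 0`. -/
def ainv (p : ℕ) (l : ZMod p × ZMod p) : ZMod p × ZMod p := (l.1⁻¹, -(l.1⁻¹ * l.2))

/-- The energy of a finite set of affine transformations:
`E(L) = #{(l₁,l₂,l₁',l₂') ∈ L⁴ : l₁⁻¹∘l₂ = l₁'⁻¹∘l₂'}`. -/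
noncomputable def affEnergy (p : ℕ) (L : Finset (ZMod p × ZMod p)) : ℕ :=
  Set.ncard {q : (ZMod p × ZMod p) × (ZMod p × ZMod p) × (ZMod p × ZMod p) ×
      (ZMod p × ZMod p) |
    q.1 ∈ L ∧ q.2.1 ∈ L ∧ q.2.2.1 ∈ L ∧ q.2.2.2 ∈ L ∧
    acomp p (ainv p q.1) q.2.1 = acomp p (ainv p q.2.2.1) q.2.2.2}

namespace GE
open MvPolynomial

lemma filt {K A : Type*} [Field K] [CommRing A] [Algebra K A] (φ : MvPolynomial (Fin 3) K →ₐ[K] A)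
    (P : ℕ → A → Prop) (h0 : ∀ a : K, P 0 (algebraMap K A a)) (hX : ∀ i, P 1 (φ (X i)))
    (hadd : ∀ d a b, P d a → P d b → P d (a + b))
    (hmul : ∀ d e a b, P d a → P e b → P (d + e) (a * b))
    (hmono : ∀ d e a, d ≤ e → P d a → P e a) (f : MvPolynomial (Fin 3) K) :
    P f.totalDegree (φ f) := by
  have hpow : ∀ (i : Fin 3) (n : ℕ), P n (φ (X i) ^ n) := by
    intro i n
    induction n with
    | zero => simpa using h0 1
    | succ n ih => rw [pow_succ]; exact hmul _ _ _ _ ih (hX i)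
  have hmon : ∀ m ∈ f.support, P f.totalDegree (φ (monomial m (f.coeff m))) := by
    intro m hm
    have h1 := le_totalDegree hm
    rw [Finsupp.sum_fintype _ _ (by simp), Fin.sum_univ_three] at h1
    refine hmono _ _ _ h1 ?_
    rw [monomial_eq, Finsupp.prod_fintype _ _ (by simp), Fin.prod_univ_three]
    simp only [map_mul, map_pow]
    have : P (0 + (m 0 + m 1 + m 2)) (φ (C (f.coeff m)) * (φ (X 0) ^ m 0 * φ (X 1) ^ m 1 * φ (X 2) ^ m 2)) := by
      refine hmul _ _ _ _ ?_ (hmul _ _ _ _ (hmul _ _ _ _ (hpow _ _) (hpow _ _)) (hpow _ _))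
      have := h0 (f.coeff m)
      rwa [← φ.commutes] at this
    simpa using this
  have hsum : ∀ s : Finset (Fin 3 →₀ ℕ), s ⊆ f.support →
      P f.totalDegree (∑ m ∈ s, φ (monomial m (f.coeff m))) := by
    intro s
    induction s using Finset.induction_on with
    | empty => intro _; have := hmono _ f.totalDegree _ (Nat.zero_le _) (h0 0); simpa using this
    | insert a s ha ih =>
      intro hs
      rw [Finset.sum_insert ha]
      exact hadd _ _ _ (hmon _ (hs (Finset.mem_insert_self _ _)))
        (ih fun x hx => hs (Finset.mem_insert_of_mem hx))
  have := hsum _ (Finset.Subset.refl _)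
  rwa [← map_sum, ← as_sum] at this

/-- Restriction of a polynomial to the null line `(u,α,β)`. -/
noncomputable def res {K : Type*} [Field K] (l : K × K × K) :
    MvPolynomial (Fin 3) K →ₐ[K] Polynomial K :=
  aeval ![Polynomial.C l.2.1 + Polynomial.C l.1 * Polynomial.X,
    Polynomial.C l.2.2 + Polynomial.C (l.1 ^ 2) * Polynomial.X, Polynomial.X]

/-- The points of the null line. -/
def pt {K : Type*} [Field K] (l : K × K × K) (s : K) : Fin 3 → K :=
  ![l.2.1 + l.1 * s, l.2.2 + l.1 ^ 2 * s, s]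

section
variable {K : Type*} [Field K]

lemma res_X0 (l : K × K × K) : res l (X 0) = Polynomial.C l.2.1 + Polynomial.C l.1 * Polynomial.X := by
  simp [res]
lemma res_X1 (l : K × K × K) : res l (X 1) = Polynomial.C l.2.2 + Polynomial.C (l.1 ^ 2) * Polynomial.X := by
  simp [res]
lemma res_X2 (l : K × K × K) : res l (X 2) = Polynomial.X := by
  simp [res]
lemma res_C (l : K × K × K) (a : K) : res l (C a) = Polynomial.C a := by
  simp [res]

lemma eval_res (l : K × K × K) (s : K) (f : MvPolynomial (Fin 3) K) :
    (res l f).eval s = eval (pt l s) f := by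
  have : ((Polynomial.aeval s).comp (res l) : MvPolynomial (Fin 3) K →ₐ[K] K) = aeval (pt l s) := by
    apply MvPolynomial.algHom_ext
    intro i
    fin_cases i <;> simp [res, pt]
  have h := DFunLike.congr_fun this f
  simpa [Polynomial.coe_aeval_eq_eval] using h

lemma natDegree_res (l : K × K × K) (f : MvPolynomial (Fin 3) K) :
    (res l f).natDegree ≤ f.totalDegree := by
  refine filt (res l) (fun d a => a.natDegree ≤ d) ?_ ?_ ?_ ?_ ?_ f
  · intro a; simp
  · intro i
    fin_cases i
    · simp only [Fin.zero_eta, res_X0]; compute_degree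
    · simp only [Fin.mk_one, res_X1]; compute_degree
    · simp only [Fin.reduceFinMk, res_X2]; compute_degree
  · intro d a b ha hb; exact Polynomial.natDegree_add_le_of_degree_le ha hb
  · intro d e a b ha hb; exact Polynomial.natDegree_mul_le_of_le ha hb
  · intro d e a h1 h2; exact h2.trans h1

lemma derivative_res (l : K × K × K) (f : MvPolynomial (Fin 3) K) :
    Polynomial.derivative (res l f) = Polynomial.C l.1 * res l (pderiv 0 f) +
      Polynomial.C (l.1 ^ 2) * res l (pderiv 1 f) + res l (pderiv 2 f) := by
  induction f using MvPolynomial.induction_on with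
  | C a => simp
  | add p q hp hq => simp only [map_add, hp, hq]; ring
  | mul_X p i hp =>
    simp only [map_mul, Polynomial.derivative_mul, hp, Derivation.leibniz, smul_eq_mul, map_add]
    fin_cases i <;> simp [res_X0, res_X1, res_X2, pderiv_X, Polynomial.derivative_pow] <;> ring

lemma res_eq_zero_of_card (l : K × K × K) (f : MvPolynomial (Fin 3) K) (s : Finset K)
    (hs : ∀ x ∈ s, (res l f).eval x = 0) (hc : f.totalDegree < s.card) : res l f = 0 :=
  Polynomial.eq_zero_of_natDegree_lt_card_of_eval_eq_zero' _ s hs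
    (lt_of_le_of_lt (natDegree_res l f) hc)

lemma exists_kappa [Infinite K] (L : Finset (K × K × K)) :
    ∃ κ : K, ∀ l ∈ L, ∀ m ∈ L, l.2.1 - κ * l.2.2 = m.2.1 - κ * m.2.2 →
      l.1 - κ * l.1 ^ 2 = m.1 - κ * m.1 ^ 2 → l = m := by
  classical
  let bad : Set K := ⋃ l ∈ L, ⋃ m ∈ L, {κ | l ≠ m ∧ l.2.1 - κ * l.2.2 = m.2.1 - κ * m.2.2 ∧
      l.1 - κ * l.1 ^ 2 = m.1 - κ * m.1 ^ 2}
  have hfin : bad.Finite := by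
    refine Set.Finite.biUnion L.finite_toSet fun l _ => Set.Finite.biUnion L.finite_toSet fun m _ => ?_
    apply Set.Subsingleton.finite
    rintro k ⟨hne, h1, h2⟩ k' ⟨_, h3, h4⟩
    by_contra hkk
    have hk : k - k' ≠ 0 := sub_ne_zero.2 hkk
    apply hne
    have e1 : l.2.2 = m.2.2 := by
      have : (k - k') * (l.2.2 - m.2.2) = 0 := by linear_combination h3 - h1
      rcases mul_eq_zero.1 this with h | h
      · exact absurd h hk
      · exact sub_eq_zero.1 h
    have e2 : l.1 ^ 2 = m.1 ^ 2 := by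
      have : (k - k') * (l.1 ^ 2 - m.1 ^ 2) = 0 := by linear_combination h4 - h2
      rcases mul_eq_zero.1 this with h | h
      · exact absurd h hk
      · exact sub_eq_zero.1 h
    have e3 : l.2.1 = m.2.1 := by rw [e1] at h1; linear_combination h1
    have e4 : l.1 = m.1 := by rw [e2] at h2; linear_combination h2
    exact Prod.ext e4 (Prod.ext e3 e1)
  obtain ⟨κ, hκ⟩ := hfin.infinite_compl.nonempty
  refine ⟨κ, fun l hl m hm h1 h2 => ?_⟩
  by_contra hne
  apply hκ
  simp only [bad, Set.mem_iUnion]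
  exact ⟨l, hl, m, hm, hne, h1, h2⟩

/-- change of variables to a tower of univariate polynomial rings -/
noncomputable def tow (κ : K) : MvPolynomial (Fin 3) K →ₐ[K] Polynomial (Polynomial (Polynomial K)) :=
  aeval (![Polynomial.C Polynomial.X + Polynomial.C (Polynomial.C (Polynomial.C κ)) * Polynomial.X,
    Polynomial.X, Polynomial.C (Polynomial.C Polynomial.X)] :
      Fin 3 → Polynomial (Polynomial (Polynomial K)))

noncomputable def untow (κ : K) : Polynomial (Polynomial (Polynomial K)) →+* MvPolynomial (Fin 3) K :=
  Polynomial.eval₂RingHom (Polynomial.eval₂RingHom (Polynomial.eval₂RingHom MvPolynomial.C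
    (MvPolynomial.X 2)) (MvPolynomial.X 0 - MvPolynomial.C κ * MvPolynomial.X 1)) (MvPolynomial.X 1)

lemma algMap3 (a : K) : algebraMap K (Polynomial (Polynomial (Polynomial K))) a =
    Polynomial.C (Polynomial.C (Polynomial.C a)) := rfl

noncomputable def towE (κ : K) : MvPolynomial (Fin 3) K ≃+* Polynomial (Polynomial (Polynomial K)) :=
  RingEquiv.ofRingHom (tow κ).toRingHom (untow κ)
    (by
      refine Polynomial.ringHom_ext' (Polynomial.ringHom_ext' (Polynomial.ringHom_ext' ?_ ?_) ?_) ?_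
      · ext a; simp [tow, untow, algMap3]
      · simp [tow, untow]
      · simp [tow, untow, algMap3]
        exact add_sub_cancel_right (Polynomial.C Polynomial.X : Polynomial (Polynomial (Polynomial K))) (Polynomial.C (Polynomial.C (Polynomial.C κ)) * Polynomial.X)
      · simp [tow, untow])
    (by
      apply MvPolynomial.ringHom_ext
      · intro a; simp [tow, untow, algMap3]
      · intro i; fin_cases i <;> simp [tow, untow])

lemma towE_apply (κ : K) (f) : towE κ f = tow κ f := rfl

lemma tow_deg (κ : K) (f : MvPolynomial (Fin 3) K) :
    (tow κ f).natDegree ≤ f.totalDegree ∧ ∀ j, ((tow κ f).coeff j).natDegree ≤ f.totalDegree := by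
  refine filt (A := Polynomial (Polynomial (Polynomial K))) (tow κ) (fun d a => a.natDegree ≤ d ∧ ∀ j, (a.coeff j).natDegree ≤ d) ?_ ?_ ?_ ?_ ?_ f
  · intro a
    rw [algMap3]
    refine ⟨by simp, fun j => ?_⟩
    rw [Polynomial.coeff_C]; split_ifs <;> simp
  · intro i
    fin_cases i
    · simp only [tow, Fin.zero_eta, aeval_X, Matrix.cons_val_zero]
      refine ⟨by compute_degree, fun j => ?_⟩
      rw [Polynomial.coeff_add, Polynomial.coeff_C_mul, Polynomial.coeff_C, Polynomial.coeff_X]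
      split_ifs <;> simp
    · simp only [tow, Fin.mk_one, aeval_X, Matrix.cons_val_one, Matrix.cons_val_zero]
      refine ⟨by compute_degree, fun j => ?_⟩
      rw [Polynomial.coeff_X]
      split_ifs <;> simp
    · simp only [tow, Fin.reduceFinMk, aeval_X, Matrix.cons_val]
      refine ⟨by simp, fun j => ?_⟩
      rw [Polynomial.coeff_C]
      split_ifs <;> simp
  · intro d a b ha hb
    refine ⟨Polynomial.natDegree_add_le_of_degree_le ha.1 hb.1, fun j => ?_⟩
    rw [Polynomial.coeff_add]
    exact Polynomial.natDegree_add_le_of_degree_le (ha.2 j) (hb.2 j)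
  · intro d e a b ha hb
    refine ⟨Polynomial.natDegree_mul_le_of_le ha.1 hb.1, fun j => ?_⟩
    rw [Polynomial.coeff_mul]
    refine Polynomial.natDegree_sum_le_of_forall_le _ _ fun x _ => ?_
    exact Polynomial.natDegree_mul_le_of_le (ha.2 _) (hb.2 _)
  · intro d e a h1 h2; exact ⟨h2.1.trans h1, fun j => (h2.2 j).trans h1⟩

end
end GE

namespace GE
open MvPolynomial
section
variable {K : Type*} [Field K]

lemma det_natDegree_le {R : Type*} [CommRing R] {n : ℕ} (M : Matrix (Fin n) (Fin n) (Polynomial R))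
    (w : Fin n → ℕ) (h : ∀ i j, (M i j).natDegree ≤ w j) :
    M.det.natDegree ≤ ∑ j, w j := by
  rw [Matrix.det_apply]
  refine Polynomial.natDegree_sum_le_of_forall_le _ _ fun σ _ => ?_
  refine (Polynomial.natDegree_smul_le _ _).trans ?_
  refine (Polynomial.natDegree_prod_le _ _).trans ?_
  exact Finset.sum_le_sum fun j _ => h _ _

lemma resultant_natDegree_le {R : Type*} [CommRing R] (F G : Polynomial (Polynomial R)) (m n d e : ℕ)
    (hF : ∀ j, (F.coeff j).natDegree ≤ d) (hG : ∀ j, (G.coeff j).natDegree ≤ e) :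
    (Polynomial.resultant F G m n).natDegree ≤ m * e + n * d := by
  rw [Polynomial.resultant]
  refine (det_natDegree_le _ (fun j => Fin.addCases (fun _ => e) (fun _ => d) j) ?_).trans ?_
  · intro i j
    rw [Polynomial.sylvester, Matrix.of_apply]
    refine Fin.addCases (fun j => ?_) (fun j => ?_) j
    · simp only [Fin.addCases_left]
      split_ifs
      · exact hG _
      · simp
    · simp only [Fin.addCases_right]
      split_ifs
      · exact hF _
      · simp
  · rw [Fin.sum_univ_add]
    simp

/-- Evaluate the tower along a null line. -/
noncomputable def evt (κ : K) (l : K × K × K) :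
    Polynomial (Polynomial (Polynomial K)) →+* Polynomial K :=
  Polynomial.eval₂RingHom (Polynomial.evalRingHom
    (Polynomial.C (l.2.1 - κ * l.2.2) + Polynomial.C (l.1 - κ * l.1 ^ 2) * Polynomial.X))
    (Polynomial.C l.2.2 + Polynomial.C (l.1 ^ 2) * Polynomial.X)

lemma evt_tow (κ : K) (l : K × K × K) (f : MvPolynomial (Fin 3) K) :
    evt κ l (tow κ f) = res l f := by
  have : (evt κ l).comp (tow κ).toRingHom = (res l).toRingHom := by
    apply MvPolynomial.ringHom_ext
    · intro a; simp [tow, evt, res, algMap3]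
    · intro i; fin_cases i
      · simp [tow, evt, res]; ring
      · simp [tow, evt, res]
      · simp [tow, evt, res]
  exact DFunLike.congr_fun this f

lemma count_roots (κ : K) (L : Finset (K × K × K))
    (hκ : ∀ l ∈ L, ∀ m ∈ L, l.2.1 - κ * l.2.2 = m.2.1 - κ * m.2.2 →
      l.1 - κ * l.1 ^ 2 = m.1 - κ * m.1 ^ 2 → l = m)
    (h : Polynomial (Polynomial K)) (h0 : h ≠ 0)
    (hL : ∀ l ∈ L, evt κ l (Polynomial.C h) = 0) : L.card ≤ h.natDegree := by
  classical
  let r : K × K × K → Polynomial K := fun l =>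
    Polynomial.C (l.2.1 - κ * l.2.2) + Polynomial.C (l.1 - κ * l.1 ^ 2) * Polynomial.X
  have hinj : Set.InjOn r L := by
    intro l hl m hm hlm
    have h1 := congrArg (fun q => Polynomial.coeff q 0) hlm
    have h2 := congrArg (fun q => Polynomial.coeff q 1) hlm
    simp only [r, Polynomial.coeff_add, Polynomial.coeff_C, Polynomial.coeff_C_mul,
      Polynomial.coeff_X] at h1 h2
    simp at h1 h2
    exact hκ l hl m hm h1 h2
  rw [← Finset.card_image_of_injOn hinj]
  refine le_trans ?_ (Polynomial.card_roots' h)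
  refine (Finset.card_le_card (t := h.roots.toFinset) ?_).trans (Multiset.toFinset_card_le _)
  intro x hx
  obtain ⟨l, hl, rfl⟩ := Finset.mem_image.1 hx
  rw [Multiset.mem_toFinset, Polynomial.mem_roots h0]
  have := hL l hl
  simpa [evt, Polynomial.IsRoot, r] using this

theorem bezout [Infinite K] (f g : MvPolynomial (Fin 3) K) (hf : Irreducible f) (hfg : ¬ f ∣ g)
    (L : Finset (K × K × K)) (h1 : ∀ l ∈ L, res l f = 0) (h2 : ∀ l ∈ L, res l g = 0) :
    L.card ≤ f.totalDegree * (2 * g.totalDegree + 1) := by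
  classical
  obtain ⟨κ, hκ⟩ := exists_kappa L
  set F := tow κ f with hF
  set G := tow κ g with hG
  have hFirr : Irreducible F := (MulEquiv.irreducible_iff (towE κ)).2 hf
  have hFG : ¬ F ∣ G := by
    intro h
    exact hfg ((map_dvd_iff (towE κ)).1 h)
  obtain ⟨hFd, hFc⟩ := tow_deg κ f
  obtain ⟨hGd, hGc⟩ := tow_deg κ g
  by_cases hdeg : F.natDegree = 0
  · have hFC := Polynomial.eq_C_of_natDegree_eq_zero hdeg
    refine (count_roots κ L hκ (F.coeff 0) ?_ ?_).trans ((hFc 0).trans ?_)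
    · intro h0
      rw [h0, Polynomial.C_0] at hFC
      exact hFirr.ne_zero hFC
    · intro l hl
      rw [← hFC, evt_tow, h1 l hl]
    · nlinarith [Nat.zero_le (f.totalDegree * g.totalDegree)]
  · refine (count_roots κ L hκ (Polynomial.resultant F G) ?_ ?_).trans
      ((resultant_natDegree_le F G _ _ _ _ hFc hGc).trans ?_)
    · have hprim : F.IsPrimitive := hFirr.isPrimitive hdeg
      let Q := FractionRing (Polynomial (Polynomial K))
      let φ := algebraMap (Polynomial (Polynomial K)) Q
      have hφ : Function.Injective φ := IsFractionRing.injective _ _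
      intro h0
      letI : NormalizedGCDMonoid (Polynomial (Polynomial K)) :=
        Classical.choice inferInstance
      have hFi : Irreducible (F.map φ) :=
        (hprim.irreducible_iff_irreducible_map_fraction_map (K := Q)).1 hFirr
      have hcop : IsCoprime (F.map φ) (G.map φ) := by
        refine (hFi.coprime_iff_not_dvd).2 ?_
        intro h
        exact hFG (hprim.dvd_of_fraction_map_dvd_fraction_map (K := Q) h)
      have h3 := Polynomial.resultant_map_map F G F.natDegree G.natDegree φ
      rw [h0, map_zero] at h3
      have h4 : Polynomial.resultant (F.map φ) (G.map φ) = 0 := by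
        rw [Polynomial.natDegree_map_eq_of_injective hφ, Polynomial.natDegree_map_eq_of_injective hφ]
        exact h3
      exact (Polynomial.resultant_eq_zero_iff.1 h4).2 hcop
    · intro l hl
      obtain ⟨a, b, -, -, hab⟩ := Polynomial.exists_mul_add_mul_eq_C_resultant F G le_rfl le_rfl (Or.inl hdeg)
      rw [← hab, map_add, map_mul, map_mul, evt_tow, evt_tow, h1 l hl, h2 l hl]
      simp
    · nlinarith [Nat.mul_le_mul hFd (le_refl g.totalDegree), Nat.mul_le_mul hGd (le_refl f.totalDegree)]

end
end GE

namespace GE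
open MvPolynomial
section
variable {K : Type*} [Field K]

lemma exists_poly (L : Finset (K × K × K)) (m : ℕ) (hm : 3 * L.card < m ^ 2) :
    ∃ f : MvPolynomial (Fin 3) K, f ≠ 0 ∧ f.totalDegree ≤ 3 * m ∧ ∀ l ∈ L, res l f = 0 := by
  classical
  have hm0 : 0 < m := by
    rcases Nat.eq_zero_or_pos m with h | h
    · subst h; simp at hm
    · exact h
  let ex : (Fin 3 → Fin m) → (Fin 3 →₀ ℕ) := fun e =>
    Finsupp.equivFunOnFinite.symm (fun i => (e i : ℕ))
  have exinj : Function.Injective ex := by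
    intro a b h
    have := Finsupp.equivFunOnFinite.symm.injective h
    funext i
    exact Fin.ext (congrFun this i)
  let T : ((Fin 3 → Fin m) → K) →ₗ[K] MvPolynomial (Fin 3) K :=
    ∑ e, (monomial (ex e)).comp (LinearMap.proj e)
  have Tapp : ∀ v, T v = ∑ e, monomial (ex e) (v e) := by
    intro v; simp [T]
  have Tcoeff : ∀ v e, coeff (ex e) (T v) = v e := by
    intro v e
    rw [Tapp, coeff_sum, Finset.sum_eq_single e]
    · simp
    · intro b _ hb
      rw [coeff_monomial, if_neg]
      exact fun h => hb (exinj h)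
    · simp
  have Tdeg : ∀ v, (T v).totalDegree < 3 * m := by
    intro v
    rw [Tapp]
    refine lt_of_le_of_lt (totalDegree_finsetSum_le (d := 3 * (m - 1)) fun e _ => ?_) (by omega)
    refine (totalDegree_monomial_le _ _).trans ?_
    rw [Finsupp.sum_fintype _ _ (by simp), Fin.sum_univ_three]
    have h0 := (e 0).2
    have h1 := (e 1).2
    have h2 := (e 2).2
    simp only [ex, Finsupp.equivFunOnFinite_symm_apply_apply, id]
    omega
  let U : ((Fin 3 → Fin m) → K) →ₗ[K] (L × Fin (3 * m) → K) :=
    LinearMap.pi fun q => (Polynomial.lcoeff K (q.2 : ℕ)).comp ((res q.1.1).toLinearMap.comp T)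
  have hU : LinearMap.ker U ≠ ⊥ := by
    apply LinearMap.ker_ne_bot_of_finrank_lt
    simp only [Module.finrank_fintype_fun_eq_card, Fintype.card_prod, Fintype.card_fin,
      Fintype.card_coe, Fintype.card_fun]
    nlinarith
  obtain ⟨v, hv, hv0⟩ := (Submodule.ne_bot_iff _).1 hU
  refine ⟨T v, ?_, (Tdeg v).le, ?_⟩
  · intro h
    apply hv0
    funext e
    rw [← Tcoeff v e, h]; simp
  · intro l hl
    ext j
    by_cases hj : j < 3 * m
    · have := congrFun (LinearMap.mem_ker.1 hv) (⟨l, hl⟩, ⟨j, hj⟩)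
      simpa [U] using this
    · rw [Polynomial.coeff_eq_zero_of_natDegree_lt]
      · simp
      · have := natDegree_res l (T v)
        have := Tdeg v
        omega

lemma exists_factor [DecidableEq K] (L : Finset (K × K × K)) (M : ℕ) (P : MvPolynomial (Fin 3) K) (hP : P ≠ 0)
    (h : M * P.totalDegree < (L.filter fun l => res l P = 0).card) :
    ∃ f, Irreducible f ∧ f ∣ P ∧ M * f.totalDegree < (L.filter fun l => res l f = 0).card := by
  classical
  by_contra hcon
  push Not at hcon
  have key : ∀ Q : MvPolynomial (Fin 3) K, Q ≠ 0 → Q ∣ P →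
      (L.filter fun l => res l Q = 0).card ≤ M * Q.totalDegree := by
    intro Q
    induction Q using WfDvdMonoid.induction_on_irreducible with
    | zero => intro h; exact absurd rfl h
    | unit u hu =>
      intro _ _
      have : (L.filter fun l => res l u = 0) = ∅ := by
        apply Finset.filter_false_of_mem
        intro l _
        exact ((hu.map (res l)).ne_zero)
      rw [this]; simp
    | mul a i ha hi ih =>
      intro _ hd
      have h1 := ih ha (dvd_of_mul_left_dvd hd)
      have h2 := hcon i hi (dvd_of_mul_right_dvd hd)
      rw [totalDegree_mul_of_isDomain hi.ne_zero ha]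
      refine (Finset.card_le_card (t := (L.filter fun l => res l i = 0) ∪ (L.filter fun l => res l a = 0)) ?_).trans
        ((Finset.card_union_le _ _).trans ?_)
      · intro l hl
        simp only [Finset.mem_filter, Finset.mem_union, map_mul, mul_eq_zero] at hl ⊢
        tauto
      · rw [mul_add]; omega
  exact absurd (key P hP dvd_rfl) (not_le.2 h)

lemma totalDegree_le_of_dvd' {f P : MvPolynomial (Fin 3) K} (h : f ∣ P) (hP : P ≠ 0) :
    f.totalDegree ≤ P.totalDegree := by
  obtain ⟨g, rfl⟩ := h
  rw [totalDegree_mul_of_isDomain (left_ne_zero_of_mul hP) (right_ne_zero_of_mul hP)]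
  omega

lemma pderiv_coeff (i : Fin 3) (f : MvPolynomial (Fin 3) K) (m : Fin 3 →₀ ℕ) :
    coeff m (pderiv i f) = coeff (m + Finsupp.single i 1) f * ((m i : K) + 1) := by
  exact coeff_pderiv f m

lemma pderiv_deg (i : Fin 3) (f : MvPolynomial (Fin 3) K) :
    (pderiv i f).totalDegree ≤ f.totalDegree - 1 := by
  rw [totalDegree]
  apply Finset.sup_le
  intro m hm
  rw [mem_support_iff, pderiv_coeff] at hm
  have : m + Finsupp.single i 1 ∈ f.support := mem_support_iff.2 (left_ne_zero_of_mul hm)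
  have h := le_totalDegree this
  apply Nat.le_sub_one_of_lt
  refine lt_of_lt_of_le ?_ h
  rw [Finsupp.sum_fintype _ _ (by simp), Finsupp.sum_fintype _ _ (by simp)]
  simp [Finset.sum_add_distrib, Finsupp.single_apply]

lemma const_of_pderiv (p : ℕ) [Fact p.Prime] [CharP K p] (f : MvPolynomial (Fin 3) K)
    (hd : f.totalDegree < p) (h : ∀ i, pderiv i f = 0) : f.totalDegree = 0 := by
  by_contra hne
  have h0 : f ≠ 0 := by rintro rfl; simp at hne
  obtain ⟨m, hm, i, hi⟩ : ∃ m ∈ f.support, ∃ i, m i ≠ 0 := by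
    by_contra hcon
    push Not at hcon
    apply hne
    apply Nat.le_zero.1
    rw [totalDegree]
    apply Finset.sup_le
    intro m hm
    rw [Finsupp.sum_fintype _ _ (by simp)]
    simp [hcon m hm]
  have h1 := pderiv_coeff i f (m - Finsupp.single i 1)
  have h2 : m - Finsupp.single i 1 + Finsupp.single i 1 = m :=
    tsub_add_cancel_of_le (by simpa using Nat.one_le_iff_ne_zero.2 hi)
  rw [h2, h i, coeff_zero] at h1
  rcases mul_eq_zero.1 h1.symm with h3 | h3
  · exact (mem_support_iff.1 hm) h3
  · have h4 : ((m i : ℕ) : K) = 0 := by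
      have : m i = (m - Finsupp.single i 1 : Fin 3 →₀ ℕ) i + 1 := by
        simp; omega
      rw [this]; push_cast; exact h3
    rw [CharP.cast_eq_zero_iff K p] at h4
    have h5 := Nat.le_of_dvd (Nat.pos_of_ne_zero hi) h4
    have h6 := le_totalDegree hm
    rw [Finsupp.sum_fintype _ _ (by simp)] at h6
    have h7 := Finset.single_le_sum (f := fun j => m j) (fun j _ => Nat.zero_le _) (Finset.mem_univ i)
    omega

lemma ode (p : ℕ) [Fact p.Prime] [CharP K p] (φ ρ M N : Polynomial K) (s : K)
    (hd : φ.natDegree < p)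
    (h : ρ * Polynomial.derivative (Polynomial.derivative φ) = M * Polynomial.derivative φ + N * φ)
    (hρ : ρ.eval s ≠ 0) (h0 : φ.eval s = 0) (h1 : (Polynomial.derivative φ).eval s = 0) : φ = 0 := by
  by_contra hne
  obtain ⟨ψ, hψ, hnd⟩ := Polynomial.exists_eq_pow_rootMultiplicity_mul_and_not_dvd φ hne s
  have hk2 : 1 < φ.rootMultiplicity s :=
    (Polynomial.one_lt_rootMultiplicity_iff_isRoot hne).2 ⟨h0, h1⟩
  have hkd : φ.rootMultiplicity s < p := lt_of_le_of_lt (by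
    have h9 := Polynomial.natDegree_le_of_dvd (Polynomial.pow_rootMultiplicity_dvd φ s) hne
    simpa using h9) hd
  obtain ⟨k, hk⟩ : ∃ k, φ.rootMultiplicity s = k + 2 := ⟨_, (Nat.sub_add_cancel hk2).symm⟩
  rw [hk] at hψ hkd
  set Y : Polynomial K := Polynomial.X - Polynomial.C s with hY
  have hY0 : Y ≠ 0 := Polynomial.X_sub_C_ne_zero s
  have dY : Polynomial.derivative Y = 1 := by simp [hY]
  have d1 : Polynomial.derivative φ = Y ^ (k + 1) * (((k : Polynomial K) + 2) * ψ + Y * Polynomial.derivative ψ) := by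
    rw [hψ, Polynomial.derivative_mul, Polynomial.derivative_pow, dY]
    push_cast; simp only [Nat.add_sub_cancel, map_add, map_natCast, map_ofNat]
    ring
  set χ := ((k : Polynomial K) + 2) * ψ + Y * Polynomial.derivative ψ with hχ
  have d2 : Polynomial.derivative (Polynomial.derivative φ) = Y ^ k * (((k : Polynomial K) + 1) * χ + Y * Polynomial.derivative χ) := by
    rw [d1, Polynomial.derivative_mul, Polynomial.derivative_pow, dY]
    push_cast; simp only [Nat.add_sub_cancel, map_add, map_natCast, map_one]
    ring
  rw [d2, d1, hψ] at h
  have h3 : ρ * (((k : Polynomial K) + 1) * χ + Y * Polynomial.derivative χ) = Y * (M * χ + N * Y * ψ) := by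
    apply mul_left_cancel₀ (pow_ne_zero k hY0)
    linear_combination h
  have h4 := congrArg (Polynomial.eval s) h3
  simp [hχ, hY] at h4
  have c1 : (k : K) + 2 ≠ 0 := by
    intro hc
    have : ((k + 2 : ℕ) : K) = 0 := by push_cast; exact hc
    rw [CharP.cast_eq_zero_iff K p] at this
    have := Nat.le_of_dvd (by omega) this
    omega
  have c2 : (k : K) + 1 ≠ 0 := by
    intro hc
    have : ((k + 1 : ℕ) : K) = 0 := by push_cast; exact hc
    rw [CharP.cast_eq_zero_iff K p] at this
    have := Nat.le_of_dvd (by omega) this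
    omega
  have c3 : ψ.eval s ≠ 0 := fun hc => hnd (Polynomial.dvd_iff_isRoot.2 hc)
  tauto

end
end GE

namespace GE
open MvPolynomial
section
variable {K : Type*} [Field K]

/-- coefficients of the second derivative along a null line of slope `u` -/
noncomputable def q4 (f : MvPolynomial (Fin 3) K) := pderiv 1 (pderiv 1 f)
noncomputable def q3 (f : MvPolynomial (Fin 3) K) := pderiv 0 (pderiv 1 f) + pderiv 1 (pderiv 0 f)
noncomputable def q2 (f : MvPolynomial (Fin 3) K) :=
  pderiv 0 (pderiv 0 f) + pderiv 1 (pderiv 2 f) + pderiv 2 (pderiv 1 f)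
noncomputable def q1 (f : MvPolynomial (Fin 3) K) := pderiv 0 (pderiv 2 f) + pderiv 2 (pderiv 0 f)
noncomputable def q0 (f : MvPolynomial (Fin 3) K) := pderiv 2 (pderiv 2 f)

noncomputable def m1 (f : MvPolynomial (Fin 3) K) :=
  pderiv 1 f * (pderiv 1 f * q3 f - pderiv 0 f * q4 f)
noncomputable def m0 (f : MvPolynomial (Fin 3) K) :=
  pderiv 1 f * (pderiv 1 f * q2 f - pderiv 0 f * q3 f) +
    (pderiv 0 f * pderiv 0 f - pderiv 2 f * pderiv 1 f) * q4 f
noncomputable def r1 (f : MvPolynomial (Fin 3) K) :=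
  pderiv 1 f * (pderiv 1 f * (pderiv 1 f * q1 f)) - (pderiv 0 f * m0 f + pderiv 2 f * m1 f)
noncomputable def r0 (f : MvPolynomial (Fin 3) K) :=
  pderiv 1 f * (pderiv 1 f * (pderiv 1 f * q0 f)) - pderiv 2 f * m0 f

lemma deriv2_res (l : K × K × K) (f : MvPolynomial (Fin 3) K) :
    Polynomial.derivative (Polynomial.derivative (res l f)) =
      Polynomial.C l.1 ^ 4 * res l (q4 f) + Polynomial.C l.1 ^ 3 * res l (q3 f) +
      Polynomial.C l.1 ^ 2 * res l (q2 f) + Polynomial.C l.1 * res l (q1 f) + res l (q0 f) := by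
  rw [derivative_res]
  simp only [map_add, Polynomial.derivative_mul, Polynomial.derivative_C, derivative_res, q4, q3, q2, q1, q0]
  simp only [map_pow]
  ring

lemma ode_res (l : K × K × K) (f : MvPolynomial (Fin 3) K) :
    res l (pderiv 1 f) ^ 3 * Polynomial.derivative (Polynomial.derivative (res l f)) =
      (Polynomial.C l.1 ^ 2 * res l (pderiv 1 f) ^ 2 * res l (q4 f) + Polynomial.C l.1 * res l (m1 f) +
        res l (m0 f)) * Polynomial.derivative (res l f) +
      (Polynomial.C l.1 * res l (r1 f) + res l (r0 f)) := by
  rw [deriv2_res, derivative_res]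
  simp only [r1, r0, m1, m0, map_add, map_mul, map_sub, map_pow]
  ring

lemma deg_sub_le' {a b : MvPolynomial (Fin 3) K} {d : ℕ} (ha : a.totalDegree ≤ d) (hb : b.totalDegree ≤ d) :
    (a - b).totalDegree ≤ d := (totalDegree_sub _ _).trans (max_le ha hb)
lemma deg_add_le' {a b : MvPolynomial (Fin 3) K} {d : ℕ} (ha : a.totalDegree ≤ d) (hb : b.totalDegree ≤ d) :
    (a + b).totalDegree ≤ d := (totalDegree_add _ _).trans (max_le ha hb)
lemma deg_mul_le' {a b : MvPolynomial (Fin 3) K} {d e : ℕ} (ha : a.totalDegree ≤ d) (hb : b.totalDegree ≤ e) :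
    (a * b).totalDegree ≤ d + e := (totalDegree_mul _ _).trans (add_le_add ha hb)

lemma pderiv_deg' (i : Fin 3) (f : MvPolynomial (Fin 3) K) {d : ℕ} (h : f.totalDegree ≤ d) :
    (pderiv i f).totalDegree ≤ d := (pderiv_deg i f).trans ((Nat.sub_le _ _).trans h)

lemma deg_r (f : MvPolynomial (Fin 3) K) {d : ℕ} (h : f.totalDegree ≤ d) :
    (r1 f).totalDegree ≤ d + (d + (d + d)) ∧ (r0 f).totalDegree ≤ d + (d + (d + d)) := by
  have hl : ∀ i, (pderiv i f).totalDegree ≤ d := fun i => pderiv_deg' i f h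
  have hq : ∀ i j, (pderiv i (pderiv j f)).totalDegree ≤ d := fun i j => pderiv_deg' i _ (hl j)
  have h4 : (q4 f).totalDegree ≤ d := hq _ _
  have h3 : (q3 f).totalDegree ≤ d := deg_add_le' (hq _ _) (hq _ _)
  have h2 : (q2 f).totalDegree ≤ d := deg_add_le' (deg_add_le' (hq _ _) (hq _ _)) (hq _ _)
  have h1 : (q1 f).totalDegree ≤ d := deg_add_le' (hq _ _) (hq _ _)
  have h0 : (q0 f).totalDegree ≤ d := hq _ _
  have hm1 : (m1 f).totalDegree ≤ d + (d + d) :=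
    deg_mul_le' (hl _) (deg_sub_le' (deg_mul_le' (hl _) h3) (deg_mul_le' (hl _) h4))
  have hm0 : (m0 f).totalDegree ≤ d + (d + d) := by
    refine deg_add_le' (deg_mul_le' (hl _) (deg_sub_le' (deg_mul_le' (hl _) h2) (deg_mul_le' (hl _) h3))) ?_
    rw [← add_assoc]
    exact deg_mul_le' (deg_sub_le' (deg_mul_le' (hl _) (hl _)) (deg_mul_le' (hl _) (hl _))) h4
  exact ⟨deg_sub_le' (deg_mul_le' (hl _) (deg_mul_le' (hl _) (deg_mul_le' (hl _) h1)))
      (deg_add_le' (deg_mul_le' (hl _) hm0) (deg_mul_le' (hl _) hm1)),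
    deg_sub_le' (deg_mul_le' (hl _) (deg_mul_le' (hl _) (deg_mul_le' (hl _) h0)))
      (deg_mul_le' (hl _) hm0)⟩

/-- tangency equations at a point of a line in the zero set -/
lemma tang (l : K × K × K) (f : MvPolynomial (Fin 3) K) (h : res l f = 0) (s : K) :
    l.1 * eval (pt l s) (pderiv 0 f) + l.1 ^ 2 * eval (pt l s) (pderiv 1 f) + eval (pt l s) (pderiv 2 f) = 0 := by
  have h1 := derivative_res l f
  rw [h] at h1
  have h2 := congrArg (Polynomial.eval s) h1
  simpa [eval_res] using h2.symm

lemma tang2 (l : K × K × K) (f : MvPolynomial (Fin 3) K) (h : res l f = 0) (s : K) :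
    l.1 * eval (pt l s) (r1 f) + eval (pt l s) (r0 f) = 0 := by
  have h1 := ode_res l f
  rw [h] at h1
  have h2 := congrArg (Polynomial.eval s) h1
  simpa [eval_res] using h2.symm

lemma two_roots {u v a b : K} (huv : u ≠ v) (h1 : u * a + b = 0) (h2 : v * a + b = 0) : a = 0 ∧ b = 0 := by
  have : (u - v) * a = 0 := by linear_combination h1 - h2
  have ha : a = 0 := (mul_eq_zero.1 this).resolve_left (sub_ne_zero.2 huv)
  subst ha
  exact ⟨rfl, by simpa using h1⟩

/-- points where two null lines in `Z(f)` cross -/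
def crossing (f : MvPolynomial (Fin 3) K) (l : K × K × K) (x : K) : Prop :=
  ∃ l' : K × K × K, res l' f = 0 ∧ pt l' x = pt l x ∧ l'.1 ≠ l.1

lemma crossing_r (f : MvPolynomial (Fin 3) K) (l : K × K × K) (x : K) (h : res l f = 0)
    (hc : crossing f l x) : (res l (r1 f)).eval x = 0 ∧ (res l (r0 f)).eval x = 0 := by
  obtain ⟨l', h', hp, hne⟩ := hc
  rw [eval_res, eval_res]
  have h2 := tang2 l' f h' x
  rw [hp] at h2
  exact two_roots hne h2 (tang2 l f h x)

lemma crossing_l (f : MvPolynomial (Fin 3) K) (l : K × K × K) (x : K) (h : res l f = 0)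
    (hc : crossing f l x) (hy : (res l (pderiv 1 f)).eval x = 0) :
    (res l (pderiv 0 f)).eval x = 0 ∧ (res l (pderiv 2 f)).eval x = 0 := by
  obtain ⟨l', h', hp, hne⟩ := hc
  rw [eval_res] at *
  rw [eval_res]
  have h2 := tang l' f h' x
  have h1 := tang l f h x
  rw [hp] at h2
  rw [hy] at h1 h2
  exact two_roots hne (by linear_combination h2) (by linear_combination h1)

/-- second slope: at a crossing, the sum of slopes is determined -/
lemma crossing_n (f : MvPolynomial (Fin 3) K) (l : K × K × K) (x : K) (h : res l f = 0)
    (hc : crossing f l x) (hy : (res l (pderiv 1 f)).eval x ≠ 0) :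
    (res l (pderiv 0 f) + Polynomial.C (2 * l.1) * res l (pderiv 1 f)).eval x ≠ 0 := by
  obtain ⟨l', h', hp, hne⟩ := hc
  simp only [Polynomial.eval_add, Polynomial.eval_mul, Polynomial.eval_C]
  rw [eval_res] at *
  rw [eval_res]
  have h2 := tang l' f h' x
  have h1 := tang l f h x
  rw [hp] at h2
  intro h0
  have h3 : (l'.1 - l.1) * ((l'.1 - l.1) * eval (pt l x) (pderiv 1 f)) = 0 := by
    linear_combination h2 - h1 - (l'.1 - l.1) * h0
  have h4 := sub_ne_zero.2 hne
  rcases mul_eq_zero.1 h3 with h5 | h5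
  · exact h4 h5
  · rcases mul_eq_zero.1 h5 with h5 | h5
    · exact h4 h5
    · exact hy h5

lemma line_in (p : ℕ) [Fact p.Prime] [CharP K p] (f : MvPolynomial (Fin 3) K) (hd : f.totalDegree < p)
    (h1 : f ∣ r1 f) (h0 : f ∣ r0 f) (l : K × K × K) (s : K) (hP : eval (pt l s) f = 0)
    (hL : l.1 * eval (pt l s) (pderiv 0 f) + l.1 ^ 2 * eval (pt l s) (pderiv 1 f) + eval (pt l s) (pderiv 2 f) = 0)
    (hy : eval (pt l s) (pderiv 1 f) ≠ 0) : res l f = 0 := by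
  obtain ⟨g1, hg1⟩ := h1
  obtain ⟨g0, hg0⟩ := h0
  refine ode p (res l f) (res l (pderiv 1 f) ^ 3)
    (Polynomial.C l.1 ^ 2 * res l (pderiv 1 f) ^ 2 * res l (q4 f) + Polynomial.C l.1 * res l (m1 f) +
        res l (m0 f)) (Polynomial.C l.1 * res l g1 + res l g0) s
    (lt_of_le_of_lt (natDegree_res l f) hd) ((ode_res l f).trans ?_) ?_ ?_ ?_
  · rw [add_right_inj]
    have e1 : res l (r1 f) = res l f * res l g1 := by rw [← map_mul, ← hg1]
    have e0 : res l (r0 f) = res l f * res l g0 := by rw [← map_mul, ← hg0]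
    rw [e1, e0]
    ring
  · rw [Polynomial.eval_pow, eval_res]; exact pow_ne_zero _ hy
  · rw [eval_res]; exact hP
  · rw [derivative_res]
    simpa [eval_res] using hL

lemma irr_deg_pos (f : MvPolynomial (Fin 3) K) (hf : Irreducible f) : 0 < f.totalDegree := by
  rw [Nat.pos_iff_ne_zero]
  intro h
  rw [totalDegree_eq_zero_iff_eq_C] at h
  have h0 : coeff 0 f ≠ 0 := by
    intro h1
    rw [h1, C_0] at h
    exact hf.ne_zero h
  apply hf.not_isUnit
  rw [h]
  exact (isUnit_iff_ne_zero.2 h0).map C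

theorem core1 [Infinite K] (p : ℕ) [Fact p.Prime] [CharP K p] (f : MvPolynomial (Fin 3) K)
    (hf : Irreducible f) (hd : f.totalDegree < p) (R : Finset (K × K × K))
    (hR : ∀ l ∈ R, res l f = 0)
    (hrich : ∀ l ∈ R, ∃ s : Finset K, 4 * f.totalDegree < s.card ∧ ∀ x ∈ s, crossing f l x)
    (hcard : 12 * f.totalDegree ^ 2 < R.card) :
    f ∣ r1 f ∧ f ∣ r0 f ∧ ∃ l ∈ R, res l (pderiv 1 f) ≠ 0 := by
  have he := irr_deg_pos f hf
  obtain ⟨d1, d0⟩ := deg_r f le_rfl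
  have hdiv : ∀ g : MvPolynomial (Fin 3) K, g.totalDegree ≤ 4 * f.totalDegree →
      (∀ l ∈ R, res l g = 0) → f ∣ g := by
    intro g hg h
    by_contra hn
    have := bezout f g hf hn R hR h
    nlinarith
  have hsm : ∀ i, f ∣ pderiv i f → pderiv i f = 0 := by
    intro i h
    by_contra hne
    have h1 := totalDegree_le_of_dvd' h hne
    have h2 := pderiv_deg i f
    omega
  refine ⟨hdiv _ (by omega) fun l hl => ?_, hdiv _ (by omega) fun l hl => ?_, ?_⟩
  · obtain ⟨s, hs, hc⟩ := hrich l hl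
    exact res_eq_zero_of_card l _ s (fun x hx => (crossing_r f l x (hR l hl) (hc x hx)).1) (by omega)
  · obtain ⟨s, hs, hc⟩ := hrich l hl
    exact res_eq_zero_of_card l _ s (fun x hx => (crossing_r f l x (hR l hl) (hc x hx)).2) (by omega)
  · by_contra hcon
    push Not at hcon
    have hdeg : ∀ i, (pderiv i f).totalDegree ≤ f.totalDegree := fun i => pderiv_deg' i f le_rfl
    have h1 : pderiv 1 f = 0 := hsm 1 (hdiv _ (by have := hdeg 1; omega) hcon)
    have h0 : pderiv 0 f = 0 := by
      refine hsm 0 (hdiv _ (by have := hdeg 0; omega) fun l hl => ?_)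
      obtain ⟨s, hs, hc⟩ := hrich l hl
      exact res_eq_zero_of_card l _ s (fun x hx => (crossing_l f l x (hR l hl) (hc x hx)
        (by rw [hcon l hl]; simp)).1) (by have := hdeg 0; omega)
    have h2 : pderiv 2 f = 0 := by
      refine hsm 2 (hdiv _ (by have := hdeg 2; omega) fun l hl => ?_)
      obtain ⟨s, hs, hc⟩ := hrich l hl
      exact res_eq_zero_of_card l _ s (fun x hx => (crossing_l f l x (hR l hl) (hc x hx)
        (by rw [hcon l hl]; simp)).2) (by have := hdeg 2; omega)
    have := const_of_pderiv p f hd (by intro i; fin_cases i <;> assumption)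
    omega

end
end GE

namespace GE
open MvPolynomial
section
variable {K : Type*} [Field K]

/-- sphere polynomials -/
noncomputable def sph (v : Fin 5 → K) : MvPolynomial (Fin 3) K :=
  C (v 0) * (X 1 * X 2 - X 0 ^ 2) + C (v 1) * X 0 + C (v 2) * X 1 + C (v 3) * X 2 + C (v 4)

lemma eval_sph (v : Fin 5 → K) (x : Fin 3 → K) : eval x (sph v) =
    v 0 * (x 1 * x 2 - x 0 ^ 2) + v 1 * x 0 + v 2 * x 1 + v 3 * x 2 + v 4 := by
  simp [sph]

lemma sph_deg (v : Fin 5 → K) : (sph v).totalDegree ≤ 2 := by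
  have hX : ∀ i : Fin 3, (X i : MvPolynomial (Fin 3) K).totalDegree ≤ 1 := fun i => (totalDegree_X i).le
  have hC : ∀ (a : K) {g : MvPolynomial (Fin 3) K} {d : ℕ}, g.totalDegree ≤ d → (C a * g).totalDegree ≤ d := by
    intro a g d h
    have := deg_mul_le' (totalDegree_C (σ := Fin 3) a).le h
    simpa using this
  refine deg_add_le' (deg_add_le' (deg_add_le' (deg_add_le' (hC _ (deg_sub_le' (deg_mul_le' (hX _) (hX _)) ?_))
    ((hC _ (hX _)).trans (by norm_num))) ((hC _ (hX _)).trans (by norm_num))) ((hC _ (hX _)).trans (by norm_num)))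
    (by simp)
  rw [pow_two]; exact deg_mul_le' (hX _) (hX _)

/-- the restriction of a sphere to a null line is affine -/
lemma res_sph (v : Fin 5 → K) (l : K × K × K) : res l (sph v) =
    Polynomial.C (v 0 * (l.2.2 - 2 * l.1 * l.2.1) + v 1 * l.1 + v 2 * l.1 ^ 2 + v 3) * Polynomial.X +
      Polynomial.C (- v 0 * l.2.1 ^ 2 + v 1 * l.2.1 + v 2 * l.2.2 + v 4) := by
  simp only [sph, map_add, map_mul, map_sub, map_pow, res_X0, res_X1, res_X2, res_C, map_neg, map_ofNat]
  ring

lemma res_sph_zero_iff (v : Fin 5 → K) (l : K × K × K) : res l (sph v) = 0 ↔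
    v 0 * (l.2.2 - 2 * l.1 * l.2.1) + v 1 * l.1 + v 2 * l.1 ^ 2 + v 3 = 0 ∧
    - v 0 * l.2.1 ^ 2 + v 1 * l.2.1 + v 2 * l.2.2 + v 4 = 0 := by
  rw [res_sph]
  constructor
  · intro h
    have h0 := congrArg (fun q => Polynomial.coeff q 0) h
    have h1 := congrArg (fun q => Polynomial.coeff q 1) h
    simp only [Polynomial.coeff_add, Polynomial.coeff_C_mul, Polynomial.coeff_X, Polynomial.coeff_C] at h0 h1
    simp at h0 h1
    exact ⟨by linear_combination h1, by linear_combination h0⟩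
  · rintro ⟨h1, h2⟩
    rw [h1, h2]; simp

lemma res_sph_zero_of_two (v : Fin 5 → K) (l : K × K × K) (s t : K) (hst : s ≠ t)
    (h1 : eval (pt l s) (sph v) = 0) (h2 : eval (pt l t) (sph v) = 0) : res l (sph v) = 0 := by
  rw [← eval_res, res_sph] at h1 h2
  simp only [Polynomial.eval_add, Polynomial.eval_mul, Polynomial.eval_C, Polynomial.eval_X] at h1 h2
  rw [res_sph_zero_iff]
  exact two_roots hst (by linear_combination h1) (by linear_combination h2)

lemma exists_sphere (a b : K × K × K) : ∃ v : Fin 5 → K, v ≠ 0 ∧ res a (sph v) = 0 ∧ res b (sph v) = 0 := by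
  let E : K × K × K → Fin 2 → (Fin 5 → K) := fun l => ![![l.2.2 - 2 * l.1 * l.2.1, l.1, l.1 ^ 2, 1, 0],
    ![-l.2.1 ^ 2, l.2.1, l.2.2, 0, 1]]
  let M : Matrix (Fin 4) (Fin 5) K := Matrix.of ![E a 0, E a 1, E b 0, E b 1]
  have hU : LinearMap.ker (Matrix.mulVecLin M) ≠ ⊥ := by
    apply LinearMap.ker_ne_bot_of_finrank_lt
    simp
  obtain ⟨v, hv, hv0⟩ := (Submodule.ne_bot_iff _).1 hU
  refine ⟨v, hv0, ?_, ?_⟩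
  · rw [res_sph_zero_iff]
    have h := LinearMap.mem_ker.1 hv
    have h0 := congrFun h 0
    have h1 := congrFun h 1
    simp [M, E, Matrix.mulVec, dotProduct, Fin.sum_univ_five] at h0 h1
    exact ⟨by linear_combination h0, by linear_combination h1⟩
  · rw [res_sph_zero_iff]
    have h := LinearMap.mem_ker.1 hv
    have h0 := congrFun h 2
    have h1 := congrFun h 3
    simp [M, E, Matrix.mulVec, dotProduct, Fin.sum_univ_five] at h0 h1
    exact ⟨by linear_combination h0, by linear_combination h1⟩

lemma dvd_of_infinite [Infinite K] (f g : MvPolynomial (Fin 3) K) (hf : Irreducible f)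
    (T : Set (K × K × K)) (hT : T.Infinite) (h : ∀ l ∈ T, res l f = 0 ∧ res l g = 0) : f ∣ g := by
  by_contra hn
  obtain ⟨t, ht, hc⟩ := hT.exists_subset_card_eq (f.totalDegree * (2 * g.totalDegree + 1) + 1)
  have := bezout f g hf hn t (fun l hl => (h l (ht hl)).1) (fun l hl => (h l (ht hl)).2)
  omega

lemma inf_ne [Infinite K] (P : Polynomial K) (hP : P ≠ 0) : {s | P.eval s ≠ 0}.Infinite := by
  have := (Polynomial.finite_setOfPred_isRoot hP).infinite_compl
  exact this

/-- adapted coordinates for the line `a` -/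
noncomputable def xi (a : K × K × K) : Fin 5 → K := ![0, 1, 0, -a.1, -a.2.1]
noncomputable def up (a : K × K × K) : Fin 5 → K :=
  ![0, -2 * a.1, 1, a.1 ^ 2, 2 * a.1 * a.2.1 - a.2.2]

lemma xi_ne (a : K × K × K) : xi a ≠ 0 := fun h => by
  have := congrFun h 1
  simp [xi] at this
lemma up_ne (a : K × K × K) : up a ≠ 0 := fun h => by
  have := congrFun h 2
  simp [up] at this

lemma eval_xi (a : K × K × K) (x : Fin 3 → K) : eval x (sph (xi a)) = x 0 - a.2.1 - a.1 * x 2 := by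
  rw [eval_sph]; simp [xi]; ring
lemma eval_up (a : K × K × K) (x : Fin 3 → K) : eval x (sph (up a)) =
    x 1 - a.2.2 - a.1 ^ 2 * x 2 - 2 * a.1 * (x 0 - a.2.1 - a.1 * x 2) := by
  rw [eval_sph]; simp [up]; ring

noncomputable def GG (a : K × K × K) : MvPolynomial (Fin 3) K :=
  X 2 * sph (up a) - sph (xi a) ^ 2

/-- homogenization -/
noncomputable def hom (a : K × K × K) (m : ℕ) (q : Polynomial K) : MvPolynomial (Fin 3) K :=
  ∑ i ∈ Finset.range (m + 1), C (q.coeff i) * GG a ^ i * sph (up a) ^ (m - i)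

lemma eval_hom (a : K × K × K) (m : ℕ) (q : Polynomial K) (hq : q.natDegree ≤ m) (x : Fin 3 → K) (σ : K)
    (h : eval x (GG a) = σ * eval x (sph (up a))) :
    eval x (hom a m q) = eval x (sph (up a)) ^ m * q.eval σ := by
  rw [hom, Polynomial.eval_eq_sum_range' (Nat.lt_succ_of_le hq), map_sum, Finset.mul_sum]
  refine Finset.sum_congr rfl fun i hi => ?_
  have hi' : i ≤ m := Nat.lt_succ_iff.1 (Finset.mem_range.1 hi)
  simp only [map_mul, map_pow, eval_C, h]
  obtain ⟨j, rfl⟩ := Nat.exists_eq_add_of_le hi'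
  rw [Nat.add_sub_cancel_left]
  ring

/-- the line through `pt a s` with slope `a.1 + r` -/
def bl (a : K × K × K) (s r : K) : K × K × K :=
  (a.1 + r, a.2.1 - r * s, a.2.2 - (2 * a.1 * r + r ^ 2) * s)

lemma pt_bl (a : K × K × K) (s r : K) : pt (bl a s r) s = pt a s := by
  funext i
  fin_cases i
  · simp [pt, bl]; ring
  · simp [pt, bl]; ring
  · simp [pt]

lemma bl_xi (a : K × K × K) (s r z : K) : eval (pt (bl a s r) z) (sph (xi a)) = r * (z - s) := by
  rw [eval_xi]; simp [pt, bl]; ring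
lemma bl_up (a : K × K × K) (s r z : K) : eval (pt (bl a s r) z) (sph (up a)) = r ^ 2 * (z - s) := by
  rw [eval_up]; simp [pt, bl]; ring
lemma eval_GG (a : K × K × K) (x : Fin 3 → K) :
    eval x (GG a) = x 2 * eval x (sph (up a)) - eval x (sph (xi a)) ^ 2 := by
  simp [GG]

lemma pt_two (l : K × K × K) (s : K) : pt l s 2 = s := by simp [pt]

lemma pt_ext (a : K × K × K) (x y : Fin 3 → K) (h2 : x 2 = y 2)
    (hx : eval x (sph (xi a)) = eval y (sph (xi a))) (hu : eval x (sph (up a)) = eval y (sph (up a))) : x = y := by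
  rw [eval_xi, eval_xi] at hx
  rw [eval_up, eval_up] at hu
  have e0 : x 0 = y 0 := by rw [h2] at hx; linear_combination hx
  have e1 : x 1 = y 1 := by rw [h2, e0] at hu; linear_combination hu
  funext i
  fin_cases i
  · exact e0
  · exact e1
  · exact h2

lemma line_ext (l l' : K × K × K) (s t : K) (hst : s ≠ t) (h1 : pt l s = pt l' s) (h2 : pt l t = pt l' t) :
    l = l' := by
  have a0 := congrFun h1 0
  have a1 := congrFun h1 1
  have b0 := congrFun h2 0
  have b1 := congrFun h2 1
  simp [pt] at a0 a1 b0 b1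
  have hst' := sub_ne_zero.2 hst
  have e1 : l.1 = l'.1 := by
    apply mul_right_cancel₀ hst'
    linear_combination a0 - b0
  rw [e1] at a0 a1
  exact Prod.ext e1 (Prod.ext (by linear_combination a0) (by linear_combination a1))

/-- if `G - σ υ` vanishes on `b`, then `b` meets `a` at `σ` -/
lemma meets_of_G (a b : K × K × K) (σ : K) (h : res b (GG a - C σ * sph (up a)) = 0) : pt b σ = pt a σ := by
  have h1 : res b (GG a - C σ * sph (up a)) =
      Polynomial.C (b.2.2 - a.2.2 - 2 * a.1 * (b.2.1 - a.2.1) - 2 * (b.2.1 - a.2.1) * (b.1 - a.1)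
        - σ * (b.1 - a.1) ^ 2) * Polynomial.X
      - Polynomial.C ((b.2.1 - a.2.1) ^ 2 + σ * (b.2.2 - a.2.2 - 2 * a.1 * (b.2.1 - a.2.1))) := by
    rw [GG]
    simp only [map_sub, map_mul, map_pow, res_sph, res_C, res_X2]
    have h2 : (Polynomial.C (2 : K)) = 2 := map_ofNat _ _
    simp [xi, up]
    simp only [h2]
    ring
  rw [h1] at h
  have c0 := congrArg (fun q => Polynomial.coeff q 0) h
  have c1 := congrArg (fun q => Polynomial.coeff q 1) h
  simp only [Polynomial.coeff_sub, Polynomial.coeff_C_mul, Polynomial.coeff_X, Polynomial.coeff_C] at c0 c1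
  simp at c0 c1
  have k0 : (b.2.1 - a.2.1 + σ * (b.1 - a.1)) ^ 2 = 0 := by
    linear_combination - c0 - σ * c1
  have k1 := pow_eq_zero_iff (two_ne_zero) |>.1 k0
  funext i
  fin_cases i
  · simp [pt]; linear_combination k1
  · simp [pt]; linear_combination c1 + (2 * b.1) * k1
  · simp [pt]

end
end GE

namespace GE
open MvPolynomial
section
variable {K : Type*} [Field K]

theorem core [Infinite K] (p : ℕ) [Fact p.Prime] [CharP K p] (f : MvPolynomial (Fin 3) K)
    (hf : Irreducible f) (hd : f.totalDegree < p) (R : Finset (K × K × K))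
    (hR : ∀ l ∈ R, res l f = 0)
    (hskew : ∀ l ∈ R, ∀ l' ∈ R, ∀ s, pt l s = pt l' s → l = l')
    (hrich : ∀ l ∈ R, ∃ s : Finset K, 4 * f.totalDegree < s.card ∧ ∀ x ∈ s, crossing f l x)
    (hcard : 12 * f.totalDegree ^ 2 < R.card) :
    ∃ v : Fin 5 → K, v ≠ 0 ∧ f ∣ sph v := by
  classical
  by_contra hcon
  push Not at hcon
  have he := irr_deg_pos f hf
  obtain ⟨hr1, hr0, a, haR, hay⟩ := core1 p f hf hd R hR hrich hcard
  have haf := hR a haR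
  set q := res a (pderiv 1 f) with hq
  set n := -(res a (pderiv 0 f) + Polynomial.C (2 * a.1) * q) with hn
  have hqd : q.natDegree ≤ f.totalDegree := (natDegree_res _ _).trans (pderiv_deg' _ _ le_rfl)
  have hnd : n.natDegree ≤ f.totalDegree := by
    rw [hn, Polynomial.natDegree_neg]
    refine Polynomial.natDegree_add_le_of_degree_le ((natDegree_res _ _).trans (pderiv_deg' _ _ le_rfl)) ?_
    exact (Polynomial.natDegree_C_mul_le _ _).trans hqd
  -- the second family of lines
  have H1 : ∀ s, q.eval s ≠ 0 → res (bl a s (n.eval s / q.eval s)) f = 0 := by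
    intro s hs
    have hpt := pt_bl a s (n.eval s / q.eval s)
    have ht := tang a f haf s
    apply line_in p f hd hr1 hr0 _ s
    · rw [hpt, ← eval_res, haf]; simp
    · rw [hpt]
      have e1 : eval (pt a s) (pderiv 1 f) = q.eval s := by rw [hq, eval_res]
      have e0 : eval (pt a s) (pderiv 0 f) = - n.eval s - 2 * a.1 * q.eval s := by
        rw [hn]; simp [eval_res]
      rw [e1, e0] at ht
      rw [e1, e0]
      simp only [bl]
      have : n.eval s / q.eval s * q.eval s = n.eval s := div_mul_cancel₀ _ hs
      linear_combination ht + (n.eval s / q.eval s + 2 * a.1 - 2 * a.1) * this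
    · rw [hpt, ← eval_res]; exact hs
  have H2 : n ≠ 0 := by
    obtain ⟨s, hs, hc⟩ := hrich a haR
    obtain ⟨x, hx, hxq⟩ : ∃ x ∈ s, q.eval x ≠ 0 := by
      by_contra h
      push Not at h
      exact hay (res_eq_zero_of_card a _ s h (by have := pderiv_deg' 1 f le_rfl; omega))
    have := crossing_n f a x haf (hc x hx) hxq
    intro h0
    apply this
    have h1 : res a (pderiv 0 f) + Polynomial.C (2 * a.1) * res a (pderiv 1 f) = -n := by rw [hn, neg_neg]
    rw [h1, h0]; simp
  set m := f.totalDegree with hm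
  set Ψ := sph (up a) * hom a m q - sph (xi a) * hom a m n with hΨ
  have H3 : f ∣ Ψ := by
    refine dvd_of_infinite f Ψ hf (Set.image (fun s => bl a s (n.eval s / q.eval s)) {s | (n * q).eval s ≠ 0}) ?_ ?_
    · refine (inf_ne _ (mul_ne_zero H2 hay)).image ?_
      intro s hs t ht hst
      simp only [Set.mem_setOf_eq, Polynomial.eval_mul] at hs ht
      simp only [bl, Prod.mk.injEq] at hst
      have e1 := add_left_cancel hst.1
      have e2 := sub_right_injective hst.2.1
      simp only [e1] at e2
      exact mul_left_cancel₀ (div_ne_zero (left_ne_zero_of_mul ht) (right_ne_zero_of_mul ht)) e2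
    · rintro l ⟨s, hs, rfl⟩
      simp only [Set.mem_setOf_eq, Polynomial.eval_mul] at hs
      have hqs := right_ne_zero_of_mul hs
      refine ⟨H1 s hqs, ?_⟩
      apply Polynomial.funext
      intro z
      rw [eval_res]
      have hG : eval (pt (bl a s (n.eval s / q.eval s)) z) (GG a) =
          s * eval (pt (bl a s (n.eval s / q.eval s)) z) (sph (up a)) := by
        rw [eval_GG, bl_up, bl_xi, pt_two]; ring
      rw [hΨ, map_sub, map_mul, map_mul, eval_hom a m q hqd _ s hG, eval_hom a m n hnd _ s hG, bl_up, bl_xi]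
      have : n.eval s / q.eval s * q.eval s = n.eval s := div_mul_cancel₀ _ hqs
      rw [Polynomial.eval_zero]
      generalize n.eval s / q.eval s = r at *
      rw [← this]; ring
  -- choose a second line
  have hfew : ∀ v : Fin 5 → K, v ≠ 0 → (R.filter fun l => res l (sph v) = 0).card ≤ 5 * m := by
    intro v hv
    have := bezout f (sph v) hf (hcon v hv) (R.filter fun l => res l (sph v) = 0)
      (fun l hl => hR l (Finset.mem_filter.1 hl).1) (fun l hl => (Finset.mem_filter.1 hl).2)
    have h2 := sph_deg v
    nlinarith
  obtain ⟨b, hbR, hba, hbu, hbx⟩ : ∃ b ∈ R, b ≠ a ∧ res b (sph (up a)) ≠ 0 ∧ res b (sph (xi a)) ≠ 0 := by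
    by_contra h
    push Not at h
    have hsub : R ⊆ {a} ∪ ((R.filter fun l => res l (sph (up a)) = 0) ∪ (R.filter fun l => res l (sph (xi a)) = 0)) := by
      intro l hl
      simp only [Finset.mem_union, Finset.mem_singleton, Finset.mem_filter]
      by_cases h1 : l = a
      · exact Or.inl h1
      by_cases h2 : res l (sph (up a)) = 0
      · exact Or.inr (Or.inl ⟨hl, h2⟩)
      · exact Or.inr (Or.inr ⟨hl, h l hl h1 h2⟩)
    have h1 := Finset.card_le_card hsub
    have h2 := Finset.card_union_le {a} ((R.filter fun l => res l (sph (up a)) = 0) ∪ (R.filter fun l => res l (sph (xi a)) = 0))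
    have h3 := Finset.card_union_le (R.filter fun l => res l (sph (up a)) = 0) (R.filter fun l => res l (sph (xi a)) = 0)
    have h4 := hfew _ (up_ne a)
    have h5 := hfew _ (xi_ne a)
    rw [Finset.card_singleton] at h2
    nlinarith
  have hbf := hR b hbR
  have hskab : ∀ s, pt b s ≠ pt a s := fun s h => hba (hskew b hbR a haR s h)
  set Pr : Polynomial K := res b (sph (up a)) * res b (sph (xi a)) *
    ∏ σ ∈ q.roots.toFinset, res b (GG a - C σ * sph (up a)) with hPr
  have hPr0 : Pr ≠ 0 := by
    refine mul_ne_zero (mul_ne_zero hbu hbx) (Finset.prod_ne_zero_iff.2 fun σ _ h => ?_)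
    exact hskab σ (meets_of_G a b σ h)
  obtain ⟨v, hv, hva, hvb⟩ := exists_sphere a b
  -- the crossing line through `pt b z`
  have H4 : ∀ z, Pr.eval z ≠ 0 → ∃ l, res l f = 0 ∧ res l (sph v) = 0 ∧ pt l z = pt b z ∧
      ∃ s, pt l s = pt a s := by
    intro z hz
    rw [hPr, Polynomial.eval_mul, Polynomial.eval_mul, Polynomial.eval_prod] at hz
    have hU := left_ne_zero_of_mul (left_ne_zero_of_mul hz)
    have hX := right_ne_zero_of_mul (left_ne_zero_of_mul hz)
    have hQ := Finset.prod_ne_zero_iff.1 (right_ne_zero_of_mul hz)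
    rw [eval_res] at hU hX
    set U := eval (pt b z) (sph (up a)) with hUd
    set Ξ := eval (pt b z) (sph (xi a)) with hXd
    set σ := z - Ξ ^ 2 / U with hσ
    have hG : eval (pt b z) (GG a) = σ * eval (pt b z) (sph (up a)) := by
      rw [eval_GG, pt_two, ← hUd, ← hXd, hσ]
      field_simp
    have hqσ : q.eval σ ≠ 0 := by
      intro h0
      apply hQ σ (by rw [Multiset.mem_toFinset, Polynomial.mem_roots hay]; exact h0)
      rw [eval_res, map_sub, map_mul, hG, eval_C, sub_self]
    have hrel : U * q.eval σ = Ξ * n.eval σ := by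
      have h0 : eval (pt b z) Ψ = 0 := by
        obtain ⟨g, hg⟩ := H3
        rw [hg, map_mul, ← eval_res, hbf]; simp
      rw [hΨ, map_sub, map_mul, map_mul, eval_hom a m q hqd _ σ hG, eval_hom a m n hnd _ σ hG, ← hUd, ← hXd] at h0
      apply mul_left_cancel₀ (pow_ne_zero m hU)
      linear_combination h0
    have hr : n.eval σ / q.eval σ = U / Ξ := by
      rw [div_eq_div_iff hqσ hX]; linear_combination -hrel
    have hσz : σ ≠ z := by
      intro h
      have : Ξ ^ 2 / U = 0 := by rw [hσ] at h; linear_combination -h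
      exact div_ne_zero (pow_ne_zero 2 hX) hU this
    have hlz : pt (bl a σ (n.eval σ / q.eval σ)) z = pt b z := by
      apply pt_ext a
      · rw [pt_two, pt_two]
      · rw [bl_xi, hr, hσ, ← hXd]; field_simp; ring
      · rw [bl_up, hr, hσ, ← hUd]; field_simp; ring
    refine ⟨bl a σ (n.eval σ / q.eval σ), H1 σ hqσ, ?_, hlz, σ, pt_bl _ _ _⟩
    refine res_sph_zero_of_two v _ σ z hσz ?_ ?_
    · rw [pt_bl, ← eval_res, hva]; simp
    · rw [hlz, ← eval_res, hvb]; simp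
  choose! L hL using H4
  refine hcon v hv (dvd_of_infinite f (sph v) hf (Set.image L {z | Pr.eval z ≠ 0}) ?_ ?_)
  · refine (inf_ne _ hPr0).image ?_
    intro z hz w hw hzw
    by_contra hne
    obtain ⟨-, -, h1, s, h2⟩ := hL z hz
    obtain ⟨-, -, h3, -⟩ := hL w hw
    rw [← hzw] at h3
    have : L z = b := line_ext _ _ z w hne h1 h3
    rw [this] at h2
    exact hskab s h2
  · rintro l ⟨z, hz, rfl⟩
    exact ⟨(hL z hz).1, (hL z hz).2.1⟩

end
end GE

namespace GE
open MvPolynomial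
open scoped Classical
section
variable {K : Type*} [Field K]

/-- two null lines meet -/
def meet (a b : K × K × K) : Prop := ∃ s, pt a s = pt b s

/-- pairwise skew -/
def skew (A : Finset (K × K × K)) : Prop := ∀ l ∈ A, ∀ l' ∈ A, ∀ s, pt l s = pt l' s → l = l'

noncomputable def gm (a b : K × K × K) : ℕ := if meet a b then 1 else 0

/-- number of lines in `B` met by `a` -/
noncomputable def dg (a : K × K × K) (B : Finset (K × K × K)) : ℕ := ∑ b ∈ B, gm a b

/-- number of meeting pairs -/
noncomputable def II (A B : Finset (K × K × K)) : ℕ := ∑ a ∈ A, dg a B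

lemma gm_comm (a b : K × K × K) : gm a b = gm b a := by
  have : meet a b ↔ meet b a := ⟨fun ⟨s, h⟩ => ⟨s, h.symm⟩, fun ⟨s, h⟩ => ⟨s, h.symm⟩⟩
  simp only [gm, this]

lemma II_comm (A B : Finset (K × K × K)) : II A B = II B A := by
  simp only [II, dg]
  rw [Finset.sum_comm]
  exact Finset.sum_congr rfl fun b _ => Finset.sum_congr rfl fun a _ => gm_comm a b

lemma II_split_left (A B : Finset (K × K × K)) (P : K × K × K → Prop) [DecidablePred P] :
    II A B = II (A.filter P) B + II (A.filter fun a => ¬ P a) B :=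
  (Finset.sum_filter_add_sum_filter_not A P _).symm

lemma II_split_right (A B : Finset (K × K × K)) (P : K × K × K → Prop) [DecidablePred P] :
    II A B = II A (B.filter P) + II A (B.filter fun a => ¬ P a) := by
  rw [II_comm, II_split_left B A P, II_comm A, II_comm A]

lemma II_le (A B : Finset (K × K × K)) (e : ℕ) (h : ∀ a ∈ A, dg a B ≤ e) : II A B ≤ e * A.card := by
  refine (Finset.sum_le_card_nsmul A _ e h).trans ?_
  rw [smul_eq_mul, mul_comm]

lemma dg_le_card (a : K × K × K) (B : Finset (K × K × K)) : dg a B ≤ B.card := by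
  refine (Finset.sum_le_card_nsmul B _ 1 fun b _ => ?_).trans (by simp)
  rw [gm]; split_ifs <;> simp

lemma dg_mono (a : K × K × K) {B B' : Finset (K × K × K)} (h : B ⊆ B') : dg a B ≤ dg a B' :=
  Finset.sum_le_sum_of_subset h

lemma II_le_mul (A B : Finset (K × K × K)) : II A B ≤ A.card * B.card := by
  rw [mul_comm]; exact II_le A B _ fun a _ => dg_le_card a B

lemma skew_mono {A A' : Finset (K × K × K)} (h : A' ⊆ A) (hA : skew A) : skew A' :=
  fun l hl l' hl' s hs => hA l (h hl) l' (h hl') s hs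

lemma dg_points (a : K × K × K) (B : Finset (K × K × K)) (hB : skew B) :
    ∃ s : Finset K, s.card = dg a B ∧ ∀ x ∈ s, ∃ b ∈ B, pt b x = pt a x := by
  have h1 : dg a B = (B.filter fun b => meet a b).card := by
    rw [dg, Finset.card_filter]; rfl
  have hch : ∀ b ∈ B.filter (fun b => meet a b), ∃ s, pt a s = pt b s := fun b hb => (Finset.mem_filter.1 hb).2
  choose! s hs using hch
  refine ⟨(B.filter fun b => meet a b).image s, ?_, ?_⟩
  · rw [h1, Finset.card_image_of_injOn]
    intro b hb b' hb' hbb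
    have h2 := hs b hb
    have h3 := hs b' hb'
    rw [← hbb] at h3
    exact hB b (Finset.mem_filter.1 hb).1 b' (Finset.mem_filter.1 hb').1 (s b) (h2.symm.trans h3)
  · intro x hx
    obtain ⟨b, hb, rfl⟩ := Finset.mem_image.1 hx
    exact ⟨b, (Finset.mem_filter.1 hb).1, (hs b hb).symm⟩

lemma dg_le_deg (f : MvPolynomial (Fin 3) K) (a : K × K × K) (B : Finset (K × K × K)) (hB : skew B)
    (hBf : ∀ b ∈ B, res b f = 0) (ha : res a f ≠ 0) : dg a B ≤ f.totalDegree := by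
  obtain ⟨s, hs, hp⟩ := dg_points a B hB
  by_contra h
  apply ha
  refine res_eq_zero_of_card a f s (fun x hx => ?_) (by omega)
  obtain ⟨b, hb, hbx⟩ := hp x hx
  rw [eval_res, ← hbx, ← eval_res, hBf b hb]; simp

lemma rich_few [Infinite K] (p : ℕ) [Fact p.Prime] [CharP K p] (f : MvPolynomial (Fin 3) K)
    (hf : Irreducible f) (hd : f.totalDegree < p) (hns : ∀ v : Fin 5 → K, v ≠ 0 → ¬ f ∣ sph v)
    (A B : Finset (K × K × K)) (hA : skew A) (hB : skew B) (hAB : ∀ a ∈ A, ∀ b ∈ B, a.1 ≠ b.1)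
    (hAf : ∀ a ∈ A, res a f = 0) (hBf : ∀ b ∈ B, res b f = 0) :
    (A.filter fun a => 4 * f.totalDegree < dg a B).card ≤ 12 * f.totalDegree ^ 2 := by
  by_contra h
  push Not at h
  obtain ⟨v, hv, hfv⟩ := core p f hf hd (A.filter fun a => 4 * f.totalDegree < dg a B)
    (fun l hl => hAf l (Finset.mem_filter.1 hl).1) (skew_mono (Finset.filter_subset _ _) hA)
    (by
      intro l hl
      obtain ⟨hlA, hl4⟩ := Finset.mem_filter.1 hl
      obtain ⟨s, hs, hp⟩ := dg_points l B hB
      refine ⟨s, by omega, fun x hx => ?_⟩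
      obtain ⟨b, hb, hbx⟩ := hp x hx
      exact ⟨b, hBf b hb, hbx, (hAB l hlA b hb).symm⟩) h
  exact hns v hv hfv

lemma II_rich (A B : Finset (K × K × K)) (e : ℕ) : II A B ≤ e * A.card + e * B.card +
    II (A.filter fun a => e < dg a B) (B.filter fun b => e < dg b A) := by
  rw [II_split_left A B (fun a => e < dg a B), II_split_right (A.filter fun a => e < dg a B) B (fun b => e < dg b A)]
  have h1 : II (A.filter fun a => ¬ e < dg a B) B ≤ e * A.card := by
    refine (II_le _ _ e ?_).trans (Nat.mul_le_mul_left _ (Finset.card_filter_le _ _))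
    intro a ha
    exact not_lt.1 (Finset.mem_filter.1 ha).2
  have h2 : II (A.filter fun a => e < dg a B) (B.filter fun a => ¬ e < dg a A) ≤ e * B.card := by
    rw [II_comm]
    refine (II_le _ _ e ?_).trans (Nat.mul_le_mul_left _ (Finset.card_filter_le _ _))
    intro b hb
    exact (dg_mono b (Finset.filter_subset _ _)).trans (not_lt.1 (Finset.mem_filter.1 hb).2)
  omega

lemma pick [Infinite K] (A B : Finset (K × K × K)) (hAB : ∀ a ∈ A, ∀ b ∈ B, a.1 ≠ b.1)
    (n m M : ℕ) (hn : A.card + B.card = n) (hm : 32 ≤ m) (hmn : m ^ 2 ≤ n) (hM : 16 * M ≤ m) :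
    ∃ f : MvPolynomial (Fin 3) K, Irreducible f ∧ f.totalDegree ≤ 3 * m ∧
      M * f.totalDegree < (A.filter fun l => res l f = 0).card + (B.filter fun l => res l f = 0).card := by
  have hdisj : Disjoint A B := by
    rw [Finset.disjoint_left]
    intro a ha hb
    exact hAB a ha a hb rfl
  have hc : (A ∪ B).card = n := by rw [Finset.card_union_of_disjoint hdisj, hn]
  obtain ⟨L, hL, hLc⟩ := Finset.exists_subset_card_eq (s := A ∪ B) (n := m ^ 2 / 4) (by omega)
  have hm2 : 1024 ≤ m ^ 2 := by nlinarith
  obtain ⟨P, hP0, hPd, hPL⟩ := exists_poly L m (by omega)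
  have hfil : (L.filter fun l => res l P = 0) = L := Finset.filter_true_of_mem hPL
  obtain ⟨f, hf, hfP, hfc⟩ := exists_factor L M P hP0 (by
    rw [hfil, hLc]
    have h1 : M * P.totalDegree ≤ M * (3 * m) := Nat.mul_le_mul_left _ hPd
    have h2 : 16 * M * m ≤ m * m := Nat.mul_le_mul_right _ hM
    have h3 : M * (3 * m) = 3 * (M * m) := by ring
    have h4 : 16 * M * m = 16 * (M * m) := by ring
    have h5 : m ^ 2 = m * m := by ring
    omega)
  refine ⟨f, hf, (totalDegree_le_of_dvd' hfP hP0).trans hPd, lt_of_lt_of_le hfc ?_⟩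
  refine (Finset.card_le_card (t := (A.filter fun l => res l f = 0) ∪ (B.filter fun l => res l f = 0)) ?_).trans
    (Finset.card_union_le _ _)
  intro l hl
  obtain ⟨h1, h2⟩ := Finset.mem_filter.1 hl
  rcases Finset.mem_union.1 (hL h1) with h3 | h3
  · exact Finset.mem_union_left _ (Finset.mem_filter.2 ⟨h3, h2⟩)
  · exact Finset.mem_union_right _ (Finset.mem_filter.2 ⟨h3, h2⟩)

set_option maxHeartbeats 2000000 in
theorem incidence [Infinite K] (p : ℕ) [Fact p.Prime] [CharP K p] (k : ℕ) (n : ℕ) :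
    ∀ A B : Finset (K × K × K), skew A → skew B → (∀ a ∈ A, ∀ b ∈ B, a.1 ≠ b.1) →
    A.card + B.card = n → n ≤ p ^ 2 →
    (∀ v : Fin 5 → K, v ≠ 0 → (A.filter fun l => res l (sph v) = 0).card ≤ k) →
    (II A B : ℝ) ≤ 9600 * (n * √n) + k * n := by
  induction n using Nat.strong_induction_on with
  | _ n ih =>
  intro A B hA hB hAB hn hnp hk
  set r := √(n : ℝ) with hr
  have hr0 : 0 ≤ r := Real.sqrt_nonneg _
  have hrr : r * r = n := Real.mul_self_sqrt (Nat.cast_nonneg n)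
  set w := Nat.sqrt n with hw
  have hw1 : w * w ≤ n := Nat.sqrt_le n
  have hw2 : n < (w + 1) * (w + 1) := Nat.lt_succ_sqrt n
  have hrw : r ≤ w + 1 := by
    rw [hr]
    apply Real.sqrt_le_iff.2
    refine ⟨by positivity, ?_⟩
    have : (n : ℝ) ≤ ((w + 1) * (w + 1) : ℕ) := by exact_mod_cast hw2.le
    push_cast at this
    nlinarith
  have hwr : (w : ℝ) ≤ r := by
    rw [hr]
    apply Real.le_sqrt_of_sq_le
    have : ((w * w : ℕ) : ℝ) ≤ n := by exact_mod_cast hw1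
    push_cast at this
    nlinarith
  by_cases hsmall : w < 1280
  · have h1 : (II A B : ℝ) ≤ n * n := by
      have h2 := II_le_mul A B
      have h3 : A.card * B.card ≤ n * n := Nat.mul_le_mul (by omega) (by omega)
      exact_mod_cast h2.trans h3
    have h4 : r ≤ 9600 := by
      have : (w : ℝ) < 1280 := by exact_mod_cast hsmall
      linarith
    have h5 : (n : ℝ) * n ≤ 9600 * (n * r) := by
      have : (n : ℝ) * n = n * r * r := by rw [mul_assoc, hrr]
      rw [this]
      have h6 : 0 ≤ (n : ℝ) * r := by positivity
      nlinarith
    have h6 : (0 : ℝ) ≤ k * n := by positivity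
    linarith
  push Not at hsmall
  obtain ⟨m, hm⟩ : ∃ m, m = w / 40 := ⟨_, rfl⟩
  obtain ⟨M, hM⟩ : ∃ M, M = m / 16 := ⟨_, rfl⟩
  obtain ⟨f, hf, hfd, hfc⟩ := pick A B hAB n m M hn (by omega)
    (by have : m ≤ w := by omega
        nlinarith) (by omega)
  have he := irr_deg_pos f hf
  set e := f.totalDegree with hed
  have hwp : w ≤ p := by
    by_contra h
    push Not at h
    nlinarith
  have hep : e < p := by omega
  set Af := A.filter fun l => res l f = 0 with hAf
  set Bf := B.filter fun l => res l f = 0 with hBf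
  set A' := A.filter fun l => ¬ res l f = 0 with hA'
  set B' := B.filter fun l => ¬ res l f = 0 with hB'
  have hAc : Af.card + A'.card = A.card := Finset.card_filter_add_card_filter_not _
  have hBc : Bf.card + B'.card = B.card := Finset.card_filter_add_card_filter_not _
  have sAf : Af ⊆ A := Finset.filter_subset _ _
  have sBf : Bf ⊆ B := Finset.filter_subset _ _
  have sA' : A' ⊆ A := Finset.filter_subset _ _
  have sB' : B' ⊆ B := Finset.filter_subset _ _
  have zAf : ∀ a ∈ Af, res a f = 0 := fun a ha => (Finset.mem_filter.1 ha).2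
  have zBf : ∀ a ∈ Bf, res a f = 0 := fun a ha => (Finset.mem_filter.1 ha).2
  have hksub : ∀ X ⊆ A, ∀ v : Fin 5 → K, v ≠ 0 → (X.filter fun l => res l (sph v) = 0).card ≤ k :=
    fun X hX v hv => (Finset.card_le_card (Finset.filter_subset_filter _ hX)).trans (hk v hv)
  obtain ⟨z, hz⟩ : ∃ z, z = Af.card + Bf.card := ⟨_, rfl⟩
  rw [← hz] at hfc
  have hzn : z ≤ n := by omega
  -- splitting
  have hsplit : II A B = II Af Bf + II Af B' + (II A' Bf + II A' B') := by
    rw [II_split_left A B (fun l => res l f = 0), II_split_right (A.filter fun l => res l f = 0) B (fun l => res l f = 0),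
      II_split_right (A.filter fun l => ¬ res l f = 0) B (fun l => res l f = 0)]
  have i1 : II A' Bf ≤ e * A'.card := II_le _ _ _ fun a ha =>
    dg_le_deg f a Bf (skew_mono sBf hB) zBf (Finset.mem_filter.1 ha).2
  have i2 : II Af B' ≤ e * B'.card := by
    rw [II_comm]
    exact II_le _ _ _ fun a ha =>
      dg_le_deg f a Af (skew_mono sAf hA) zAf (Finset.mem_filter.1 ha).2
  have i12 : II A' Bf + II Af B' ≤ e * n := by
    have : e * A'.card + e * B'.card ≤ e * n := by rw [← mul_add]; exact Nat.mul_le_mul_left _ (by omega)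
    omega
  have i3 : (II A' B' : ℝ) ≤ 9600 * ((n - z) * r) + k * (n - z) := by
    have hc' : A'.card + B'.card = n - z := by omega
    have := ih (n - z) (by omega) A' B' (skew_mono sA' hA) (skew_mono sB' hB)
      (fun a ha b hb => hAB a (sA' ha) b (sB' hb)) hc' (by omega) (hksub A' sA')
    rw [Nat.cast_sub hzn] at this
    have hs : √((n : ℝ) - z) ≤ r := Real.sqrt_le_sqrt (by linarith [(Nat.cast_nonneg z : (0:ℝ) ≤ z)])
    have h0 : (0 : ℝ) ≤ n - z := by
      have : (z : ℝ) ≤ n := by exact_mod_cast hzn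
      linarith
    have := mul_le_mul_of_nonneg_left hs h0
    linarith
  have hre : r * e ≤ 960 * z := by
    have h1 : w ≤ 640 * M + 639 := by omega
    have h2 : (w : ℝ) ≤ 640 * M + 639 := by exact_mod_cast h1
    have h3 : (2 : ℝ) ≤ M := by
      have : 2 ≤ M := by omega
      exact_mod_cast this
    have h4 : r ≤ 960 * M := by linarith
    have h5 : (M : ℝ) * e ≤ z := by exact_mod_cast hfc.le
    have h6 : (0 : ℝ) ≤ e := Nat.cast_nonneg _
    nlinarith
  have hen : (e : ℝ) * n ≤ 960 * (z * r) := by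
    rw [← hrr]; nlinarith
  have i12r : (II A' Bf : ℝ) + II Af B' ≤ e * n := by exact_mod_cast i12
  have hsr : (II A B : ℝ) = II Af Bf + II Af B' + (II A' Bf + II A' B') := by exact_mod_cast hsplit
  have hzr : (0 : ℝ) ≤ z * r := by positivity
  by_cases hsp : ∃ v : Fin 5 → K, v ≠ 0 ∧ f ∣ sph v
  · obtain ⟨v, hv, hfv⟩ := hsp
    have hAk : Af.card ≤ k := by
      refine le_trans (Finset.card_le_card ?_) (hk v hv)
      intro a ha
      refine Finset.mem_filter.2 ⟨sAf ha, ?_⟩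
      obtain ⟨g, hg⟩ := hfv
      rw [hg, map_mul, zAf a ha, zero_mul]
    have i4 : II Af Bf ≤ k * z := (II_le_mul _ _).trans (Nat.mul_le_mul hAk (by omega))
    have i4r : (II Af Bf : ℝ) ≤ k * z := by exact_mod_cast i4
    rw [hsr]
    nlinarith
  · push Not at hsp
    have rA := rich_few p f hf hep hsp Af Bf (skew_mono sAf hA) (skew_mono sBf hB)
      (fun a ha b hb => hAB a (sAf ha) b (sBf hb)) zAf zBf
    have rB := rich_few p f hf hep hsp Bf Af (skew_mono sBf hB) (skew_mono sAf hA)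
      (fun b hb a ha => (hAB a (sAf ha) b (sBf hb)).symm) zBf zAf
    have hR := II_rich Af Bf (4 * e)
    set Ar := Af.filter fun a => 4 * e < dg a Bf with hAr
    set Br := Bf.filter fun a => 4 * e < dg a Af with hBr
    have sAr : Ar ⊆ Af := Finset.filter_subset _ _
    have sBr : Br ⊆ Bf := Finset.filter_subset _ _
    obtain ⟨y, hy⟩ : ∃ y, y = Ar.card + Br.card := ⟨_, rfl⟩
    have hyz : y ≤ z := by
      have := Finset.card_le_card sAr
      have := Finset.card_le_card sBr
      omega
    rw [← hed] at rA rB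
    have hye : y ≤ 24 * e ^ 2 := by omega
    have h10e : 10 * e ≤ w := by omega
    have hyn : y < n := by
      have h1 : 10 * e * (10 * e) ≤ w * w := Nat.mul_le_mul h10e h10e
      have h3 : 10 * e * (10 * e) = 100 * e ^ 2 := by ring
      have h2 : 0 < e ^ 2 := by positivity
      omega
    have i5 := ih y hyn Ar Br (skew_mono (sAr.trans sAf) hA) (skew_mono (sBr.trans sBf) hB)
      (fun a ha b hb => hAB a (sAf (sAr ha)) b (sBf (sBr hb))) hy.symm (by omega) (hksub Ar (sAr.trans sAf))
    have hsy : √(y : ℝ) ≤ r / 2 := by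
      have h1 : √(y : ℝ) ≤ 5 * e := by
        apply Real.sqrt_le_iff.2
        refine ⟨by positivity, ?_⟩
        have : (y : ℝ) ≤ 24 * e ^ 2 := by exact_mod_cast hye
        nlinarith [sq_nonneg (e : ℝ)]
      have h2 : (10 : ℝ) * e ≤ w := by exact_mod_cast h10e
      linarith
    have hyzr : (y : ℝ) ≤ z := by exact_mod_cast hyz
    have h6 : (y : ℝ) * √(y : ℝ) ≤ z * (r / 2) := mul_le_mul hyzr hsy (Real.sqrt_nonneg _) (Nat.cast_nonneg _)
    have h7 : (k : ℝ) * y ≤ k * z := mul_le_mul_of_nonneg_left hyzr (Nat.cast_nonneg _)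
    have h8 : II Af Bf ≤ 4 * (e * z) + II Ar Br := by
      have : 4 * e * Af.card + 4 * e * Bf.card = 4 * (e * z) := by rw [hz]; ring
      omega
    have h8r : (II Af Bf : ℝ) ≤ 4 * (e * z) + II Ar Br := by exact_mod_cast h8
    have h9 : (e : ℝ) * z ≤ e * n := mul_le_mul_of_nonneg_left (by exact_mod_cast hzn) (Nat.cast_nonneg _)
    rw [hsr]
    nlinarith

end
end GE

namespace GE
open MvPolynomial
open scoped Classical
section

lemma exists_avoid (K : Type*) [Field K] [Infinite K] (p : ℕ) [Fact p.Prime] [Algebra (ZMod p) K] :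
    ∃ ε θ : K, (∀ x : ZMod p, ε ≠ algebraMap (ZMod p) K x) ∧
      ∀ x y : ZMod p, θ ≠ ε * algebraMap (ZMod p) K x + algebraMap (ZMod p) K y := by
  obtain ⟨ε, hε⟩ := (Set.finite_range (fun x : ZMod p => algebraMap (ZMod p) K x)).infinite_compl.nonempty
  obtain ⟨θ, hθ⟩ := (Set.finite_range (fun x : ZMod p × ZMod p =>
    ε * algebraMap (ZMod p) K x.1 + algebraMap (ZMod p) K x.2)).infinite_compl.nonempty
  refine ⟨ε, θ, fun x h => hε ⟨x, h.symm⟩, fun x y h => hθ ⟨(x, y), h.symm⟩⟩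

variable {K : Type*} [Field K] {p : ℕ} [Fact p.Prime] [Algebra (ZMod p) K]

/-- the two families of null lines -/
noncomputable def LA (ε θ : K) (t : ZMod p × ZMod p × ZMod p) : K × K × K :=
  let u := algebraMap (ZMod p) K t.1
  (u, -u * algebraMap (ZMod p) K t.2.1,
    -u ^ 2 * algebraMap (ZMod p) K t.2.1 + θ * u + ε * algebraMap (ZMod p) K t.2.2)

noncomputable def LB (ε θ : K) (t : ZMod p × ZMod p × ZMod p) : K × K × K :=
  let u := -ε / algebraMap (ZMod p) K t.1
  (u, -u * algebraMap (ZMod p) K t.2.1 - θ,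
    -u ^ 2 * algebraMap (ZMod p) K t.2.1 - θ * u + ε * algebraMap (ZMod p) K t.2.2)

lemma inj_alg : Function.Injective (algebraMap (ZMod p) K) := (algebraMap (ZMod p) K).injective

lemma alg_ne {x : ZMod p} (h : x ≠ 0) : algebraMap (ZMod p) K x ≠ 0 := by
  rwa [Ne, map_eq_zero]

lemma pt_eq (l l' : K × K × K) (s : K) (h : pt l s = pt l' s) :
    (l.1 - l'.1) * s = l'.2.1 - l.2.1 ∧ (l.1 + l'.1) * (l'.2.1 - l.2.1) = l'.2.2 - l.2.2 := by
  have h0 := congrFun h 0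
  have h1 := congrFun h 1
  simp [pt] at h0 h1
  have e : (l.1 - l'.1) * s = l'.2.1 - l.2.1 := by linear_combination h0
  refine ⟨e, ?_⟩
  rw [← e]; linear_combination h1

lemma eps_ne {ε : K} (hε : ∀ x : ZMod p, ε ≠ algebraMap (ZMod p) K x) : ε ≠ 0 := by
  simpa using hε 0

lemma LA_skew {ε θ : K} (hε : ∀ x : ZMod p, ε ≠ algebraMap (ZMod p) K x)
    (hθ : ∀ x y : ZMod p, θ ≠ ε * algebraMap (ZMod p) K x + algebraMap (ZMod p) K y)
    (t t' : ZMod p × ZMod p × ZMod p) (h0 : t.1 ≠ 0) (s : K)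
    (h : pt (LA ε θ t) s = pt (LA ε θ t') s) : t = t' := by
  obtain ⟨a, d, d'⟩ := t
  obtain ⟨b, e, e'⟩ := t'
  obtain ⟨h1, h2⟩ := pt_eq _ _ _ h
  simp only [LA] at h1 h2 h0
  have hab : a = b := by
    by_contra hne
    have hba : b - a ≠ 0 := sub_ne_zero.2 (Ne.symm hne)
    apply hθ (-(e' - d') / (b - a)) (a * b * (d - e) / (b - a))
    have hba' := alg_ne (K := K) hba
    simp only [map_div₀, map_neg, map_sub, map_mul] at hba' ⊢
    field_simp
    linear_combination -h2
  subst hab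
  have ha := alg_ne (K := K) h0
  have hde : d = e := by
    apply inj_alg (K := K)
    apply mul_left_cancel₀ ha
    linear_combination -h1
  subst hde
  have hde' : d' = e' := by
    apply inj_alg (K := K)
    apply mul_left_cancel₀ (eps_ne hε)
    linear_combination h2
  subst hde'
  rfl

lemma LB_skew {ε θ : K} (hε : ∀ x : ZMod p, ε ≠ algebraMap (ZMod p) K x)
    (hθ : ∀ x y : ZMod p, θ ≠ ε * algebraMap (ZMod p) K x + algebraMap (ZMod p) K y)
    (t t' : ZMod p × ZMod p × ZMod p) (h0 : t.1 ≠ 0) (h0' : t'.1 ≠ 0) (s : K)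
    (h : pt (LB ε θ t) s = pt (LB ε θ t') s) : t = t' := by
  obtain ⟨a, d, d'⟩ := t
  obtain ⟨b, e, e'⟩ := t'
  obtain ⟨h1, h2⟩ := pt_eq _ _ _ h
  simp only [LB] at h1 h2 h0 h0'
  have ha := alg_ne (K := K) h0
  have hb := alg_ne (K := K) h0'
  have he := eps_ne hε
  have hab : a = b := by
    by_contra hne
    have hba : b - a ≠ 0 := sub_ne_zero.2 (Ne.symm hne)
    apply hθ (-(d - e) / (b - a)) (a * b * (e' - d') / (b - a))
    have hba' := alg_ne (K := K) hba
    simp only [map_div₀, map_neg, map_sub, map_mul] at hba' ⊢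
    field_simp at h2 ⊢
    apply mul_left_cancel₀ (mul_ne_zero ha hb)
    linear_combination h2
  subst hab
  have hde : d = e := by
    apply inj_alg (K := K)
    apply mul_left_cancel₀ (div_ne_zero he ha)
    linear_combination h1
  subst hde
  have hde' : d' = e' := by
    apply inj_alg (K := K)
    apply mul_left_cancel₀ he
    linear_combination h2
  subst hde'
  rfl

lemma slopes {ε θ : K} (hε : ∀ x : ZMod p, ε ≠ algebraMap (ZMod p) K x)
    (t t' : ZMod p × ZMod p × ZMod p) (h0' : t'.1 ≠ 0) : (LA ε θ t).1 ≠ (LB ε θ t').1 := by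
  simp only [LA, LB]
  intro h
  have hb := alg_ne (K := K) h0'
  apply hε (-(t.1 * t'.1))
  rw [eq_div_iff hb] at h
  rw [map_neg, map_mul, h, neg_neg]

lemma AB_meet {ε θ : K} (hε : ∀ x : ZMod p, ε ≠ algebraMap (ZMod p) K x)
    (t t' : ZMod p × ZMod p × ZMod p) (h0' : t'.1 ≠ 0)
    (h : t.1 * (t'.2.1 - t.2.1) = t'.1 * (t'.2.2 - t.2.2)) : meet (LA ε θ t) (LB ε θ t') := by
  have hs := slopes (θ := θ) hε t t' h0'
  have hb := alg_ne (K := K) h0'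
  have hs' := sub_ne_zero.2 hs
  have hk : ((LA ε θ t).1 + (LB ε θ t').1) * ((LB ε θ t').2.1 - (LA ε θ t).2.1) =
      (LB ε θ t').2.2 - (LA ε θ t).2.2 := by
    have hh := congrArg (algebraMap (ZMod p) K) h
    simp only [map_mul, map_sub] at hh
    simp only [LA, LB]
    field_simp
    linear_combination (ε * algebraMap (ZMod p) K t'.1) * hh
  generalize LA ε θ t = l at *
  generalize LB ε θ t' = l' at *
  refine ⟨(l'.2.1 - l.2.1) / (l.1 - l'.1), ?_⟩
  funext i
  fin_cases i
  · simp [pt]; field_simp; ring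
  · simp [pt]; field_simp; linear_combination (l.1 - l'.1) * hk
  · simp [pt]

lemma roots_quad (a b c : K) (h : a ≠ 0 ∨ b ≠ 0 ∨ c ≠ 0) :
    ∃ R : Finset K, R.card ≤ 2 ∧ ∀ x, a * x ^ 2 + b * x + c = 0 → x ∈ R := by
  set P : Polynomial K := Polynomial.C a * Polynomial.X ^ 2 + Polynomial.C b * Polynomial.X + Polynomial.C c with hP
  have hP0 : P ≠ 0 := by
    intro h0
    have c0 := congrArg (fun q => Polynomial.coeff q 0) h0
    have c1 := congrArg (fun q => Polynomial.coeff q 1) h0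
    have c2 := congrArg (fun q => Polynomial.coeff q 2) h0
    simp [hP, Polynomial.coeff_X, Polynomial.coeff_C] at c0 c1 c2
    tauto
  refine ⟨P.roots.toFinset, ?_, ?_⟩
  · refine (Multiset.toFinset_card_le _).trans ((Polynomial.card_roots' P).trans ?_)
    exact Polynomial.natDegree_quadratic_le
  · intro x hx
    rw [Multiset.mem_toFinset, Polynomial.mem_roots hP0, Polynomial.IsRoot.def]
    simpa [hP] using hx

lemma sphere_count {ε θ : K} (hε : ∀ x : ZMod p, ε ≠ algebraMap (ZMod p) K x)
    (S D : Finset (ZMod p)) (hS : ∀ c ∈ S, c ≠ 0) (v : Fin 5 → K) (hv : v ≠ 0) :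
    ((S ×ˢ D ×ˢ D).filter fun t => res (LA ε θ t) (sph v) = 0).card ≤ 2 * S.card + 2 * D.card := by
  have he := eps_ne hε
  set ι := algebraMap (ZMod p) K with hι
  have key : ∀ t : ZMod p × ZMod p × ZMod p, res (LA ε θ t) (sph v) = 0 →
      v 0 * (ι t.1 ^ 2 * ι t.2.1 + θ * ι t.1 + ε * ι t.2.2) + v 1 * ι t.1 + v 2 * ι t.1 ^ 2 + v 3 = 0 ∧
      - v 0 * (ι t.1 * ι t.2.1) ^ 2 - v 1 * (ι t.1 * ι t.2.1) +
        v 2 * (-ι t.1 ^ 2 * ι t.2.1 + θ * ι t.1 + ε * ι t.2.2) + v 4 = 0 := by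
    intro t ht
    rw [res_sph_zero_iff] at ht
    simp only [LA, ← hι] at ht
    exact ⟨by linear_combination ht.1, by linear_combination ht.2⟩
  by_cases h0 : v 0 = 0
  · by_cases h123 : v 2 ≠ 0 ∨ v 1 ≠ 0 ∨ v 3 ≠ 0
    · obtain ⟨R, hR2, hR⟩ := roots_quad _ _ _ h123
      have hroot : ∀ t, res (LA ε θ t) (sph v) = 0 → ι t.1 ∈ R := by
        intro t ht
        apply hR
        have := (key t ht).1
        rw [h0] at this
        linear_combination this
      by_cases h2 : v 2 = 0
      · -- v 1 must be nonzero, or there are no lines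
        have hle : ((S ×ˢ D ×ˢ D).filter fun t => res (LA ε θ t) (sph v) = 0).card ≤ (R ×ˢ D).card := by
          refine Finset.card_le_card_of_injOn (fun t => (ι t.1, t.2.2)) ?_ ?_
          · intro t ht
            obtain ⟨h1, h3⟩ := Finset.mem_filter.1 ht
            simp only [Finset.mem_product] at h1
            exact Finset.mem_coe.2 (Finset.mem_product.2 ⟨hroot t h3, h1.2.2⟩)
          · rintro ⟨a, d, d'⟩ ht ⟨b, e, e'⟩ ht' heq
            obtain ⟨h1, h3⟩ := Finset.mem_filter.1 ht
            obtain ⟨h1', h3'⟩ := Finset.mem_filter.1 ht'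
            simp only [Finset.mem_product] at h1
            simp only [Prod.mk.injEq] at heq
            have hab : a = b := inj_alg heq.1
            subst hab
            have hd' := heq.2
            subst hd'
            have ha := alg_ne (K := K) (hS a h1.1)
            have k1 := key _ h3
            have k2 := key _ h3'
            simp only [h0, h2] at k1 k2
            have hv1 : v 1 ≠ 0 := by
              intro h10
              have h33 : v 3 = 0 := by
                have := k1.1
                rw [h10] at this
                linear_combination this
              rcases h123 with h | h | h
              · exact h h2
              · exact h h10
              · exact h h33
            have : d = e := by
              apply inj_alg (K := K)
              apply mul_left_cancel₀ (mul_ne_zero hv1 ha)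
              linear_combination k2.2 - k1.2
            rw [this]
        rw [Finset.card_product] at hle
        nlinarith
      · have hle : ((S ×ˢ D ×ˢ D).filter fun t => res (LA ε θ t) (sph v) = 0).card ≤ (R ×ˢ D).card := by
          refine Finset.card_le_card_of_injOn (fun t => (ι t.1, t.2.1)) ?_ ?_
          · intro t ht
            obtain ⟨h1, h3⟩ := Finset.mem_filter.1 ht
            simp only [Finset.mem_product] at h1
            exact Finset.mem_coe.2 (Finset.mem_product.2 ⟨hroot t h3, h1.2.1⟩)
          · rintro ⟨a, d, d'⟩ ht ⟨b, e, e'⟩ ht' heq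
            obtain ⟨h1, h3⟩ := Finset.mem_filter.1 ht
            obtain ⟨h1', h3'⟩ := Finset.mem_filter.1 ht'
            simp only [Prod.mk.injEq] at heq
            have hab : a = b := inj_alg heq.1
            subst hab
            have hd' := heq.2
            subst hd'
            have k1 := key _ h3
            have k2 := key _ h3'
            simp only [h0] at k1 k2
            have : d' = e' := by
              apply inj_alg (K := K)
              apply mul_left_cancel₀ (mul_ne_zero h2 he)
              linear_combination k1.2 - k2.2
            rw [this]
        rw [Finset.card_product] at hle
        nlinarith
    · push Not at h123
      obtain ⟨z2, z1, z3⟩ := h123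
      have : ((S ×ˢ D ×ˢ D).filter fun t => res (LA ε θ t) (sph v) = 0) = ∅ := by
        apply Finset.filter_false_of_mem
        intro t _ ht
        have k := (key t ht).2
        rw [h0, z1, z2] at k
        apply hv
        funext i
        fin_cases i
        · exact h0
        · exact z1
        · exact z2
        · exact z3
        · simp; linear_combination k
      rw [this]; simp
  · obtain ⟨R, hR2, hR⟩ := roots_quad (1 : K) (v 1) (v 2 * v 3 - v 0 * v 4) (Or.inl one_ne_zero)
    have hle : ((S ×ˢ D ×ˢ D).filter fun t => res (LA ε θ t) (sph v) = 0).card ≤ (S ×ˢ R).card := by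
      refine Finset.card_le_card_of_injOn (fun t => (t.1, ι t.1 * (v 0 * ι t.2.1 + v 2))) ?_ ?_
      · intro t ht
        obtain ⟨h1, h3⟩ := Finset.mem_filter.1 ht
        simp only [Finset.mem_product] at h1
        refine Finset.mem_coe.2 (Finset.mem_product.2 ⟨h1.1, hR _ ?_⟩)
        have k := key t h3
        linear_combination v 2 * k.1 - v 0 * k.2
      · rintro ⟨a, d, d'⟩ ht ⟨b, e, e'⟩ ht' heq
        obtain ⟨h1, h3⟩ := Finset.mem_filter.1 ht
        obtain ⟨h1', h3'⟩ := Finset.mem_filter.1 ht'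
        simp only [Finset.mem_product] at h1
        simp only [Prod.mk.injEq] at heq
        have hab := heq.1
        subst hab
        have ha := alg_ne (K := K) (hS a h1.1)
        have hde : d = e := by
          apply inj_alg (K := K)
          apply mul_left_cancel₀ (mul_ne_zero ha h0)
          linear_combination heq.2
        subst hde
        have k1 := key _ h3
        have k2 := key _ h3'
        have : d' = e' := by
          apply inj_alg (K := K)
          apply mul_left_cancel₀ (mul_ne_zero h0 he)
          linear_combination k1.1 - k2.1
        rw [this]
    rw [Finset.card_product] at hle
    nlinarith

end
end GE

namespace GE
open scoped Classical
section

lemma chunk {ι : Type*} (h : ι → ℝ) (M : ℕ) (hM : 1 ≤ M) (W : ℝ) (hW : 0 ≤ W) (n : ℕ) :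
    ∀ A : Finset ι, A.card = n → (∀ A' ⊆ A, A'.card ≤ M → ∑ a ∈ A', h a ≤ W) →
      ∑ a ∈ A, h a ≤ ((A.card : ℝ) / M + 1) * W := by
  induction n using Nat.strong_induction_on with
  | _ n ih =>
    intro A hA hc
    have hM0 : (0 : ℝ) < M := by exact_mod_cast hM
    by_cases hle : A.card ≤ M
    · refine (hc A subset_rfl hle).trans ?_
      have : 0 ≤ (A.card : ℝ) / M := by positivity
      nlinarith
    · push Not at hle
      obtain ⟨A', hA', hcard⟩ := Finset.exists_subset_card_eq hle.le
      have hs : (A \ A').card = A.card - M := by rw [Finset.card_sdiff_of_subset hA', hcard]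
      have h1 := ih (A \ A').card (by omega) (A \ A') rfl
        (fun B hB hBc => hc B (hB.trans Finset.sdiff_subset) hBc)
      have h2 := hc A' hA' hcard.le
      rw [← Finset.sum_sdiff hA']
      have h3 : ((A \ A').card : ℝ) = A.card - M := by rw [hs, Nat.cast_sub hle.le]
      rw [h3, sub_div, div_self hM0.ne'] at h1
      nlinarith

lemma chunk2 {K : Type*} [Field K] (A B : Finset (K × K × K)) (M : ℕ) (hM : 1 ≤ M) (W : ℝ) (hW : 0 ≤ W)
    (h : ∀ A' ⊆ A, ∀ B' ⊆ B, A'.card ≤ M → B'.card ≤ M → (II A' B' : ℝ) ≤ W) :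
    (II A B : ℝ) ≤ ((A.card : ℝ) / M + 1) * (((B.card : ℝ) / M + 1) * W) := by
  have e : ∀ X Y : Finset (K × K × K), (II X Y : ℝ) = ∑ a ∈ X, (dg a Y : ℝ) := fun X Y => by
    simp [II]
  rw [e]
  refine chunk _ M hM _ (by positivity) _ A rfl fun A' hA' hc => ?_
  rw [← e, II_comm, e]
  refine chunk _ M hM _ hW _ B rfl fun B' hB' hc' => ?_
  rw [← e, II_comm]
  exact h A' hA' B' hB' hc hc'

lemma energy_le (p : ℕ) [Fact p.Prime] (S D : Finset (ZMod p)) (hS : ∀ c ∈ S, c ≠ 0) :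
    affEnergy p (S ×ˢ D) ≤ S.card * (((S ×ˢ D ×ˢ D) ×ˢ (S ×ˢ D ×ˢ D)).filter fun q =>
      q.1.1 * (q.2.2.1 - q.1.2.1) = q.2.1 * (q.2.2.2 - q.1.2.2)).card := by
  rw [← Finset.card_product, ← Set.ncard_coe_finset, affEnergy]
  refine Set.ncard_le_ncard_of_injOn
    (fun q => (q.2.2.2.1, ((q.2.2.1.1, q.1.2, q.2.2.1.2), (q.1.1, q.2.1.2, q.2.2.2.2)))) ?_ ?_
    (Finset.finite_toSet _)
  · rintro ⟨⟨c1, d1⟩, ⟨c2, d2⟩, ⟨c3, d3⟩, ⟨c4, d4⟩⟩ ⟨h1, h2, h3, h4, h⟩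
    simp only [Finset.mem_product, acomp, ainv, Prod.mk.injEq] at h1 h2 h3 h4 h
    have e1 := hS _ h1.1
    have e3 := hS _ h3.1
    simp only [Finset.coe_product, Set.mem_prod, Finset.mem_coe, Finset.mem_filter, Finset.mem_product]
    refine ⟨h4.1, ⟨⟨h3.1, h1.2, h3.2⟩, h1.1, h2.2, h4.2⟩, ?_⟩
    have := h.2
    field_simp at this
    linear_combination this
  · rintro ⟨⟨c1, d1⟩, ⟨c2, d2⟩, ⟨c3, d3⟩, ⟨c4, d4⟩⟩ ⟨h1, h2, h3, h4, h⟩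
      ⟨⟨b1, f1⟩, ⟨b2, f2⟩, ⟨b3, f3⟩, ⟨b4, f4⟩⟩ ⟨g1, g2, g3, g4, g⟩ heq
    simp only [Finset.mem_product, acomp, ainv, Prod.mk.injEq] at h1 h2 h3 h4 h g heq
    obtain ⟨rfl, ⟨rfl, rfl, rfl⟩, rfl, rfl, rfl⟩ := heq
    have e1 := hS _ h1.1
    have : c2 = b2 := by
      apply mul_left_cancel₀ (inv_ne_zero e1)
      rw [h.1, g.1]
    rw [this]

lemma T_bound (p : ℕ) [Fact p.Prime] (S D : Finset (ZMod p)) (hS : ∀ c ∈ S, c ≠ 0) (hSne : S.Nonempty)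
    (hSD : S.card ≤ D.card ^ 2) (N : ℕ) (hN : N = S.card * D.card ^ 2) :
    ((((S ×ˢ D ×ˢ D) ×ˢ (S ×ˢ D ×ˢ D)).filter fun q =>
      q.1.1 * (q.2.2.1 - q.1.2.1) = q.2.1 * (q.2.2.2 - q.1.2.2)).card : ℝ) ≤
      320000 * ((N : ℝ) ^ 2 / p + N * √N) := by
  obtain ⟨ε, θ, hε, hθ⟩ := exists_avoid (AlgebraicClosure (ZMod p)) p
  have : CharP (AlgebraicClosure (ZMod p)) p := inferInstance
  have hinf : Infinite (AlgebraicClosure (ZMod p)) := inferInstance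
  have hp2 : 2 ≤ p := (Fact.out : p.Prime).two_le
  set Tr := S ×ˢ D ×ˢ D with hTr
  have hT0 : ∀ t ∈ Tr, t.1 ≠ 0 := fun t ht => hS _ (Finset.mem_product.1 ht).1
  set A := Tr.image (LA ε θ) with hA
  set B := Tr.image (LB ε θ) with hB
  have hTrc : Tr.card = N := by
    rw [hTr, Finset.card_product, Finset.card_product, hN, sq]
  have hAinj : Set.InjOn (LA ε θ) (Tr : Set (ZMod p × ZMod p × ZMod p)) := by
    intro t ht t' _ h
    exact LA_skew hε hθ t t' (hT0 t ht) 0 (by rw [h])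
  have hBinj : Set.InjOn (LB ε θ) (Tr : Set (ZMod p × ZMod p × ZMod p)) := by
    intro t ht t' ht' h
    exact LB_skew hε hθ t t' (hT0 t ht) (hT0 t' ht') 0 (by rw [h])
  have hAc : A.card = N := by rw [hA, Finset.card_image_of_injOn hAinj, hTrc]
  have hBc : B.card = N := by rw [hB, Finset.card_image_of_injOn hBinj, hTrc]
  have hAs : skew A := by
    intro l hl l' hl' s h
    obtain ⟨t, ht, rfl⟩ := Finset.mem_image.1 hl
    obtain ⟨t', ht', rfl⟩ := Finset.mem_image.1 hl'
    rw [LA_skew hε hθ t t' (hT0 t ht) s h]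
  have hBs : skew B := by
    intro l hl l' hl' s h
    obtain ⟨t, ht, rfl⟩ := Finset.mem_image.1 hl
    obtain ⟨t', ht', rfl⟩ := Finset.mem_image.1 hl'
    rw [LB_skew hε hθ t t' (hT0 t ht) (hT0 t' ht') s h]
  have hsl : ∀ a ∈ A, ∀ b ∈ B, a.1 ≠ b.1 := by
    intro l hl l' hl'
    obtain ⟨t, ht, rfl⟩ := Finset.mem_image.1 hl
    obtain ⟨t', ht', rfl⟩ := Finset.mem_image.1 hl'
    exact slopes hε t t' (hT0 t' ht')
  set k := 2 * S.card + 2 * D.card with hk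
  have hsph : ∀ v : Fin 5 → AlgebraicClosure (ZMod p), v ≠ 0 →
      (A.filter fun l => res l (sph v) = 0).card ≤ k := by
    intro v hv
    refine le_trans ?_ (sphere_count (θ := θ) hε S D hS v hv)
    rw [hA, Finset.filter_image]
    exact Finset.card_image_le
  have hinc : ∀ A' ⊆ A, ∀ B' ⊆ B, A'.card + B'.card ≤ p ^ 2 →
      (II A' B' : ℝ) ≤ 9600 * (((A'.card + B'.card : ℕ) : ℝ) * √((A'.card + B'.card : ℕ) : ℝ)) +
        k * ((A'.card + B'.card : ℕ) : ℝ) := by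
    intro A' hA' B' hB' hle
    exact incidence p k _ A' B' (skew_mono hA' hAs) (skew_mono hB' hBs)
      (fun a ha b hb => hsl a (hA' ha) b (hB' hb)) rfl hle
      (fun v hv => (Finset.card_le_card (Finset.filter_subset_filter _ hA')).trans (hsph v hv))
  have hTI : ((Tr ×ˢ Tr).filter fun q =>
      q.1.1 * (q.2.2.1 - q.1.2.1) = q.2.1 * (q.2.2.2 - q.1.2.2)).card ≤ II A B := by
    have e1 : II A B = ∑ t ∈ Tr, ∑ t' ∈ Tr, gm (LA ε θ t) (LB ε θ t') := by
      rw [II, hA, Finset.sum_image hAinj]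
      refine Finset.sum_congr rfl fun t _ => ?_
      rw [dg, hB, Finset.sum_image hBinj]
    rw [e1, ← Finset.sum_product', Finset.card_filter]
    refine Finset.sum_le_sum fun q hq => ?_
    split_ifs with hh
    · rw [gm, if_pos (AB_meet hε q.1 q.2 (hT0 _ (Finset.mem_product.1 hq).2) hh)]
    · exact Nat.zero_le _
  have hTI' : ((((Tr ×ˢ Tr).filter fun q =>
      q.1.1 * (q.2.2.1 - q.1.2.1) = q.2.1 * (q.2.2.2 - q.1.2.2)).card : ℕ) : ℝ) ≤ II A B := by
    exact_mod_cast hTI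
  refine hTI'.trans ?_
  have hp0 : (2 : ℝ) ≤ p := by exact_mod_cast hp2
  have hNs : (0 : ℝ) ≤ √N := Real.sqrt_nonneg _
  have hN0 : (0 : ℝ) ≤ N := Nat.cast_nonneg _
  have hNN : √(N : ℝ) * √N = N := Real.mul_self_sqrt hN0
  by_cases hc : N ≤ p ^ 2 / 2
  · have h := hinc A subset_rfl B subset_rfl (by rw [hAc, hBc]; omega)
    rw [hAc, hBc] at h
    have hkk : (k : ℝ) ≤ 4 * √N := by
      have hS1 : (S.card : ℝ) ≤ √N := by
        apply Real.le_sqrt_of_sq_le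
        have : S.card ^ 2 ≤ N := by rw [hN, sq]; exact Nat.mul_le_mul_left _ hSD
        exact_mod_cast this
      have hD1 : (D.card : ℝ) ≤ √N := by
        have h0 := hSne.card_pos
        apply Real.le_sqrt_of_sq_le
        have : D.card ^ 2 ≤ N := by rw [hN]; exact Nat.le_mul_of_pos_left _ h0
        exact_mod_cast this
      rw [hk]; push_cast; linarith
    have hs2 : √((N + N : ℕ) : ℝ) ≤ 2 * √N := by
      apply Real.sqrt_le_iff.2
      refine ⟨by positivity, ?_⟩
      push_cast
      nlinarith
    have hq : (0 : ℝ) ≤ (N : ℝ) ^ 2 / p := by positivity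
    have e2 : ((N + N : ℕ) : ℝ) = 2 * N := by push_cast; ring
    have e3 : ((N + N : ℕ) : ℝ) * √((N + N : ℕ) : ℝ) ≤ 2 * N * (2 * √N) := by
      rw [← e2]; exact mul_le_mul_of_nonneg_left hs2 (Nat.cast_nonneg _)
    have e4 : (k : ℝ) * ((N + N : ℕ) : ℝ) ≤ 4 * √N * (2 * N) := by
      rw [e2]; exact mul_le_mul_of_nonneg_right hkk (by positivity)
    have e5 : 0 ≤ N * √N := by positivity
    nlinarith
  · push Not at hc
    set M := p ^ 2 / 2 with hM
    have hpp : 4 ≤ p ^ 2 := by nlinarith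
    have hM1 : 1 ≤ M := by omega
    have h4M : p ^ 2 ≤ 4 * M := by omega
    have h4M' : (p : ℝ) ^ 2 ≤ 4 * M := by exact_mod_cast h4M
    have hM0 : (0 : ℝ) < M := by exact_mod_cast hM1
    have hcS : S.card ≤ p := by simpa [ZMod.card] using Finset.card_le_univ S
    have hcD : D.card ≤ p := by simpa [ZMod.card] using Finset.card_le_univ D
    have hkp : (k : ℝ) ≤ 4 * p := by
      have : k ≤ 4 * p := by omega
      exact_mod_cast this
    have h := chunk2 A B M hM1 (20000 * M * p) (by positivity) (by
      intro A' hA' B' hB' h1 h2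
      have hle : A'.card + B'.card ≤ p ^ 2 := by omega
      refine (hinc A' hA' B' hB' hle).trans ?_
      have hn : ((A'.card + B'.card : ℕ) : ℝ) ≤ 2 * M := by
        have : A'.card + B'.card ≤ 2 * M := by omega
        exact_mod_cast this
      have hn' : ((A'.card + B'.card : ℕ) : ℝ) ≤ (p : ℝ) ^ 2 := by exact_mod_cast hle
      have hs : √((A'.card + B'.card : ℕ) : ℝ) ≤ p :=
        Real.sqrt_le_iff.2 ⟨by positivity, hn'⟩
      generalize ((A'.card + B'.card : ℕ) : ℝ) = n at *
      have e1 : n * √n ≤ 2 * M * p := mul_le_mul hn hs (Real.sqrt_nonneg _) (by positivity)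
      have e2 : k * n ≤ 4 * p * (2 * M) := by
        rcases le_or_gt 0 n with h0 | h0
        · exact mul_le_mul hkp hn h0 (by positivity)
        · have : (k : ℝ) * n ≤ 0 := mul_nonpos_of_nonneg_of_nonpos (Nat.cast_nonneg _) h0.le
          exact this.trans (by positivity)
      have : (0 : ℝ) ≤ M * p := by positivity
      nlinarith)
    rw [hAc, hBc] at h
    refine h.trans ?_
    have hNM : (M : ℝ) ≤ N := by exact_mod_cast hc.le
    have e1 : (N : ℝ) / M + 1 ≤ 2 * (N / M) := by
      have : 1 ≤ (N : ℝ) / M := (one_le_div hM0).2 hNM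
      linarith
    have e0 : 0 ≤ (N : ℝ) / M + 1 := by positivity
    calc ((N : ℝ) / M + 1) * (((N : ℝ) / M + 1) * (20000 * M * p))
        = ((N : ℝ) / M + 1) * ((N : ℝ) / M + 1) * (20000 * M * p) := by ring
      _ ≤ (2 * (N / M)) * (2 * (N / M)) * (20000 * M * p) := by gcongr
      _ = 80000 * N ^ 2 * (p / M) := by field_simp; ring
      _ ≤ 80000 * N ^ 2 * (4 / p) := by
          refine mul_le_mul_of_nonneg_left ?_ (by positivity)
          rw [div_le_div_iff₀ hM0 (by linarith)]
          nlinarith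
      _ = 320000 * (N ^ 2 / p) := by ring
      _ ≤ _ := by
          have : 0 ≤ N * √N := by positivity
          linarith

end
end GE

/-- **Lemma 3.8** (energy of a grid of affine transformations over F_p): there is an
absolute constant `C₁` such that for every prime `p`, all finite nonempty `C ⊆ F_p\{0}`
and `D ⊆ F_p` with `|C| ≤ |D|²`, the grid `L = C×D ⊆ Aff(F_p)` satisfies
`E(L) ≤ C₁·(|C|³|D|⁴/p + |C|^{5/2}|D|³)`. -/
theorem grid_energy_Fp :
    ∃ C₁ : ℝ, 0 < C₁ ∧
      ∀ (p : ℕ) [Fact p.Prime],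
        ∀ S D : Finset (ZMod p), S.Nonempty → D.Nonempty →
          (∀ c ∈ S, c ≠ 0) → S.card ≤ D.card ^ 2 →
          (affEnergy p (S ×ˢ D) : ℝ) ≤
            C₁ * ((S.card : ℝ) ^ 3 * (D.card : ℝ) ^ 4 / (p : ℝ) +
              (S.card : ℝ) ^ ((5 : ℝ) / 2) * (D.card : ℝ) ^ 3) := by
  refine ⟨320000, by norm_num, ?_⟩
  intro p _ S D hSne hDne hS hSD
  have h1 := GE.energy_le p S D hS
  have h2 := GE.T_bound p S D hS hSne hSD _ rfl
  have h1' := (Nat.cast_le (α := ℝ)).2 h1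
  rw [Nat.cast_mul] at h1'
  refine h1'.trans ((mul_le_mul_of_nonneg_left h2 (Nat.cast_nonneg _)).trans (le_of_eq ?_))
  have hs0 : (0 : ℝ) ≤ S.card := Nat.cast_nonneg _
  have hd0 : (0 : ℝ) ≤ D.card := Nat.cast_nonneg _
  have hs1 : (0 : ℝ) < S.card := by exact_mod_cast hSne.card_pos
  have e : (S.card : ℝ) ^ ((5 : ℝ) / 2) = (S.card : ℝ) ^ 2 * √(S.card : ℝ) := by
    rw [show (5 : ℝ) / 2 = 2 + 1 / 2 by norm_num, Real.rpow_add hs1, Real.sqrt_eq_rpow]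
    norm_num
  rw [e]
  push_cast
  rw [Real.sqrt_mul hs0, Real.sqrt_sq hd0]
  ring
end
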